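/- Let 0 < p ≤ 1 and δ > n/p − (n+1)/2, and suppose that δ − (n−1)/2 is not a positive integer. Then there exists a constant C > 0, independent of f and of R, such that for every 0 < R < ∞ and every f in the (unweighted) weak Hardy space WH^p(R^n) one has ‖T^δ_R f‖_{WH^p} ≤ C ‖f‖_{WH^p}. -/

import Mathlib

/-!
Write `K_δ` for the Bochner–Riesz kernel and `a = (n+1)/2 + δ` (`brExp`), so that the hypothesis on
`δ` says `a > n/p`. The proof bounds the grand maximal function of `T f` pointwise by an
`L^q`-maximal function of that of `f`, for some `q < p`, and then uses the Hardy–Littlewood theorem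
on weak Lebesgue spaces; no atomic decomposition is involved. By dilation (`brOp_eq_comp_smul`,
`whNorm_comp_smul`) it suffices to treat `R = 1`, and dimension zero is trivial (`brOp_dim_zero`).

*The kernel.* The relations `∇K_δ = -(2π²/(δ+1)) K_{δ+1} x` and
`x · ∇K_{δ+1} = 2(δ+1)(K_δ - K_{δ+1}) - n K_{δ+1}` show that along a ray the pair
`(r^a K_δ, (π/(δ+1)) r^{a+1} K_{δ+1})` solves a rotation system perturbed by terms of size `a/r`
(`OscSystem`). A corrected energy is almost conserved, so the pair is bounded above and below. This
replaces Bessel asymptotics: it gives `|D^α K_δ(x)| ≤ C (1+|x|)^{-a}` for every `α`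
(`brKernel_deriv_decay`) and an amplitude that does not degenerate (`brKernel_profile`).

*Convergence.* `f` is an arbitrary function, and `T f (x)` is `0` by convention wherever the defining
integral diverges. By the lower bound on the amplitude, convergence at two generic points `x, x'`
controls `f` against the full weight `(1+|y|)^{-a}`, since `K(x-·)` and `K(x'-·)` are not small
together. Hence either the integral diverges almost everywhere, and `T f = 0` almost everywhere, or
`(1+|y|)^{-a} f` is integrable (`integrable_dichotomy`) and Fubini's theorem rewrites `ψ_t * (K * f)`
as `(ψ_t * K) * f` (`conv_brOp`).

*The pointwise bound.* Let `b = min (a, N+n+1)`, which exceeds `n/p`. For a test function `ψ`, the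
function `ψ_t * K` is a dilate `η_m` of a function whose derivatives up to order `N+1` are bounded
by `A (1+|u|)^{-b}`, uniformly in `ψ` and `t` (`exists_smoothed_kernel`). Localizing `η` around `u`
with a bump and recentring at any `u'` with `|u'-u| ≤ 1` gives a test function of size
`(1+|u|)^{-b}`, so that its contribution is at most `C (1+|u|)^{-b} G⁺f (x - m u')`
(`exists_piece_bound`). Integrating over `u`, with `n/b < q < p`, yields
`G⁺(T f) ≤ C (M((G⁺f)^q))^{1/q}` (`exists_lintegral_pieces_le`, `exists_grandMax_brOp_le`). The
maximal operator `M` is bounded on weak `L^{p/q}` because `p/q > 1`, by Vitali's covering lemma and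
truncation (`exists_weakNorm_le_of_ballMax`).
-/

open MeasureTheory Real Complex Set
open scoped ENNReal NNReal FourierTransform

noncomputable section

/-- Euclidean space `ℝⁿ`. -/
abbrev Euc (n : ℕ) := EuclideanSpace ℝ (Fin n)

/-- The axis-parallel closed cube centered at `x₀` with side length `r`. -/
def cube {n : ℕ} (x₀ : Euc n) (r : ℝ) : Set (Euc n) :=
  {y | ∀ i, |y i - x₀ i| ≤ r / 2}

/-- The weighted measure `w(E) = ∫_E w(x) dx`. -/
def wMeasure {n : ℕ} (w : Euc n → ℝ) : Measure (Euc n) :=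
  (volume : Measure (Euc n)).withDensity fun x => ENNReal.ofReal (w x)

/-- The Muckenhoupt class `A₁`: `w` is nonnegative, locally integrable, and the average of `w`
over any cube is dominated by a constant times the essential infimum of `w` over that cube. -/
def IsA1 {n : ℕ} (w : Euc n → ℝ) : Prop :=
  (∀ x, 0 ≤ w x) ∧ LocallyIntegrable w volume ∧
    ∃ C : ℝ, 0 < C ∧ ∀ (x₀ : Euc n) (r : ℝ), 0 < r →
      (∫ x in cube x₀ r, w x) / r ^ n ≤ C * essInf w (volume.restrict (cube x₀ r))

/-- The Muckenhoupt class `A_q`, `1 < q < ∞`. -/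
def IsAq {n : ℕ} (w : Euc n → ℝ) (q : ℝ) : Prop :=
  (∀ x, 0 ≤ w x) ∧ LocallyIntegrable w volume ∧
    ∃ C : ℝ, 0 < C ∧ ∀ (x₀ : Euc n) (r : ℝ), 0 < r →
      ((∫ x in cube x₀ r, w x) / r ^ n) *
        ((∫ x in cube x₀ r, w x ^ (-1 / (q - 1))) / r ^ n) ^ (q - 1) ≤ C

/-- The critical index `q_w = inf {q > 1 : w ∈ A_q}` of a weight `w`. -/
def criticalIndex {n : ℕ} (w : Euc n → ℝ) : ℝ :=
  sInf {q : ℝ | 1 < q ∧ IsAq w q}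

/-- The `L¹`-dilation `g_t(x) = t⁻ⁿ g(x / t)`. -/
def dil {n : ℕ} (g : Euc n → ℂ) (t : ℝ) (x : Euc n) : ℂ :=
  ((t ^ n)⁻¹ : ℝ) • g ((t⁻¹ : ℝ) • x)

/-- The Bochner-Riesz kernel `φ` of order `δ`, i.e. the inverse Fourier transform of
`ξ ↦ (1 - |ξ|²)₊^δ`. -/
def brKernel (n : ℕ) (δ : ℝ) : Euc n → ℂ :=
  𝓕⁻ fun ξ : Euc n => (Complex.ofReal (((1 - ‖ξ‖ ^ 2) ⊔ 0) ^ δ))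

/-- The Bochner-Riesz operator `T^δ_R f = φ_{1/R} * f` of order `δ`. -/
def brOp (n : ℕ) (δ R : ℝ) (f : Euc n → ℂ) (x : Euc n) : ℂ :=
  ∫ y, dil (brKernel n δ) R⁻¹ (x - y) * f y

/-- The maximal Bochner-Riesz operator `T^δ_* f(x) = sup_{R > 0} |T^δ_R f(x)|`. -/
def maxBR (n : ℕ) (δ : ℝ) (f : Euc n → ℂ) (x : Euc n) : ℝ≥0∞ :=
  ⨆ (R : ℝ) (_ : 0 < R), (‖brOp n δ R f x‖₊ : ℝ≥0∞)

/-- Partial derivative in the `i`-th coordinate direction. -/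
def pderiv' {n : ℕ} (i : Fin n) (f : Euc n → ℂ) : Euc n → ℂ :=
  fun x => fderiv ℝ f x (EuclideanSpace.single i 1)

/-- The multi-index partial derivative `D^α f`. -/
def mderiv {n : ℕ} (α : Fin n → ℕ) (f : Euc n → ℂ) : Euc n → ℂ :=
  (((List.finRange n).map fun i => (pderiv' i)^[α i]).foldr (· ∘ ·) id) f

/-- The test function class
`𝒜_N = {φ ∈ 𝒮 : sup_x sup_{|α| ≤ N+1} (1+|x|)^{N+n+1} |D^α φ(x)| ≤ 1}`. -/
def inTestClass {n : ℕ} (N : ℕ) (φ : SchwartzMap (Euc n) ℂ) : Prop :=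
  ∀ (x : Euc n) (α : Fin n → ℕ), (∑ i, α i) ≤ N + 1 →
    (1 + ‖x‖) ^ (N + n + 1) * ‖mderiv α (⇑φ) x‖ ≤ 1

/-- The radial grand maximal function
`G⁺ f(x) = sup_{φ ∈ 𝒜_N} sup_{t > 0} |(φ_t * f)(x)|`. -/
def grandMax {n : ℕ} (N : ℕ) (f : Euc n → ℂ) (x : Euc n) : ℝ≥0∞ :=
  ⨆ (φ : SchwartzMap (Euc n) ℂ) (_ : inTestClass N φ) (t : ℝ) (_ : 0 < t),
    (‖∫ y, dil (⇑φ) t (x - y) * f y‖₊ : ℝ≥0∞)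

/-- The weak `L^p` quasinorm `sup_{λ > 0} λ · μ({x : g(x) > λ})^{1/p}` of an
`ℝ≥0∞`-valued function with respect to the measure `μ`. -/
def weakNorm {n : ℕ} (μ : Measure (Euc n)) (p : ℝ) (g : Euc n → ℝ≥0∞) : ℝ≥0∞ :=
  ⨆ (lam : ℝ≥0) (_ : 0 < lam), (lam : ℝ≥0∞) * μ {x | (lam : ℝ≥0∞) < g x} ^ (1 / p)

/-- The weak Hardy space quasinorm `‖f‖_{WH^p_w} = ‖G⁺ f‖_{WL^p_w}`, with grand maximal
function taken over the test class `𝒜_N`. -/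
def whNorm {n : ℕ} (N : ℕ) (μ : Measure (Euc n)) (p : ℝ) (f : Euc n → ℂ) : ℝ≥0∞ :=
  weakNorm μ p (grandMax N f)

/-- The Hardy-Littlewood maximal function (over cubes containing `x`). -/
def hlMax {n : ℕ} (f : Euc n → ℂ) (x : Euc n) : ℝ≥0∞ :=
  ⨆ (x₀ : Euc n) (r : ℝ) (_ : 0 < r) (_ : x ∈ cube x₀ r),
    (volume (cube x₀ r))⁻¹ * ∫⁻ y in cube x₀ r, (‖f y‖₊ : ℝ≥0∞)

/-! ### The Bochner–Riesz multiplier -/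

/-- The Bochner–Riesz multiplier `(1 - |ξ|²)₊^δ`. -/
def brMult (n : ℕ) (δ : ℝ) (ξ : Euc n) : ℂ :=
  Complex.ofReal (((1 - ‖ξ‖ ^ 2) ⊔ 0) ^ δ)

lemma brKernel_eq_fourier (n : ℕ) (δ : ℝ) : brKernel n δ = 𝓕 (brMult n δ) := by
  funext x
  have h := Real.fourierInv_comp_linearIsometry (LinearIsometryEquiv.neg ℝ (E := Euc n))
    (brMult n δ) x
  have h2 : (brMult n δ) ∘ (LinearIsometryEquiv.neg ℝ (E := Euc n)) = brMult n δ := by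
    funext y; simp [brMult]
  rw [h2] at h
  change 𝓕⁻ (brMult n δ) x = _
  rw [h, Real.fourierInv_eq_fourier_neg]
  simp

lemma brMult_continuous (n : ℕ) {δ : ℝ} (hδ : 0 < δ) : Continuous (brMult n δ) := by
  unfold brMult
  refine Complex.continuous_ofReal.comp ?_
  exact Continuous.rpow_const (by fun_prop) (fun x => Or.inr hδ.le)

lemma brMult_eq_zero (n : ℕ) {δ : ℝ} (hδ : 0 < δ) {ξ : Euc n} (h : 1 ≤ ‖ξ‖) :
    brMult n δ ξ = 0 := by
  unfold brMult
  have : (1 - ‖ξ‖ ^ 2) ⊔ 0 = 0 := by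
    apply max_eq_right; nlinarith
  rw [this, Real.zero_rpow hδ.ne']; simp

lemma brMult_hasCompactSupport (n : ℕ) {δ : ℝ} (hδ : 0 < δ) :
    HasCompactSupport (brMult n δ) := by
  apply HasCompactSupport.intro (isCompact_closedBall (0 : Euc n) 1)
  intro x hx
  apply brMult_eq_zero n hδ
  simp at hx; linarith

lemma brMult_integrable (n : ℕ) {δ : ℝ} (hδ : 0 < δ) : Integrable (brMult n δ) :=
  (brMult_continuous n hδ).integrable_of_hasCompactSupport (brMult_hasCompactSupport n hδ)

lemma norm_brKernel_le (n : ℕ) (δ : ℝ) (x : Euc n) :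
    ‖brKernel n δ x‖ ≤ ∫ ξ, ‖brMult n δ ξ‖ := by
  rw [brKernel_eq_fourier]
  exact VectorFourier.norm_fourierIntegral_le_integral_norm _ _ _ _ _

/-- The one-variable power `s₊^p` with `p > 1` is differentiable everywhere. -/
lemma hasDerivAt_posPart_rpow {p : ℝ} (hp : 1 < p) (s : ℝ) :
    HasDerivAt (fun s : ℝ => (s ⊔ 0) ^ p) (p * (s ⊔ 0) ^ (p - 1)) s := by
  rcases lt_trichotomy s 0 with h | h | h
  · have : (fun s : ℝ => (s ⊔ 0) ^ p) =ᶠ[nhds s] fun _ => 0 := by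
      filter_upwards [Iio_mem_nhds h] with t ht
      rw [max_eq_right (le_of_lt ht), Real.zero_rpow (by linarith)]
    rw [max_eq_right h.le, Real.zero_rpow (by linarith), mul_zero]
    exact (hasDerivAt_const s 0).congr_of_eventuallyEq this
  · subst h
    rw [max_self, Real.zero_rpow (by linarith), mul_zero, hasDerivAt_iff_isLittleO_nhds_zero]
    simp only [zero_add, max_self, Real.zero_rpow (by linarith : p ≠ 0), sub_zero, smul_zero]
    have h1 : (fun h : ℝ => (h ⊔ 0) ^ p) =O[nhds 0] fun h : ℝ => |h| ^ p := by
      refine Asymptotics.isBigO_of_le _ fun h => ?_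
      rw [Real.norm_of_nonneg (by positivity), Real.norm_of_nonneg (by positivity)]
      exact Real.rpow_le_rpow (by positivity) (max_le (le_abs_self h) (abs_nonneg h)) (by linarith)
    refine h1.trans_isLittleO ?_
    rw [Asymptotics.isLittleO_iff_tendsto']
    · have : Filter.Tendsto (fun h : ℝ => |h| ^ (p-1)) (nhds 0) (nhds 0) := by
        have hc : Continuous fun h : ℝ => |h| ^ (p-1) :=
          Continuous.rpow_const (by fun_prop) (fun x => Or.inr (by linarith))
        have := hc.tendsto 0
        simpa [Real.zero_rpow (by linarith : p - 1 ≠ 0)] using this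
      refine squeeze_zero_norm' ?_ this
      filter_upwards with h
      rw [norm_div, Real.norm_of_nonneg (by positivity), Real.norm_eq_abs]
      by_cases hh : h = 0
      · subst hh; simp [Real.zero_rpow (by linarith : p ≠ 0)]
        positivity
      · rw [Real.rpow_sub_one (abs_ne_zero.mpr hh)]
    · filter_upwards with h hh
      subst hh; simp [Real.zero_rpow (by linarith : p ≠ 0)]
  · have : (fun s : ℝ => (s ⊔ 0) ^ p) =ᶠ[nhds s] fun s => s ^ p := by
      filter_upwards [Ioi_mem_nhds h] with t ht
      rw [max_eq_left (le_of_lt ht)]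
    rw [max_eq_left h.le]
    exact (Real.hasDerivAt_rpow_const (Or.inr hp.le)).congr_of_eventuallyEq this

lemma brMult_hasFDerivAt (n : ℕ) {δ : ℝ} (hδ : 0 < δ) (ξ : Euc n) :
    HasFDerivAt (brMult n (δ + 1))
      ((innerSL ℝ ξ).smulRight (-2 * (δ + 1) * brMult n δ ξ : ℂ)) ξ := by
  have h1 : HasFDerivAt (fun ξ : Euc n => 1 - ‖ξ‖ ^ 2) (-(2 • innerSL ℝ ξ)) ξ := by
    have := (hasStrictFDerivAt_norm_sq ξ).hasFDerivAt
    simpa using this.const_sub 1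
  have h2 := (hasDerivAt_posPart_rpow (p := δ + 1) (by linarith) (1 - ‖ξ‖ ^ 2)).comp_hasFDerivAt ξ h1
  have h3 := Complex.ofRealCLM.hasFDerivAt.comp ξ h2
  refine h3.congr_fderiv ?_
  ext v
  simp [brMult]
  ring

lemma brMult_sq_mul (n : ℕ) {δ : ℝ} (hδ : 0 < δ) (ξ : Euc n) :
    (‖ξ‖ ^ 2 : ℂ) * brMult n δ ξ = brMult n δ ξ - brMult n (δ + 1) ξ := by
  by_cases h : 1 ≤ ‖ξ‖
  · rw [brMult_eq_zero n hδ h, brMult_eq_zero n (by linarith) h]; simp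
  · push Not at h
    have h0 := norm_nonneg ξ
    unfold brMult
    rw [max_eq_left (by nlinarith), Real.rpow_add_one (by nlinarith)]
    push_cast
    ring

/-- Multiplying a continuous compactly supported function by a linear form and taking
Fourier transforms differentiates the Fourier transform. -/
lemma hasFDerivAt_fourier_of_compact {n : ℕ} {h : Euc n → ℂ} (hc : Continuous h)
    (hs : HasCompactSupport h) (x : Euc n) :
    ∃ L : Euc n →L[ℝ] ℂ, HasFDerivAt (𝓕 h) L x ∧
      ∀ v, L v = -(2 * π * I) * 𝓕 (fun w => (inner ℝ w v : ℂ) * h w) x := by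
  have hi : Integrable h := hc.integrable_of_hasCompactSupport hs
  have hi2 : Integrable (fun v => ‖v‖ * ‖h v‖) :=
    (by fun_prop : Continuous (fun v => ‖v‖ * ‖h v‖)).integrable_of_hasCompactSupport
      (hs.norm.mul_left)
  refine ⟨_, Real.hasFDerivAt_fourier hi hi2 x, fun v => ?_⟩
  have hi3 : Integrable (VectorFourier.fourierSMulRight (innerSL ℝ) h) := by
    refine Continuous.integrable_of_hasCompactSupport ?_ ?_
    · unfold VectorFourier.fourierSMulRight
      fun_prop
    · refine hs.mono ?_
      intro y hy
      contrapose! hy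
      simp only [Function.mem_support, not_not] at hy
      simp [VectorFourier.fourierSMulRight, hy]
  rw [Real.fourier_eq, Real.fourier_eq, ContinuousLinearMap.integral_apply]
  · rw [← integral_const_mul]
    congr 1
    funext w
    simp only [VectorFourier.fourierSMulRight_apply, Circle.smul_def, _root_.smul_apply,
      smul_eq_mul, Complex.real_smul]
    change _ * (_ * (((inner ℝ w v : ℝ) : ℂ) * _)) = _
    ring
  · exact (Real.fourierIntegral_convergent_iff x).2 hi3

lemma fourier_inner_mul_brMult (n : ℕ) {δ : ℝ} (hδ : 0 < δ) (x v : Euc n) :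
    𝓕 (fun w => (inner ℝ w v : ℂ) * brMult n δ w) x
      = -(π * I / (δ + 1)) * (inner ℝ x v : ℂ) * brKernel n (δ + 1) x := by
  have hd : ∀ ξ, fderiv ℝ (brMult n (δ + 1)) ξ =
      (innerSL ℝ ξ).smulRight (-2 * (δ + 1) * brMult n δ ξ : ℂ) :=
    fun ξ => (brMult_hasFDerivAt n hδ ξ).fderiv
  have hi : Integrable (fderiv ℝ (brMult n (δ + 1))) := by
    have h1 : fderiv ℝ (brMult n (δ + 1)) = fun ξ =>
      (innerSL ℝ ξ).smulRight (-2 * (δ + 1) * brMult n δ ξ : ℂ) := funext hd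
    refine Continuous.integrable_of_hasCompactSupport ?_ ?_
    · rw [h1]
      have := brMult_continuous n hδ
      fun_prop
    · exact (brMult_hasCompactSupport n (by linarith)).fderiv ℝ
  have h := congrFun (Real.fourier_fderiv (brMult_integrable n (by linarith))
    (fun ξ => (brMult_hasFDerivAt n hδ ξ).differentiableAt) hi) x
  have h2 := congrArg (fun L => L v) h
  simp only [VectorFourier.fourierSMulRight_apply] at h2
  rw [Real.fourier_eq, ContinuousLinearMap.integral_apply] at h2
  · rw [← brKernel_eq_fourier] at h2
    simp only [FunLike.coe_smul, Pi.smul_apply, hd, Circle.smul_def, ContinuousLinearMap.smulRight_apply] at h2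
    rw [Real.fourier_eq]
    have e : ∀ w : Euc n, (𝐞 (-(inner ℝ w x : ℝ)) • ((inner ℝ w v : ℂ) * brMult n δ w) : ℂ) =
      (-2 * (δ + 1))⁻¹ * ((𝐞 (-(inner ℝ w x : ℝ)) : ℂ) • ((innerSL ℝ w) v • (-2 * (δ + 1) * brMult n δ w))) := by
      intro w
      have : (-2 * (δ + 1) : ℂ) ≠ 0 := by
        norm_cast; intro h; push_cast at h; linarith
      have h' : (δ + 1 : ℂ) ≠ 0 := by
        norm_cast; linarith
      simp [Circle.smul_def]
      field_simp
    simp_rw [e]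
    rw [integral_const_mul, h2]
    have h' : (δ + 1 : ℂ) ≠ 0 := by
        norm_cast; linarith
    simp only [ofReal_inv, ofReal_mul, ofReal_neg, ofReal_ofNat, ofReal_add, ofReal_one,
      neg_apply, smul_eq_mul, Complex.real_smul]
    have hxv : ((innerSL ℝ) x) v = inner ℝ x v := rfl
    rw [hxv]
    field_simp
  · exact (Real.fourierIntegral_convergent_iff x).2 hi

/-- `∇K_δ(x) = -(2π²/(δ+1)) K_{δ+1}(x) x`. -/
lemma brKernel_hasFDerivAt (n : ℕ) {δ : ℝ} (hδ : 0 < δ) (x : Euc n) :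
    HasFDerivAt (brKernel n δ)
      ((innerSL ℝ x).smulRight (-(2 * π ^ 2 / (δ + 1)) * brKernel n (δ + 1) x : ℂ)) x := by
  obtain ⟨L, hL, hLv⟩ := hasFDerivAt_fourier_of_compact (brMult_continuous n hδ)
    (brMult_hasCompactSupport n hδ) x
  rw [brKernel_eq_fourier n δ]
  refine hL.congr_fderiv ?_
  ext v
  rw [hLv, fourier_inner_mul_brMult n hδ]
  simp
  ring_nf
  simp

/-- The Euler-type relation
`x · ∇K_{δ+1}(x) = 2(δ+1)(K_δ(x) - K_{δ+1}(x)) - n K_{δ+1}(x)`. -/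
lemma brKernel_euler (n : ℕ) {δ : ℝ} (hδ : 0 < δ) (x : Euc n) :
    fderiv ℝ (brKernel n (δ + 1)) x x =
      2 * (δ + 1) * (brKernel n δ x - brKernel n (δ + 1) x) - n * brKernel n (δ + 1) x := by
  have h' : (δ + 1 : ℂ) ≠ 0 := by
        norm_cast; linarith
  have hK := brKernel_hasFDerivAt n (δ := δ + 1) (by linarith) x
  set e : Fin n → Euc n := fun i => EuclideanSpace.single i 1 with he
  have hin : ∀ (w : Euc n) i, inner ℝ w (e i) = w i := by
    intro w i; simp [he, EuclideanSpace.inner_single_right]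
  have key : ∀ i, -(2 * π * I) * 𝓕 (fun w => (w i : ℂ) * ((w i : ℂ) * brMult n δ w)) x =
      -(π * I / (δ + 1)) * (brKernel n (δ + 1) x +
        (x i : ℂ) * fderiv ℝ (brKernel n (δ + 1)) x (e i)) := by
    intro i
    have hc : Continuous fun w : Euc n => (inner ℝ w (e i) : ℂ) * brMult n δ w := by
      have := brMult_continuous n hδ
      fun_prop
    obtain ⟨L, hL, hLv⟩ := hasFDerivAt_fourier_of_compact hc
      ((brMult_hasCompactSupport n hδ).mul_left) x
    have h1 := hLv (e i)
    simp only [hin] at h1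
    rw [← h1]
    have h2 : 𝓕 (fun w => (inner ℝ w (e i) : ℂ) * brMult n δ w) = fun x =>
      -(π * I / (δ + 1)) * (inner ℝ x (e i) : ℂ) * brKernel n (δ + 1) x :=
      funext fun x => fourier_inner_mul_brMult n hδ x (e i)
    rw [h2] at hL
    have h3 : HasFDerivAt (fun x : Euc n => (inner ℝ x (e i) : ℂ))
        (Complex.ofRealCLM.comp (innerSL ℝ (e i))) x := by
      have : (fun x : Euc n => (inner ℝ x (e i) : ℂ)) =
        (Complex.ofRealCLM.comp (innerSL ℝ (e i))) := by
        funext y; simp [real_inner_comm]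
      rw [this]
      exact ContinuousLinearMap.hasFDerivAt _
    have h4 := (h3.const_mul (-(π * I / (δ + 1)))).mul hK
    rw [hL.unique h4, hK.fderiv]
    simp [he, EuclideanSpace.inner_single_right]
    ring
  have hsum := Finset.sum_congr (rfl : (Finset.univ : Finset (Fin n)) = _) fun i _ => key i
  rw [← Finset.mul_sum, ← Finset.mul_sum, Finset.sum_add_distrib] at hsum
  have hx : ∑ i, (x i : ℂ) * fderiv ℝ (brKernel n (δ + 1)) x (e i) =
      fderiv ℝ (brKernel n (δ + 1)) x x := by
    conv_rhs => arg 2; rw [← (EuclideanSpace.basisFun (Fin n) ℝ).sum_repr x]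
    simp only [map_sum, map_smul, EuclideanSpace.basisFun_apply, EuclideanSpace.basisFun_repr]
    simp [he]
  have hF : ∑ i, 𝓕 (fun w => (w i : ℂ) * ((w i : ℂ) * brMult n δ w)) x =
      brKernel n δ x - brKernel n (δ + 1) x := by
    rw [brKernel_eq_fourier, brKernel_eq_fourier]
    simp only [Real.fourier_eq]
    rw [← integral_finsetSum, ← integral_sub]
    · congr 1
      funext w
      rw [← smul_sub, ← brMult_sq_mul n hδ, ← Finset.smul_sum]
      congr 1
      rw [EuclideanSpace.norm_eq]
      norm_cast
      rw [Real.sq_sqrt (by positivity)]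
      push_cast
      rw [Finset.sum_mul]
      congr 1; funext i
      norm_cast
      simp
      ring
    · exact (Real.fourierIntegral_convergent_iff x).2 (brMult_integrable n hδ)
    · exact (Real.fourierIntegral_convergent_iff x).2 (brMult_integrable n (by linarith))
    · intro i _
      refine (Real.fourierIntegral_convergent_iff x).2 ?_
      refine Continuous.integrable_of_hasCompactSupport ?_
        ((brMult_hasCompactSupport n hδ).mul_left.mul_left)
      have := brMult_continuous n hδ
      fun_prop
  rw [hF, hx] at hsum
  simp only [Finset.sum_const, Finset.card_univ, Fintype.card_fin, nsmul_eq_mul] at hsum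
  have hpi : (π * I : ℂ) ≠ 0 := by simp [Real.pi_ne_zero]
  have : (π * I : ℂ) * (fderiv ℝ (brKernel n (δ + 1)) x x) = (π * I : ℂ) * (2 * (δ + 1) * (brKernel n δ x - brKernel n (δ + 1) x) - n * brKernel n (δ + 1) x) := by
    field_simp at hsum
    linear_combination (π * I : ℂ) * hsum
  exact mul_left_cancel₀ hpi this

lemma brKernel_radial (n : ℕ) (δ : ℝ) {x y : Euc n} (h : ‖x‖ = ‖y‖) :
    brKernel n δ x = brKernel n δ y := by
  set A := (ℝ ∙ (x - y))ᗮ.reflection with hA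
  have hAx : A x = y := Submodule.reflection_sub h
  have h1 := Real.fourierInv_comp_linearIsometry A (brMult n δ) x
  have h2 : (brMult n δ) ∘ A = brMult n δ := by
    funext z; simp [brMult]
  rw [h2, hAx] at h1
  exact h1

lemma brKernel_zero_ne (n : ℕ) {δ : ℝ} (hδ : 0 < δ) : 0 < (brKernel n δ 0).re := by
  rw [brKernel_eq_fourier, Real.fourier_eq]
  simp only [inner_zero_right, neg_zero, AddChar.map_zero_eq_one, one_smul]
  have : ∫ v, brMult n δ v = ((∫ v : Euc n, ((1 - ‖v‖ ^ 2) ⊔ 0) ^ δ : ℝ) : ℂ) := by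
    exact integral_ofReal
  rw [this, Complex.ofReal_re]
  have hc : Continuous fun v : Euc n => ((1 - ‖v‖ ^ 2) ⊔ 0) ^ δ :=
    Continuous.rpow_const (by fun_prop) (fun x => Or.inr hδ.le)
  refine hc.integral_pos_of_hasCompactSupport_nonneg_nonzero (x := 0) ?_ ?_ ?_
  · apply HasCompactSupport.intro (isCompact_closedBall (0 : Euc n) 1)
    intro x hx
    simp at hx
    rw [max_eq_right (by nlinarith), Real.zero_rpow hδ.ne']
  · intro x; positivity
  · simp

/-! ### The oscillatory system satisfied by the radial profile -/

/-- The planar system satisfied, along a ray, by the suitably normalised pair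
`(r^a K_δ, (π/(δ+1)) r^(a+1) K_{δ+1})`, where `a = (n+1)/2 + δ`. It is a rotation with
angular speed `2π`, perturbed by a term of size `a / r`. -/
structure OscSystem (a : ℝ) (p z : ℝ → ℝ) : Prop where
  hp : ∀ r, 0 < r → HasDerivAt p (a / r * p r - 2 * π * z r) r
  hz : ∀ r, 0 < r → HasDerivAt z (2 * π * p r - a / r * z r) r

namespace OscSystem
variable {a : ℝ} {p z : ℝ → ℝ}

lemma hasDerivAt_energy (h : OscSystem a p z) {r : ℝ} (hr : 0 < r) :
    HasDerivAt (fun r => p r ^ 2 + z r ^ 2) (2 * a / r * (p r ^ 2 - z r ^ 2)) r := by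
  refine (((h.hp r hr).pow 2).add ((h.hz r hr).pow 2)).congr_deriv ?_
  simp; ring

/-- The corrected energy `p² + z² - (a/π) p z / r`: its derivative is `O(1/r²)` relative to
the energy, whereas that of `p² + z²` is only `O(1/r)`. -/
lemma hasDerivAt_energy' (h : OscSystem a p z) {r : ℝ} (hr : 0 < r) :
    HasDerivAt (fun r => p r ^ 2 + z r ^ 2 - a / π * (p r * z r / r))
      (a / π * (p r * z r / r ^ 2)) r := by
  have h1 := (((h.hp r hr).mul (h.hz r hr)).div (hasDerivAt_id r) hr.ne').const_mul (a / π)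
  refine ((h.hasDerivAt_energy hr).sub h1).congr_deriv ?_
  have := Real.pi_ne_zero
  simp
  field_simp
  ring

lemma energy_mono (h : OscSystem a p z) (ha : 0 ≤ a) {r s : ℝ} (hr : 0 < r) (hrs : r ≤ s) :
    (p r ^ 2 + z r ^ 2) * r ^ (2 * a) ≤ (p s ^ 2 + z s ^ 2) * s ^ (2 * a) := by
  have hd : ∀ t, 0 < t → HasDerivAt (fun t => (p t ^ 2 + z t ^ 2) * t ^ (2 * a))
      (4 * a / t * p t ^ 2 * t ^ (2 * a)) t := by
    intro t ht
    refine ((h.hasDerivAt_energy ht).mul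
      (Real.hasDerivAt_rpow_const (p := 2 * a) (Or.inl ht.ne'))).congr_deriv ?_
    rw [Real.rpow_sub_one ht.ne']
    field_simp
    ring
  have hm : MonotoneOn (fun t => (p t ^ 2 + z t ^ 2) * t ^ (2 * a)) (Set.Ioi 0) := by
    refine monotoneOn_of_deriv_nonneg (convex_Ioi 0)
      (fun t ht => (hd t ht).continuousAt.continuousWithinAt) ?_ ?_
    · intro t ht
      rw [interior_Ioi] at ht
      exact (hd t ht).differentiableAt.differentiableWithinAt
    · intro t ht
      rw [interior_Ioi] at ht
      have : 0 < t := ht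
      rw [(hd t ht).deriv]
      positivity
  exact hm hr (hr.trans_le hrs) hrs

lemma energy'_bounds (ha : 0 ≤ a) {r : ℝ} (hr : 0 < r) (har : a ≤ r) :
    |a / π * (p r * z r / r)| ≤ (p r ^ 2 + z r ^ 2) / 2 := by
  have hpi : 1 ≤ π := by linarith [Real.pi_gt_three]
  have e : a / π * (p r * z r / r) = (a / r) * (1 / π) * (p r * z r) := by field_simp
  have h1 : a / r ≤ 1 := (div_le_one hr).2 har
  have h2 : 1 / π ≤ 1 := by rw [div_le_one (by positivity)]; exact hpi
  have h3 : |p r * z r| ≤ (p r ^ 2 + z r ^ 2) / 2 := by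
    rw [abs_le]; constructor <;> nlinarith [sq_nonneg (p r - z r), sq_nonneg (p r + z r)]
  rw [e, abs_mul, abs_of_nonneg (by positivity : 0 ≤ a / r * (1 / π))]
  calc a / r * (1 / π) * |p r * z r| ≤ 1 * 1 * |p r * z r| := by gcongr
    _ ≤ _ := by linarith

/-- Past `r ≥ a` the energy stays comparable to itself. -/
lemma energy_comparable (h : OscSystem a p z) (ha : 0 ≤ a) {r s : ℝ} (hr : 0 < r) (har : a ≤ r)
    (hrs : r ≤ s) :
    p s ^ 2 + z s ^ 2 ≤ 4 * Real.exp 1 * (p r ^ 2 + z r ^ 2) ∧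
    p r ^ 2 + z r ^ 2 ≤ 4 * Real.exp 1 * (p s ^ 2 + z s ^ 2) := by
  set F : ℝ → ℝ := fun r => p r ^ 2 + z r ^ 2 - a / π * (p r * z r / r) with hF
  have hd : ∀ t, 0 < t → HasDerivAt F (a / π * (p t * z t / t ^ 2)) t :=
    fun t ht => h.hasDerivAt_energy' ht
  have hb : ∀ t, r ≤ t → (p t ^ 2 + z t ^ 2) / 2 ≤ F t ∧ F t ≤ 2 * (p t ^ 2 + z t ^ 2) := by
    intro t ht
    have := abs_le.1 (energy'_bounds (p := p) (z := z) ha (hr.trans_le ht) (har.trans ht))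
    simp only [hF]
    have := add_nonneg (sq_nonneg (p t)) (sq_nonneg (z t))
    constructor <;> linarith
  have hder : ∀ t, r ≤ t → |a / π * (p t * z t / t ^ 2)| ≤ a / t ^ 2 * F t := by
    intro t ht
    have ht0 := hr.trans_le ht
    have hpi : 1 ≤ π := by linarith [Real.pi_gt_three]
    have h2 : 1 / π ≤ 1 := by rw [div_le_one (by positivity)]; exact hpi
    have h3 : |p t * z t| ≤ (p t ^ 2 + z t ^ 2) / 2 := by
      rw [abs_le]; constructor <;> nlinarith [sq_nonneg (p t - z t), sq_nonneg (p t + z t)]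
    have e : a / π * (p t * z t / t ^ 2) = a / t ^ 2 * ((1 / π) * (p t * z t)) := by field_simp
    rw [e, abs_mul, abs_of_nonneg (by positivity : 0 ≤ a / t ^ 2), abs_mul,
      abs_of_nonneg (by positivity : 0 ≤ 1 / π)]
    gcongr
    calc 1 / π * |p t * z t| ≤ 1 * |p t * z t| := by gcongr
      _ ≤ _ := by linarith [(hb t ht).1]
  have hexp : ∀ (c : ℝ) t, 0 < t → HasDerivAt (fun t => F t * Real.exp (c * (a / t)))
      ((a / π * (p t * z t / t ^ 2) - c * (a / t ^ 2) * F t) * Real.exp (c * (a / t))) t := by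
    intro c t ht
    have h1 : HasDerivAt (fun t : ℝ => c * (a / t)) (c * (-(a / t ^ 2))) t := by
      have := ((hasDerivAt_inv ht.ne').const_mul a).const_mul c
      refine (this.congr_deriv ?_)
      field_simp
    refine ((hd t ht).mul h1.exp).congr_deriv ?_
    ring
  have hanti : AntitoneOn (fun t => F t * Real.exp (1 * (a / t))) (Set.Ici r) := by
    refine antitoneOn_of_deriv_nonpos (convex_Ici r)
      (fun t ht => (hexp 1 t (hr.trans_le ht)).continuousAt.continuousWithinAt) ?_ ?_
    · intro t ht
      rw [interior_Ici] at ht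
      exact (hexp 1 t (hr.trans ht)).differentiableAt.differentiableWithinAt
    · intro t ht
      rw [interior_Ici] at ht
      rw [(hexp 1 t (hr.trans ht)).deriv]
      refine mul_nonpos_of_nonpos_of_nonneg ?_ (Real.exp_pos _).le
      have := (abs_le.1 (hder t (le_of_lt ht))).2
      linarith
  have hmono : MonotoneOn (fun t => F t * Real.exp (-1 * (a / t))) (Set.Ici r) := by
    refine monotoneOn_of_deriv_nonneg (convex_Ici r)
      (fun t ht => (hexp (-1) t (hr.trans_le ht)).continuousAt.continuousWithinAt) ?_ ?_
    · intro t ht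
      rw [interior_Ici] at ht
      exact (hexp (-1) t (hr.trans ht)).differentiableAt.differentiableWithinAt
    · intro t ht
      rw [interior_Ici] at ht
      rw [(hexp (-1) t (hr.trans ht)).deriv]
      refine mul_nonneg ?_ (Real.exp_pos _).le
      have := (abs_le.1 (hder t (le_of_lt ht))).1
      linarith
  have hA := hanti (Set.mem_Ici.2 le_rfl) (Set.mem_Ici.2 hrs) hrs
  have hM := hmono (Set.mem_Ici.2 le_rfl) (Set.mem_Ici.2 hrs) hrs
  simp only at hA hM
  have hs0 := hr.trans_le hrs
  have b1 := hb r le_rfl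
  have b2 := hb s hrs
  have e0 : 0 ≤ p r ^ 2 + z r ^ 2 := by positivity
  have e1 : 0 ≤ p s ^ 2 + z s ^ 2 := by positivity
  have Fr : 0 ≤ F r := by linarith
  have Fs : 0 ≤ F s := by linarith
  have x1 : Real.exp (1 * (a / r)) ≤ Real.exp 1 := by
    apply Real.exp_le_exp.2; rw [one_mul]; exact (div_le_one hr).2 har
  have x2 : 1 ≤ Real.exp (1 * (a / s)) := by
    apply Real.one_le_exp; positivity
  have x3 : Real.exp (-1) ≤ Real.exp (-1 * (a / r)) := by
    apply Real.exp_le_exp.2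
    have := (div_le_one hr).2 har
    linarith
  have x4 : Real.exp (-1 * (a / s)) ≤ 1 := by
    apply Real.exp_le_one_iff.2
    have : 0 ≤ a / s := by positivity
    linarith
  constructor
  · have : F s ≤ F r * Real.exp 1 :=
      calc F s = F s * 1 := by ring
        _ ≤ F s * Real.exp (1 * (a / s)) := by gcongr
        _ ≤ _ := hA
        _ ≤ _ := by gcongr
    nlinarith [Real.exp_pos 1]
  · have : F r * Real.exp (-1) ≤ F s :=
      calc F r * Real.exp (-1) ≤ F r * Real.exp (-1 * (a / r)) := by gcongr
        _ ≤ _ := hM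
        _ ≤ F s * 1 := by gcongr
        _ = _ := by ring
    have h2 : F r ≤ Real.exp 1 * F s := by
      calc F r = Real.exp 1 * (F r * Real.exp (-1)) := by
            rw [mul_left_comm, ← Real.exp_add]; simp
        _ ≤ _ := by gcongr
    nlinarith [Real.exp_pos 1]

/-- Transport of `p` over a distance `s - r`: up to an error controlled by the perturbation,
`p s` is obtained by rotating `(p r, z r)` through the angle `2π (s - r)`. -/
lemma transport (h : OscSystem a p z) (ha : 0 ≤ a) {r₀ B : ℝ} (hr₀ : 0 < r₀)
    (hB : ∀ t, r₀ ≤ t → |p t| + |z t| ≤ B) {r s : ℝ} (hr : r₀ ≤ r) (hs : r₀ ≤ s) :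
    |p s - (p r * Real.cos (2 * π * (s - r)) - z r * Real.sin (2 * π * (s - r)))|
      ≤ a / r₀ * B * |s - r| := by
  set F : ℝ → ℝ := fun t => p t * Real.cos (2 * π * (s - t)) - z t * Real.sin (2 * π * (s - t))
    with hF
  have hd : ∀ t, 0 < t → HasDerivAt F
      (a / t * (p t * Real.cos (2 * π * (s - t)) + z t * Real.sin (2 * π * (s - t)))) t := by
    intro t ht
    have h0 : HasDerivAt (fun t => 2 * π * (s - t)) (-(2 * π)) t := by
      refine (((hasDerivAt_id t).const_sub s).const_mul (2 * π)).congr_deriv ?_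
      ring
    refine (((h.hp t ht).mul h0.cos).sub ((h.hz t ht).mul h0.sin)).congr_deriv ?_
    ring
  have key := (convex_Ici r₀).norm_image_sub_le_of_norm_hasDerivWithin_le (f := F)
    (C := a / r₀ * B)
    (fun t ht => (hd t (hr₀.trans_le ht)).hasDerivWithinAt) (fun t ht => ?_)
    (Set.mem_Ici.2 hr) (Set.mem_Ici.2 hs)
  · have e : F s = p s := by simp [hF]
    rw [e] at key
    exact key
  · have ht' : r₀ ≤ t := ht
    have ht0 := hr₀.trans_le ht'
    rw [Real.norm_eq_abs, abs_mul, abs_of_nonneg (by positivity : 0 ≤ a / t)]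
    have hB' : |p t * Real.cos (2 * π * (s - t)) + z t * Real.sin (2 * π * (s - t))| ≤ B := by
      refine le_trans ?_ (hB t ht')
      refine (abs_add_le _ _).trans ?_
      rw [abs_mul, abs_mul]
      have c1 := Real.abs_cos_le_one (2 * π * (s - t))
      have c2 := Real.abs_sin_le_one (2 * π * (s - t))
      have a1 := abs_nonneg (p t)
      have a2 := abs_nonneg (z t)
      nlinarith
    gcongr
end OscSystem

/-- The decay exponent `(n+1)/2 + δ` of the Bochner–Riesz kernel. -/
def brExp (n : ℕ) (δ : ℝ) : ℝ := ((n : ℝ) + 1) / 2 + δ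

lemma brKernel_oscSystem (n : ℕ) {δ : ℝ} (hδ : 0 < δ) (ℓ : ℂ →L[ℝ] ℝ) {ω : Euc n}
    (hω : ‖ω‖ = 1) :
    OscSystem (brExp n δ) (fun r => r ^ brExp n δ * ℓ (brKernel n δ (r • ω)))
      (fun r => π / (δ + 1) * (r ^ (brExp n δ + 1) * ℓ (brKernel n (δ + 1) (r • ω)))) := by
  have hray : ∀ r : ℝ, HasDerivAt (fun r : ℝ => r • ω) ω r := by
    intro r; simpa using (hasDerivAt_id r).smul_const ω
  have hin : ∀ r : ℝ, inner ℝ (r • ω) ω = r := by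
    intro r; rw [real_inner_smul_left, real_inner_self_eq_norm_sq, hω]; ring
  have hδ1 : δ + 1 ≠ 0 := by linarith
  have hd : ∀ r : ℝ, HasDerivAt (fun r : ℝ => ℓ (brKernel n δ (r • ω)))
      (-(2 * π ^ 2 / (δ + 1)) * r * ℓ (brKernel n (δ + 1) (r • ω))) r := by
    intro r
    have h1 := (brKernel_hasFDerivAt n hδ (r • ω)).comp_hasDerivAt r (hray r)
    have h2 := ℓ.hasFDerivAt.comp_hasDerivAt r h1
    refine h2.congr_deriv ?_
    have e : ((innerSL ℝ (r • ω)).smulRight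
        (-(2 * π ^ 2 / (δ + 1)) * brKernel n (δ + 1) (r • ω) : ℂ)) ω =
        (-(2 * π ^ 2 / (δ + 1)) * r) • brKernel n (δ + 1) (r • ω) := by
      rw [ContinuousLinearMap.smulRight_apply]
      change (inner ℝ (r • ω) ω) • _ = _
      rw [hin]
      simp
      ring
    rw [e, map_smul, smul_eq_mul]
  have hd2 : ∀ r : ℝ, 0 < r → HasDerivAt (fun r : ℝ => ℓ (brKernel n (δ + 1) (r • ω)))
      ((2 * (δ + 1) * (ℓ (brKernel n δ (r • ω)) - ℓ (brKernel n (δ + 1) (r • ω))) -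
        n * ℓ (brKernel n (δ + 1) (r • ω))) / r) r := by
    intro r hr
    have hdiff := (brKernel_hasFDerivAt n (δ := δ + 1) (by linarith) (r • ω)).differentiableAt
    have h1 := hdiff.hasFDerivAt.comp_hasDerivAt r (hray r)
    have h2 := ℓ.hasFDerivAt.comp_hasDerivAt r h1
    refine h2.congr_deriv ?_
    have e := brKernel_euler n hδ (r • ω)
    rw [map_smul] at e
    have e2 := congrArg ℓ e
    have cast1 : (2 * (δ + 1) * (brKernel n δ (r • ω) - brKernel n (δ + 1) (r • ω)) -
        n * brKernel n (δ + 1) (r • ω) : ℂ) =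
        (2 * (δ + 1) : ℝ) • (brKernel n δ (r • ω) - brKernel n (δ + 1) (r • ω)) -
        (n : ℝ) • brKernel n (δ + 1) (r • ω) := by
      simp
    rw [cast1] at e2
    simp only [map_smul, map_sub, smul_eq_mul] at e2
    rw [← e2]
    field_simp
  constructor
  · intro r hr
    refine ((Real.hasDerivAt_rpow_const (p := brExp n δ) (Or.inl hr.ne')).mul (hd r)).congr_deriv ?_
    rw [Real.rpow_sub_one hr.ne', Real.rpow_add_one hr.ne']
    field_simp
    ring
  · intro r hr
    refine (((Real.hasDerivAt_rpow_const (p := brExp n δ + 1) (Or.inl hr.ne')).mul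
      (hd2 r hr)).const_mul (π / (δ + 1))).congr_deriv ?_
    rw [add_sub_cancel_right, Real.rpow_add_one hr.ne']
    have hn : (n : ℝ) = 2 * brExp n δ - 1 - 2 * δ := by unfold brExp; ring
    rw [hn]
    field_simp
    ring

lemma brExp_pos (n : ℕ) {δ : ℝ} (hδ : 0 < δ) : 0 < brExp n δ := by unfold brExp; positivity

lemma brKernel_decay_aux (n : ℕ) {δ : ℝ} (hδ : 0 < δ) (ℓ : ℂ →L[ℝ] ℝ) :
    ∃ C : ℝ, 0 ≤ C ∧ ∀ x : Euc n, 1 ≤ ‖x‖ → brExp n δ ≤ ‖x‖ →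
      |ℓ (brKernel n δ x)| ≤ C * ‖x‖ ^ (-brExp n δ) := by
  set a := brExp n δ with ha
  have ha0 : 0 < a := brExp_pos n hδ
  set r₀ : ℝ := max 1 a with hr₀
  have hr0 : 0 < r₀ := lt_of_lt_of_le one_pos (le_max_left _ _)
  set B := ‖ℓ‖ * ((∫ ξ, ‖brMult n δ ξ‖) + ∫ ξ, ‖brMult n (δ + 1) ξ‖) with hB
  have hB0 : 0 ≤ B := by
    apply mul_nonneg (norm_nonneg _)
    exact add_nonneg (integral_nonneg fun _ => norm_nonneg _)
      (integral_nonneg fun _ => norm_nonneg _)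
  have hK1 : ∀ x, |ℓ (brKernel n δ x)| ≤ B := by
    intro x
    refine (ℓ.le_opNorm _).trans ?_
    refine mul_le_mul_of_nonneg_left ?_ (norm_nonneg _)
    refine (norm_brKernel_le n δ x).trans ?_
    exact le_add_of_nonneg_right (integral_nonneg fun _ => norm_nonneg _)
  have hK2 : ∀ x, |ℓ (brKernel n (δ + 1) x)| ≤ B := by
    intro x
    refine (ℓ.le_opNorm _).trans ?_
    refine mul_le_mul_of_nonneg_left ?_ (norm_nonneg _)
    refine (norm_brKernel_le n (δ + 1) x).trans ?_
    exact le_add_of_nonneg_left (integral_nonneg fun _ => norm_nonneg _)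
  set D := (r₀ ^ a * B) ^ 2 + (π / (δ + 1) * (r₀ ^ (a + 1) * B)) ^ 2 with hD
  refine ⟨Real.sqrt (4 * Real.exp 1 * D), Real.sqrt_nonneg _, fun x hx hx2 => ?_⟩
  have hxpos : 0 < ‖x‖ := by linarith
  set ω : Euc n := ‖x‖⁻¹ • x with hω
  have hω1 : ‖ω‖ = 1 := by
    rw [hω, norm_smul, norm_inv, norm_norm, inv_mul_cancel₀ hxpos.ne']
  have hxω : ‖x‖ • ω = x := by rw [hω, smul_inv_smul₀ hxpos.ne']
  have hos := brKernel_oscSystem n hδ ℓ hω1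
  have hc := (hos.energy_comparable ha0.le hr0 (le_max_right _ _)
    (max_le hx hx2 : r₀ ≤ ‖x‖)).1
  simp only [hxω] at hc
  have h1 : (‖x‖ ^ a * ℓ (brKernel n δ x)) ^ 2 ≤ 4 * Real.exp 1 * D := by
    refine le_trans (le_trans (le_add_of_nonneg_right (sq_nonneg _)) hc) ?_
    gcongr 4 * Real.exp 1 * ?_
    refine add_le_add ?_ ?_
    · rw [← sq_abs, abs_mul, abs_of_nonneg (by positivity : 0 ≤ r₀ ^ a)]
      gcongr
      exact hK1 _
    · rw [← sq_abs, abs_mul, abs_mul, abs_of_nonneg (by positivity : 0 ≤ r₀ ^ (a + 1)),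
        abs_of_nonneg (by positivity : 0 ≤ π / (δ + 1))]
      gcongr
      exact hK2 _
  have h2 := Real.abs_le_sqrt h1
  rw [abs_mul, abs_of_nonneg (by positivity : 0 ≤ ‖x‖ ^ a)] at h2
  rw [Real.rpow_neg hxpos.le, ← div_eq_mul_inv, le_div_iff₀ (by positivity), mul_comm]
  exact h2

/-- `|K_δ(x)| ≤ C (1 + |x|)^{-(n+1)/2 - δ}`. -/
lemma brKernel_decay (n : ℕ) {δ : ℝ} (hδ : 0 < δ) :
    ∃ C : ℝ, 0 ≤ C ∧ ∀ x : Euc n, ‖brKernel n δ x‖ ≤ C * (1 + ‖x‖) ^ (-brExp n δ) := by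
  obtain ⟨C1, hC1, h1⟩ := brKernel_decay_aux n hδ Complex.reCLM
  obtain ⟨C2, hC2, h2⟩ := brKernel_decay_aux n hδ Complex.imCLM
  have ha0 := brExp_pos n hδ
  set a := brExp n δ with ha
  set r₀ : ℝ := max 1 a with hr₀
  have hr0 : 0 < r₀ := lt_of_lt_of_le one_pos (le_max_left _ _)
  set B := ∫ ξ, ‖brMult n δ ξ‖ with hB
  have hB0 : 0 ≤ B := integral_nonneg fun _ => norm_nonneg _
  refine ⟨(C1 + C2) * 2 ^ a + B * (1 + r₀) ^ a, by positivity, fun x => ?_⟩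
  rw [Real.rpow_neg (by positivity), ← div_eq_mul_inv, le_div_iff₀ (by positivity)]
  by_cases hx : r₀ ≤ ‖x‖
  · have hx1 : 1 ≤ ‖x‖ := (le_max_left _ _).trans hx
    have hx2 : a ≤ ‖x‖ := (le_max_right _ _).trans hx
    have h3 := h1 x hx1 hx2
    have h4 := h2 x hx1 hx2
    have hpos : 0 < ‖x‖ := by linarith
    have h5 : ‖brKernel n δ x‖ ≤ (C1 + C2) * ‖x‖ ^ (-a) := by
      refine (Complex.norm_le_abs_re_add_abs_im _).trans ?_
      rw [add_mul]; exact add_le_add h3 h4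
    calc ‖brKernel n δ x‖ * (1 + ‖x‖) ^ a ≤ ((C1 + C2) * ‖x‖ ^ (-a)) * (2 * ‖x‖) ^ a := by
          gcongr; linarith
      _ = (C1 + C2) * 2 ^ a := by
          rw [Real.mul_rpow (by norm_num) hpos.le, Real.rpow_neg hpos.le]
          field_simp
      _ ≤ _ := le_add_of_nonneg_right (by positivity)
  · push Not at hx
    calc ‖brKernel n δ x‖ * (1 + ‖x‖) ^ a ≤ B * (1 + r₀) ^ a := by
          gcongr; exact norm_brKernel_le n δ x
      _ ≤ _ := le_add_of_nonneg_left (by positivity)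

lemma brKernel_continuous (n : ℕ) {δ : ℝ} (hδ : 0 < δ) : Continuous (brKernel n δ) :=
  continuous_iff_continuousAt.2 fun x => (brKernel_hasFDerivAt n hδ x).continuousAt

/-- The radial profile of the real part of the kernel, with its nondegeneracy. -/
lemma brKernel_profile {n : ℕ} (hn : 0 < n) {δ : ℝ} (hδ : 0 < δ) :
    ∃ p z : ℝ → ℝ, OscSystem (brExp n δ) p z ∧
      (∀ x : Euc n, x ≠ 0 → (brKernel n δ x).re = ‖x‖ ^ (-brExp n δ) * p ‖x‖) ∧
      (∀ r, 0 < r → 0 < p r ^ 2 + z r ^ 2) := by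
  have ha0 := brExp_pos n hδ
  set a := brExp n δ with ha
  set ω : Euc n := EuclideanSpace.single ⟨0, hn⟩ 1 with hω
  have hω1 : ‖ω‖ = 1 := by simp [hω]
  have hos := brKernel_oscSystem n hδ Complex.reCLM hω1
  refine ⟨_, _, hos, ?_, ?_⟩
  · intro x hx
    have hx0 : 0 < ‖x‖ := norm_pos_iff.2 hx
    have : brKernel n δ x = brKernel n δ (‖x‖ • ω) := by
      apply brKernel_radial
      rw [norm_smul, hω1, norm_norm, mul_one]
    rw [this, Real.rpow_neg hx0.le]
    simp only [Complex.reCLM_apply]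
    rw [inv_mul_cancel_left₀]
    positivity
  · intro s hs
    by_contra hneg
    push Not at hneg
    have hz : ∀ r ∈ Ioc 0 s, (brKernel n δ (r • ω)).re = 0 := by
      intro r hr
      have hm := hos.energy_mono ha0.le hr.1 hr.2
      have h2 : (r ^ a * (brKernel n δ (r • ω)).re) ^ 2 * r ^ (2 * a) ≤ 0 := by
        refine le_trans ?_ (hm.trans (mul_nonpos_of_nonpos_of_nonneg hneg (by positivity)))
        have := hr.1
        gcongr
        exact le_add_of_nonneg_right (sq_nonneg _)
      have hr0 := hr.1
      have h3 : (r ^ a * (brKernel n δ (r • ω)).re) ^ 2 = 0 := by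
        have : 0 < r ^ (2 * a) := by positivity
        nlinarith [sq_nonneg (r ^ a * (brKernel n δ (r • ω)).re)]
      have h4 := pow_eq_zero_iff (two_ne_zero) |>.1 h3
      rcases mul_eq_zero.1 h4 with h | h
      · exact absurd h (by positivity)
      · exact h
    have hc : Continuous fun r : ℝ => (brKernel n δ (r • ω)).re := by
      have := brKernel_continuous n hδ
      fun_prop
    have hpos : 0 < (fun r : ℝ => (brKernel n δ (r • ω)).re) 0 := by
      simpa using brKernel_zero_ne n hδ
    have hev := (hc.tendsto 0).eventually (lt_mem_nhds hpos)
    have hev2 : ∀ᶠ r in nhdsWithin (0:ℝ) (Ioi 0), 0 < (brKernel n δ (r • ω)).re :=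
      nhdsWithin_le_nhds hev
    obtain ⟨r, hr1, hr2⟩ := (hev2.and (Ioc_mem_nhdsGT hs)).exists
    rw [hz r hr2] at hr1
    exact lt_irrefl _ hr1

section
open scoped ContDiff
set_option maxSynthPendingDepth 3

/-! ### Derivatives of the kernel -/

lemma brKernel_fderiv_eq (n : ℕ) {δ : ℝ} (hδ : 0 < δ) :
    fderiv ℝ (brKernel n δ) = fun x => ContinuousLinearMap.smulRightL ℝ (Euc n) ℂ
      (innerSL ℝ x) ((-(2 * π ^ 2 / (δ + 1)) : ℝ) • brKernel n (δ + 1) x) := by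
  funext x
  rw [(brKernel_hasFDerivAt n hδ x).fderiv]
  ext v
  simp

lemma brKernel_contDiff_nat (n k : ℕ) : ∀ {δ : ℝ}, 0 < δ → ContDiff ℝ k (brKernel n δ) := by
  induction k with
  | zero => intro δ hδ; exact contDiff_zero.2 (brKernel_continuous n hδ)
  | succ k ih =>
    intro δ hδ
    have : ((k + 1 : ℕ) : WithTop ℕ∞) = (k : WithTop ℕ∞) + 1 := by norm_cast
    rw [this, contDiff_succ_iff_fderiv]
    refine ⟨fun x => (brKernel_hasFDerivAt n hδ x).differentiableAt, by simp, ?_⟩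
    rw [brKernel_fderiv_eq n hδ]
    have h1 := ih (δ := δ + 1) (by linarith)
    have h2 : ContDiff ℝ k fun x : Euc n => ContinuousLinearMap.smulRightL ℝ (Euc n) ℂ
        (innerSL ℝ x) :=
      (ContinuousLinearMap.contDiff _).comp (ContinuousLinearMap.contDiff (innerSL ℝ))
    exact h2.clm_apply (h1.const_smul _)

lemma brKernel_contDiff (n : ℕ) {δ : ℝ} (hδ : 0 < δ) : ContDiff ℝ ∞ (brKernel n δ) :=
  contDiff_infty.2 fun k => brKernel_contDiff_nat n k hδ

lemma norm_iteratedFDeriv_innerSL (n i : ℕ) :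
    ∃ C : ℝ, 0 ≤ C ∧ ∀ x : Euc n,
      ‖iteratedFDeriv ℝ i (fun x : Euc n => (innerSL ℝ x : Euc n →L[ℝ] ℝ)) x‖ ≤ C * (1 + ‖x‖) := by
  cases i with
  | zero =>
    refine ⟨1, zero_le_one, fun x => ?_⟩
    rw [norm_iteratedFDeriv_zero, innerSL_apply_norm]
    linarith [norm_nonneg x]
  | succ i =>
    set J : Euc n → (Euc n →L[ℝ] ℝ) := fun x => innerSL ℝ x with hJ
    have hf : fderiv ℝ J = fun _ => fderiv ℝ J 0 := by
      funext x
      have h : ∀ x, HasFDerivAt J (innerSL ℝ : Euc n →L[ℝ] Euc n →L[ℝ] ℝ) x := fun x =>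
        (innerSL ℝ : Euc n →L[ℝ] Euc n →L[ℝ] ℝ).hasFDerivAt
      rw [(h x).fderiv, (h 0).fderiv]
    refine ⟨‖fderiv ℝ J 0‖, norm_nonneg _, fun x => ?_⟩
    rw [← norm_iteratedFDeriv_fderiv, hf]
    have h1 : ‖fderiv ℝ J 0‖ ≤ ‖fderiv ℝ J 0‖ * (1 + ‖x‖) := by
      have := norm_nonneg x
      have := norm_nonneg (fderiv ℝ J 0)
      nlinarith
    cases i with
    | zero => rw [norm_iteratedFDeriv_zero]; exact h1
    | succ i =>
      rw [iteratedFDeriv_const_of_ne (by simp)]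
      simp only [Pi.zero_apply, norm_zero]
      positivity

/-- All derivatives of the kernel decay like the kernel itself: each differentiation produces
a factor of size `|x|`, but raises `δ` by one. -/
lemma brKernel_deriv_decay (n k : ℕ) : ∀ {δ : ℝ}, 0 < δ →
    ∃ C : ℝ, 0 ≤ C ∧ ∀ x : Euc n,
      ‖iteratedFDeriv ℝ k (brKernel n δ) x‖ ≤ C * (1 + ‖x‖) ^ (-brExp n δ) := by
  induction k using Nat.strong_induction_on with
  | _ k ih =>
  intro δ hδ
  cases k with
  | zero => simpa using brKernel_decay n hδ
  | succ k =>
    choose D hD0 hD using norm_iteratedFDeriv_innerSL n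
    have ih' : ∀ j, ∃ C : ℝ, 0 ≤ C ∧ (j ≤ k → ∀ x : Euc n,
      ‖iteratedFDeriv ℝ j (brKernel n (δ + 1)) x‖ ≤ C * (1 + ‖x‖) ^ (-brExp n (δ + 1))) := by
      intro j
      by_cases hj : j ≤ k
      · obtain ⟨C, h0, h⟩ := ih j (by omega) (δ := δ + 1) (by linarith)
        exact ⟨C, h0, fun _ => h⟩
      · exact ⟨0, le_rfl, fun h => absurd h hj⟩
    choose F hF0 hF using ih'
    set c : ℝ := -(2 * π ^ 2 / (δ + 1)) with hc
    set B : (Euc n →L[ℝ] ℝ) →L[ℝ] ℂ →L[ℝ] (Euc n →L[ℝ] ℂ) :=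
      ContinuousLinearMap.smulRightL ℝ (Euc n) ℂ with hB
    refine ⟨‖B‖ * ∑ i ∈ Finset.range (k + 1), (k.choose i : ℝ) * D i * (|c| * F (k - i)), ?_, ?_⟩
    · refine mul_nonneg (norm_nonneg _) (Finset.sum_nonneg fun i _ => ?_)
      have := hD0 i; have := hF0 (k - i); positivity
    intro x
    rw [← norm_iteratedFDeriv_fderiv, brKernel_fderiv_eq n hδ]
    have h1 : ContDiff ℝ k fun x : Euc n => c • brKernel n (δ + 1) x :=
      (brKernel_contDiff_nat n k (by linarith)).const_smul c
    have h2 : ContDiff ℝ k fun x : Euc n => (innerSL ℝ x : Euc n →L[ℝ] ℝ) :=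
      ContinuousLinearMap.contDiff (innerSL ℝ)
    refine (B.norm_iteratedFDeriv_le_of_bilinear h2 h1 x le_rfl).trans ?_
    rw [mul_assoc]
    gcongr
    rw [Finset.sum_mul]
    refine Finset.sum_le_sum fun i hi => ?_
    have hx1 : 0 < 1 + ‖x‖ := by positivity
    have h3 : ‖iteratedFDeriv ℝ (k - i) (fun x : Euc n => c • brKernel n (δ + 1) x) x‖ ≤
        |c| * F (k - i) * (1 + ‖x‖) ^ (-brExp n (δ + 1)) := by
      rw [iteratedFDeriv_const_smul_apply' (((brKernel_contDiff_nat n (k - i) (by linarith)).contDiffAt)),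
        norm_smul, Real.norm_eq_abs, mul_assoc]
      gcongr
      exact hF _ (by omega) x
    have h4 : (1 + ‖x‖) ^ (-brExp n δ) = (1 + ‖x‖) * (1 + ‖x‖) ^ (-brExp n (δ + 1)) := by
      have : -brExp n δ = 1 + -brExp n (δ + 1) := by unfold brExp; ring
      rw [this, Real.rpow_add hx1, Real.rpow_one]
    rw [h4]
    calc (k.choose i : ℝ) * _ * _ ≤ (k.choose i : ℝ) * (D i * (1 + ‖x‖)) *
          (|c| * F (k - i) * (1 + ‖x‖) ^ (-brExp n (δ + 1))) := by
          have := hD i x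
          have := hD0 i
          gcongr
      _ = _ := by ring

/-! ### Points at which the defining integral converges -/

/-- The kernel vanishes only on countably many spheres, which form a null set. -/
lemma brKernel_zeros_null {n : ℕ} (hn : 0 < n) {δ : ℝ} (hδ : 0 < δ) :
    volume {x : Euc n | brKernel n δ x = 0} = 0 := by
  have : Nonempty (Fin n) := ⟨⟨0, hn⟩⟩
  obtain ⟨p, z, hos, hK, hE⟩ := brKernel_profile hn hδ
  set Z : Set ℝ := {r | 0 < r ∧ p r = 0} with hZ
  have hcount : Z.Countable := by
    have hiso : ∀ r ∈ Z, ∃ U ∈ nhds r, U ∩ Z ⊆ {r} := by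
      intro r hr
      have hz : z r ≠ 0 := by
        intro h
        have := hE r hr.1
        rw [hr.2, h] at this
        simp at this
      have hd := hos.hp r hr.1
      have hne := hd.eventually_ne (c := 0) (by rw [hr.2]; simp [hz, Real.pi_ne_zero])
      rw [eventually_nhdsWithin_iff] at hne
      refine ⟨_, hne, fun s hs => ?_⟩
      by_contra hsr
      exact hs.1 hsr hs.2.2
    have : DiscreteTopology Z := by
      refine discreteTopology_subtype_iff'.2 fun r hr => ?_
      obtain ⟨U, hU, hUZ⟩ := hiso r hr
      obtain ⟨V, hVU, hVo, hrV⟩ := mem_nhds_iff.1 hU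
      refine ⟨V, hVo, Subset.antisymm (fun s hs => hUZ ⟨hVU hs.1, hs.2⟩) ?_⟩
      rintro s rfl
      exact ⟨hrV, hr⟩
    have := TopologicalSpace.separableSpace_iff_countable.1 (inferInstance : TopologicalSpace.SeparableSpace Z)
    exact Set.countable_coe_iff.1 this
  have hsub : {x : Euc n | brKernel n δ x = 0} ⊆ {0} ∪ ⋃ r ∈ Z, Metric.sphere 0 r := by
    intro x hx
    by_cases h0 : x = 0
    · left; exact h0
    · right
      have hxp : 0 < ‖x‖ := norm_pos_iff.2 h0
      have h1 := hK x h0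
      rw [hx] at h1
      simp only [Complex.zero_re] at h1
      have h2 : p ‖x‖ = 0 := by
        rcases mul_eq_zero.1 h1.symm with h | h
        · exact absurd h (by positivity)
        · exact h
      simp only [mem_iUnion]
      exact ⟨‖x‖, ⟨hxp, h2⟩, by simp⟩
  refine measure_mono_null hsub ?_
  refine measure_union_null (by simp) ?_
  rw [measure_biUnion_null_iff hcount]
  intro r hr
  exact Measure.addHaar_sphere _ _ _

open Filter Topology in
/-- If `k₁ f` and `k₂ f` are integrable then so is `W f` on any set on which the weight `W` is
dominated by `|k₁| + |k₂|`. Measurability of `f` is part of the conclusion: `f` is recovered as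
`(k̄₁ (k₁ f) + k̄₂ (k₂ f)) / (|k₁|² + |k₂|²)`. -/
lemma integrableOn_of_two {n : ℕ} {k₁ k₂ : Euc n → ℂ} (hk₁ : Measurable k₁) (hk₂ : Measurable k₂)
    {W : Euc n → ℝ} (hW : Measurable W) (hW0 : ∀ y, 0 < W y) {f : Euc n → ℂ}
    (h₁ : Integrable fun y => k₁ y * f y) (h₂ : Integrable fun y => k₂ y * f y)
    {U : Set (Euc n)} (hU : MeasurableSet U) {c : ℝ} (hc : 0 < c)
    (hcU : ∀ y ∈ U, c * W y ≤ ‖k₁ y‖ + ‖k₂ y‖) :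
    IntegrableOn (fun y => W y • f y) U := by
  set Q : Euc n → ℝ := fun y => ‖k₁ y‖ ^ 2 + ‖k₂ y‖ ^ 2 with hQ
  have hQm : Measurable Q := by fun_prop
  have key : ∀ k : Euc n → ℂ, Measurable k → (∀ y, ‖k y‖ ≤ ‖k₁ y‖ + ‖k₂ y‖) →
      Integrable (fun y => k y * f y) →
      IntegrableOn (fun y => ((W y / Q y : ℝ) : ℂ) * (starRingEnd ℂ) (k y) * (k y * f y)) U := by
    intro k hk hle hi
    refine Integrable.bdd_mul (c := 2 / c) hi.integrableOn ?_ ?_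
    · have : Measurable fun y => ((W y / Q y : ℝ) : ℂ) * (starRingEnd ℂ) (k y) :=
        (Complex.measurable_ofReal.comp (hW.div hQm)).mul
          (Complex.continuous_conj.measurable.comp hk)
      exact this.aestronglyMeasurable
    · filter_upwards [ae_restrict_mem hU] with y hy
      have h := hcU y hy
      have hw := hW0 y
      set s := ‖k₁ y‖ + ‖k₂ y‖ with hs
      have hsp : 0 < s := lt_of_lt_of_le (by positivity) h
      have hQs : s ^ 2 / 2 ≤ Q y := by
        simp only [hQ, hs]; nlinarith [sq_nonneg (‖k₁ y‖ - ‖k₂ y‖)]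
      rw [norm_mul, Complex.norm_conj, Complex.norm_real, Real.norm_eq_abs,
        abs_of_nonneg (by positivity)]
      calc W y / Q y * ‖k y‖ ≤ W y / (s ^ 2 / 2) * s := by
            gcongr
            exact hle y
        _ = 2 * W y / s := by field_simp
        _ ≤ 2 / c := by
            rw [div_le_div_iff₀ hsp hc]; nlinarith
  have h := (key k₁ hk₁ (fun y => by linarith [norm_nonneg (k₂ y)]) h₁).add
    (key k₂ hk₂ (fun y => by linarith [norm_nonneg (k₁ y)]) h₂)
  refine h.congr ?_
  filter_upwards [ae_restrict_mem hU] with y hy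
  have h := hcU y hy
  have hw := hW0 y
  have hsp : 0 < ‖k₁ y‖ + ‖k₂ y‖ := lt_of_lt_of_le (by positivity) h
  have hQ0 : Q y ≠ 0 := by
    simp only [hQ]; nlinarith [sq_nonneg (‖k₁ y‖ - ‖k₂ y‖)]
  have hQ1 : ((Q y : ℝ) : ℂ) =
      (starRingEnd ℂ) (k₁ y) * k₁ y + (starRingEnd ℂ) (k₂ y) * k₂ y := by
    simp only [hQ]; push_cast
    rw [← Complex.normSq_eq_conj_mul_self, ← Complex.normSq_eq_conj_mul_self,
      Complex.normSq_eq_norm_sq, Complex.normSq_eq_norm_sq]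
    push_cast; ring
  have hQ2 : ((Q y : ℝ) : ℂ) ≠ 0 := by exact_mod_cast hQ0
  simp only [Pi.add_apply, Complex.real_smul]
  have : ((W y / Q y : ℝ) : ℂ) * (starRingEnd ℂ) (k₁ y) * (k₁ y * f y) +
      ((W y / Q y : ℝ) : ℂ) * (starRingEnd ℂ) (k₂ y) * (k₂ y * f y) =
      ((W y / Q y : ℝ) : ℂ) * ((Q y : ℝ) : ℂ) * f y := by rw [hQ1]; ring
  rw [this]; push_cast; field_simp

lemma null_hyperplane {n : ℕ} {θ : Euc n} (hθ : ‖θ‖ = 1) (c : ℝ) :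
    volume {x : Euc n | inner ℝ x θ = c} = 0 := by
  have hne : (LinearMap.ker (innerSL ℝ θ).toLinearMap) ≠ ⊤ := by
    intro h
    have : θ ∈ LinearMap.ker (innerSL ℝ θ).toLinearMap := by rw [h]; trivial
    have h2 : inner ℝ θ θ = (0 : ℝ) := this
    rw [real_inner_self_eq_norm_sq, hθ] at h2
    norm_num at h2
  have h0 := Measure.addHaar_submodule (volume : Measure (Euc n)) _ hne
  have : {x : Euc n | inner ℝ x θ = c} =
      (fun x => x + (-(c • θ))) ⁻¹' (LinearMap.ker (innerSL ℝ θ).toLinearMap : Set (Euc n)) := by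
    ext x
    have : x + -(c • θ) ∈ (LinearMap.ker (innerSL ℝ θ).toLinearMap : Set (Euc n)) ↔
      inner ℝ θ (x + -(c • θ)) = (0 : ℝ) := Iff.rfl
    rw [mem_preimage, this, inner_add_right, inner_neg_right, inner_smul_right,
      real_inner_self_eq_norm_sq, hθ, real_inner_comm]
    simp only [mem_ofPred_eq]
    constructor <;> intro h <;> linarith
  rw [this, measure_preimage_add_right, h0]

/-- A set of positive measure contains two points whose difference is not resonant in the
direction `θ`. -/
lemma exists_nonresonant {n : ℕ} {S : Set (Euc n)} (hS : volume S ≠ 0) {θ : Euc n}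
    (hθ : ‖θ‖ = 1) : ∃ x ∈ S, ∃ x' ∈ S, Real.sin (2 * π * inner ℝ (x - x') θ) ≠ 0 := by
  by_contra hcon
  push Not at hcon
  have hne : S.Nonempty := by
    rw [nonempty_iff_ne_empty]; rintro rfl; simp at hS
  obtain ⟨x₀, hx₀⟩ := hne
  apply hS
  have hsub : S ⊆ ⋃ k : ℤ, {x : Euc n | inner ℝ x θ = inner ℝ x₀ θ + (k : ℝ) / 2} := by
    intro x hx
    have h := hcon x hx x₀ hx₀
    rw [Real.sin_eq_zero_iff] at h
    obtain ⟨k, hk⟩ := h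
    refine mem_iUnion.2 ⟨k, ?_⟩
    rw [inner_sub_left] at hk
    have hpi := Real.pi_pos
    have : (k : ℝ) = 2 * (inner ℝ x θ - inner ℝ x₀ θ) := by
      apply mul_right_cancel₀ hpi.ne'; linarith
    simp only [mem_ofPred_eq]; linarith
  refine measure_mono_null hsub (measure_iUnion_null fun k => null_hyperplane hθ _)

/-- First order expansion of `|x - y|` as `|y| → ∞`. -/
lemma norm_sub_expansion {n : ℕ} (x y : Euc n) (hy : ‖x‖ < ‖y‖) :
    |‖x - y‖ - (‖y‖ - inner ℝ x (‖y‖⁻¹ • y))| ≤ ‖x‖ ^ 2 / (‖y‖ - ‖x‖) := by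
  have hy0 : 0 < ‖y‖ := (norm_nonneg x).trans_lt hy
  set i := inner ℝ x (‖y‖⁻¹ • y) with hi
  have hi1 : |i| ≤ ‖x‖ := by
    have := abs_real_inner_le_norm x (‖y‖⁻¹ • y)
    rwa [norm_smul, norm_inv, norm_norm, inv_mul_cancel₀ hy0.ne', mul_one] at this
  have hxy : inner ℝ x y = ‖y‖ * i := by
    rw [hi, inner_smul_right]; field_simp
  have hsq : ‖x - y‖ ^ 2 = ‖x‖ ^ 2 - 2 * (‖y‖ * i) + ‖y‖ ^ 2 := by
    rw [norm_sub_sq_real, hxy]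
  have hr : ‖y‖ - ‖x‖ ≤ ‖x - y‖ := by
    have := norm_sub_norm_le y x; rwa [norm_sub_rev] at this
  have hd : 0 < ‖y‖ - ‖x‖ := by linarith
  rw [le_div_iff₀ hd]
  have habs := abs_le.1 hi1
  have hpos : 0 ≤ ‖y‖ - i := by linarith
  calc |‖x - y‖ - (‖y‖ - i)| * (‖y‖ - ‖x‖)
      ≤ |‖x - y‖ - (‖y‖ - i)| * (‖x - y‖ + (‖y‖ - i)) := by gcongr; linarith
    _ = |(‖x - y‖ - (‖y‖ - i)) * (‖x - y‖ + (‖y‖ - i))| := by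
        rw [abs_mul, abs_of_nonneg (a := ‖x - y‖ + (‖y‖ - i)) (by positivity)]
    _ = |‖x‖ ^ 2 - i ^ 2| := by congr 1; nlinarith
    _ ≤ ‖x‖ ^ 2 := by
        have : i ^ 2 ≤ ‖x‖ ^ 2 := sq_le_sq' (by linarith) (by linarith)
        rw [abs_of_nonneg (by linarith)]; nlinarith [sq_nonneg i]

open Filter Topology in
lemma tendsto_norm_sub_sub {n : ℕ} (x x' θ : Euc n) :
    Tendsto (fun y : Euc n => ‖x - y‖ - ‖x' - y‖)
      (comap norm atTop ⊓ comap (fun y : Euc n => ‖y‖⁻¹ • y) (𝓝 θ))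
      (𝓝 (-inner ℝ (x - x') θ)) := by
  set L : Filter (Euc n) := comap norm atTop ⊓ comap (fun y : Euc n => ‖y‖⁻¹ • y) (𝓝 θ)
  have hn : Tendsto (fun y : Euc n => ‖y‖) L atTop := tendsto_comap.mono_left inf_le_left
  have hθ : Tendsto (fun y : Euc n => ‖y‖⁻¹ • y) L (𝓝 θ) := tendsto_comap.mono_left inf_le_right
  have h : ∀ v : Euc n,
      Tendsto (fun y : Euc n => ‖v - y‖ - (‖y‖ - inner ℝ v (‖y‖⁻¹ • y))) L (𝓝 0) := by
    intro v
    have hb : Tendsto (fun y : Euc n => ‖v‖ ^ 2 / (‖y‖ - ‖v‖)) L (𝓝 0) :=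
      Tendsto.div_atTop tendsto_const_nhds (tendsto_atTop_add_const_right _ _ hn)
    refine squeeze_zero_norm' ?_ hb
    filter_upwards [hn.eventually_gt_atTop ‖v‖] with y hy
    exact norm_sub_expansion v y hy
  have hi : Tendsto (fun y : Euc n => inner ℝ (x - x') (‖y‖⁻¹ • y)) L
      (𝓝 (inner ℝ (x - x') θ)) := tendsto_const_nhds.inner hθ
  have := ((h x).sub (h x')).sub hi
  refine (this.congr fun y => ?_).trans (by simp)
  rw [inner_sub_left]; ring

set_option maxHeartbeats 800000 in
/-- Far away in a direction where `x - x'` is not resonant, the translated kernels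
`K(x - ·)` and `K(x' - ·)` are not simultaneously small compared with the weight. -/
lemma brKernel_pair_lower {n : ℕ} (hn : 0 < n) {δ : ℝ} (hδ : 0 < δ) {x x' θ : Euc n}
    (hs : Real.sin (2 * π * inner ℝ (x - x') θ) ≠ 0) :
    ∃ c : ℝ, 0 < c ∧ ∃ ρ : ℝ, ∃ V : Set (Euc n), IsOpen V ∧ θ ∈ V ∧
      ∀ y : Euc n, ρ < ‖y‖ → ‖y‖⁻¹ • y ∈ V →
        c * (1 + ‖y‖) ^ (-brExp n δ) ≤ ‖brKernel n δ (x - y)‖ + ‖brKernel n δ (x' - y)‖ := by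
  obtain ⟨p, z, hos, hK, hE⟩ := brKernel_profile hn hδ
  set a := brExp n δ with ha
  have hapos : 0 < a := brExp_pos n hδ
  set E₀ := p a ^ 2 + z a ^ 2 with hE₀
  have hE₀pos : 0 < E₀ := hE a hapos
  set ε : ℝ := Real.sqrt (E₀ / (4 * Real.exp 1)) with hε
  have hεpos : 0 < ε := Real.sqrt_pos.2 (by positivity)
  set B : ℝ := 2 * Real.sqrt (4 * Real.exp 1 * E₀) with hB
  have hBpos : 0 < B := by positivity
  have hupper : ∀ t, a ≤ t → |p t| + |z t| ≤ B := by
    intro t ht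
    have h := (hos.energy_comparable hapos.le hapos le_rfl ht).1
    have h1 : |p t| ≤ Real.sqrt (4 * Real.exp 1 * E₀) :=
      Real.abs_le_sqrt (by nlinarith [sq_nonneg (z t)])
    have h2 : |z t| ≤ Real.sqrt (4 * Real.exp 1 * E₀) :=
      Real.abs_le_sqrt (by nlinarith [sq_nonneg (p t)])
    rw [hB]; linarith
  have hlower : ∀ t, a ≤ t → ε ≤ |p t| + |z t| := by
    intro t ht
    have h := (hos.energy_comparable hapos.le hapos le_rfl ht).2
    rw [hε]
    refine Real.sqrt_le_iff.2 ⟨by positivity, ?_⟩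
    rw [div_le_iff₀ (by positivity)]
    have h3 : p t ^ 2 + z t ^ 2 ≤ (|p t| + |z t|) ^ 2 := by
      rw [← sq_abs (p t), ← sq_abs (z t)]
      nlinarith [abs_nonneg (p t), abs_nonneg (z t),
        mul_nonneg (abs_nonneg (p t)) (abs_nonneg (z t))]
    have he := Real.exp_pos 1
    calc E₀ ≤ 4 * Real.exp 1 * (p t ^ 2 + z t ^ 2) := h
      _ ≤ 4 * Real.exp 1 * (|p t| + |z t|) ^ 2 := by gcongr
      _ = _ := by ring
  set σ := |Real.sin (2 * π * inner ℝ (x - x') θ)| / 2 with hσ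
  have hσpos : 0 < σ := by have := abs_pos.2 hs; positivity
  have hσ1 : σ ≤ 1 := by
    have := Real.abs_sin_le_one (2 * π * inner ℝ (x - x') θ); rw [hσ]; linarith
  -- far out, the phase difference is non-resonant
  have hT := tendsto_norm_sub_sub x x' θ
  have hT2 : Filter.Tendsto (fun y : Euc n => |Real.sin (2 * π * (‖x - y‖ - ‖x' - y‖))|)
      (Filter.comap norm Filter.atTop ⊓ Filter.comap (fun y : Euc n => ‖y‖⁻¹ • y) (nhds θ))
      (nhds |Real.sin (2 * π * -inner ℝ (x - x') θ)|) :=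
    ((Real.continuous_sin.tendsto _).comp (hT.const_mul (2 * π))).abs
  rw [mul_neg, Real.sin_neg, abs_neg] at hT2
  have hev := hT2.eventually_const_lt (u := σ) (by rw [hσ]; have := abs_pos.2 hs; linarith)
  rw [Filter.eventually_iff, Filter.mem_inf_iff] at hev
  obtain ⟨s₁, ⟨u, hu, hus⟩, s₂, ⟨V', hVnhds, hVs⟩, hst⟩ := hev
  obtain ⟨ρ₁, hρ₁⟩ := Filter.mem_atTop_sets.1 hu
  obtain ⟨V, hVV, hVo, hθV⟩ := mem_nhds_iff.1 hVnhds
  -- base radius making the transport error small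
  set r₀ : ℝ := a + a * B * ‖x - x'‖ * 2 / (σ * ε) with hr₀
  have hr₀a : a ≤ r₀ := by rw [hr₀]; have : 0 ≤ a * B * ‖x - x'‖ * 2 / (σ * ε) := by positivity
                           linarith
  have hr₀pos : 0 < r₀ := hapos.trans_le hr₀a
  have herr : a / r₀ * B * ‖x - x'‖ ≤ σ * ε / 2 := by
    rw [div_mul_eq_mul_div, div_mul_eq_mul_div, div_le_iff₀ hr₀pos, hr₀]
    have : σ * ε / 2 * (a + a * B * ‖x - x'‖ * 2 / (σ * ε)) =
        σ * ε / 2 * a + a * B * ‖x - x'‖ := by field_simp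
    rw [this]
    have : 0 ≤ σ * ε / 2 * a := by positivity
    linarith
  set M := (1 + ‖x‖) * (1 + ‖x'‖) with hM
  have hMpos : 0 < M := by positivity
  refine ⟨M ^ (-a) * (σ * ε / 4), by positivity, max ρ₁ (r₀ + ‖x‖ + ‖x'‖), V, hVo, hθV, ?_⟩
  intro y hy hyV
  have hy1 : ρ₁ < ‖y‖ := (le_max_left _ _).trans_lt hy
  have hy2 : r₀ + ‖x‖ + ‖x'‖ < ‖y‖ := (le_max_right _ _).trans_lt hy
  have hsin : σ < |Real.sin (2 * π * (‖x - y‖ - ‖x' - y‖))| := by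
    have : y ∈ s₁ ∩ s₂ := ⟨hus (hρ₁ _ hy1.le), hVs (hVV hyV)⟩
    rw [← hst] at this
    exact this
  set r₁ := ‖x - y‖ with hr₁
  set r₂ := ‖x' - y‖ with hr₂
  have hr₁₀ : r₀ ≤ r₁ := by
    have := norm_sub_norm_le y x; rw [norm_sub_rev] at this
    linarith [norm_nonneg x']
  have hr₂₀ : r₀ ≤ r₂ := by
    have := norm_sub_norm_le y x'; rw [norm_sub_rev] at this
    linarith [norm_nonneg x]
  have hdiff : |r₁ - r₂| ≤ ‖x - x'‖ := by
    have := abs_norm_sub_norm_le (x - y) (x' - y)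
    rwa [sub_sub_sub_cancel_right] at this
  have htr := hos.transport hapos.le hr₀pos (fun t ht => hupper t (hr₀a.trans ht)) hr₂₀ hr₁₀
  have htr2 : |p r₁ - (p r₂ * Real.cos (2 * π * (r₁ - r₂)) - z r₂ * Real.sin (2 * π * (r₁ - r₂)))|
      ≤ σ * ε / 2 := htr.trans (le_trans (by gcongr) herr)
  have hz : |z r₂| * σ ≤ |p r₁| + |p r₂| + σ * ε / 2 := by
    have h1 : |z r₂ * Real.sin (2 * π * (r₁ - r₂))| ≤ |p r₁| + |p r₂| + σ * ε / 2 := by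
      have hc : |p r₂ * Real.cos (2 * π * (r₁ - r₂))| ≤ |p r₂| := by
        rw [abs_mul]
        exact mul_le_of_le_one_right (abs_nonneg _) (Real.abs_cos_le_one _)
      have := abs_le.1 htr2
      have := abs_le.1 hc
      have := neg_abs_le (p r₁)
      have := le_abs_self (p r₁)
      rw [abs_le]
      constructor <;> linarith
    rw [abs_mul] at h1
    refine le_trans ?_ h1
    gcongr
  have hl := hlower r₂ (hr₀a.trans hr₂₀)
  have hp2 : |p r₂| * σ ≤ |p r₂| := mul_le_of_le_one_right (abs_nonneg _) hσ1
  have hsum : σ * ε / 4 ≤ |p r₁| + |p r₂| := by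
    have := mul_le_mul_of_nonneg_left hl hσpos.le
    have := abs_nonneg (p r₁)
    nlinarith
  have hk : ∀ v : Euc n, 1 + ‖v‖ ≤ M → r₀ ≤ ‖v - y‖ →
      M ^ (-a) * (1 + ‖y‖) ^ (-a) * |p ‖v - y‖| ≤ ‖brKernel n δ (v - y)‖ := by
    intro v hv hvr
    have hpos : 0 < ‖v - y‖ := hr₀pos.trans_le hvr
    have h1 := hK (v - y) (norm_pos_iff.1 hpos)
    refine le_trans ?_ (Complex.abs_re_le_norm _)
    rw [h1, abs_mul, abs_of_pos (Real.rpow_pos_of_pos hpos _),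
      ← Real.mul_rpow hMpos.le (by positivity)]
    refine mul_le_mul_of_nonneg_right ?_ (abs_nonneg _)
    refine Real.rpow_le_rpow_of_nonpos hpos ?_ (by linarith)
    have h2 := norm_sub_le v y
    have h3 : (1 + ‖v‖) * (1 + ‖y‖) ≤ M * (1 + ‖y‖) := by gcongr
    nlinarith [norm_nonneg v, norm_nonneg y, mul_nonneg (norm_nonneg v) (norm_nonneg y)]
  have hxx : 0 ≤ ‖x‖ * ‖x'‖ := by positivity
  have hk1 := hk x (by rw [hM]; nlinarith [norm_nonneg x, norm_nonneg x']) hr₁₀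
  have hk2 := hk x' (by rw [hM]; nlinarith [norm_nonneg x, norm_nonneg x']) hr₂₀
  have hfac : 0 ≤ M ^ (-a) * (1 + ‖y‖) ^ (-a) := by positivity
  calc M ^ (-a) * (σ * ε / 4) * (1 + ‖y‖) ^ (-a)
      = M ^ (-a) * (1 + ‖y‖) ^ (-a) * (σ * ε / 4) := by ring
    _ ≤ M ^ (-a) * (1 + ‖y‖) ^ (-a) * (|p r₁| + |p r₂|) := by gcongr
    _ ≤ _ := by rw [mul_add]; exact add_le_add hk1 hk2

open Filter Topology in
/-- Either the integral defining `K * f` diverges almost everywhere, or `f` is integrable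
against the weight `(1 + |y|)^{-a}`, the true size of the kernel at infinity. -/
lemma integrable_dichotomy {n : ℕ} (hn : 0 < n) {δ : ℝ} (hδ : 0 < δ) (f : Euc n → ℂ) :
    (∀ᵐ x : Euc n, ¬ Integrable fun y => brKernel n δ (x - y) * f y) ∨
      Integrable fun y : Euc n => (1 + ‖y‖) ^ (-brExp n δ) • f y := by
  set S : Set (Euc n) := {x | Integrable fun y => brKernel n δ (x - y) * f y} with hS
  by_cases hS0 : volume S = 0
  · left
    rw [ae_iff]
    simpa using hS0
  right
  have hKc := brKernel_continuous n hδ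
  have hKm : ∀ x : Euc n, Measurable fun y => brKernel n δ (x - y) := fun x =>
    (hKc.comp (continuous_const.sub continuous_id)).measurable
  set W : Euc n → ℝ := fun y => (1 + ‖y‖) ^ (-brExp n δ) with hW
  have hWc : Continuous W := by
    refine Continuous.rpow_const (by fun_prop) fun y => Or.inl ?_
    positivity
  have hW0 : ∀ y, 0 < W y := fun y => by positivity
  have hW1 : ∀ y, W y ≤ 1 := fun y =>
    Real.rpow_le_one_of_one_le_of_nonpos (by linarith [norm_nonneg y])
      (by linarith [brExp_pos n hδ])
  have hloc : LocallyIntegrable (fun y => W y • f y) volume := by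
    intro y₀
    -- some point of `S` sees `y₀` with a non-zero kernel
    have hex : ∃ x ∈ S, brKernel n δ (x - y₀) ≠ 0 := by
      by_contra hcon
      push Not at hcon
      apply hS0
      refine measure_mono_null (t := (fun x => x + -y₀) ⁻¹' {x | brKernel n δ x = 0}) ?_ ?_
      · intro x hx
        simpa [sub_eq_add_neg] using hcon x hx
      · rw [measure_preimage_add_right]; exact brKernel_zeros_null hn hδ
    obtain ⟨x, hx, hne⟩ := hex
    have hc : Continuous fun y => ‖brKernel n δ (x - y)‖ :=
      (hKc.comp (continuous_const.sub continuous_id)).norm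
    have hev : ∀ᶠ y in 𝓝 y₀, ‖brKernel n δ (x - y₀)‖ / 2 < ‖brKernel n δ (x - y)‖ :=
      (hc.tendsto y₀).eventually_const_lt (by have := norm_pos_iff.2 hne; linarith)
    obtain ⟨U, hUs, hUo, hyU⟩ := mem_nhds_iff.1 hev
    refine ⟨U, hUo.mem_nhds hyU, ?_⟩
    have hcp : 0 < ‖brKernel n δ (x - y₀)‖ / 2 := by have := norm_pos_iff.2 hne; linarith
    refine integrableOn_of_two (hKm x) (hKm x) hWc.measurable hW0 hx hx hUo.measurableSet hcp ?_
    intro y hy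
    have h1 := hUs hy
    simp only [mem_ofPred_eq] at h1
    have := mul_le_of_le_one_right hcp.le (hW1 y)
    linarith [norm_nonneg (brKernel n δ (x - y))]
  have hinf : ∃ ρ : ℝ, IntegrableOn (fun y => W y • f y)
      {y | ρ < ‖y‖ ∧ ‖y‖⁻¹ • y ∈ Metric.sphere (0 : Euc n) 1} := by
    refine (isCompact_sphere (0 : Euc n) 1).induction_on
      (p := fun s => ∃ ρ : ℝ, IntegrableOn (fun y => W y • f y) {y | ρ < ‖y‖ ∧ ‖y‖⁻¹ • y ∈ s})
      ?_ ?_ ?_ ?_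
    · exact ⟨0, by simp⟩
    · rintro s t hst ⟨ρ, h⟩
      exact ⟨ρ, h.mono_set fun y hy => ⟨hy.1, hst hy.2⟩⟩
    · rintro s t ⟨ρ, h⟩ ⟨ρ', h'⟩
      refine ⟨max ρ ρ', (h.union h').mono_set ?_⟩
      rintro y ⟨hy, hs | ht⟩
      · exact Or.inl ⟨(le_max_left _ _).trans_lt hy, hs⟩
      · exact Or.inr ⟨(le_max_right _ _).trans_lt hy, ht⟩
    · intro θ hθ
      have hθ1 : ‖θ‖ = 1 := by simpa using hθ
      obtain ⟨x, hx, x', hx', hsin⟩ := exists_nonresonant hS0 hθ1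
      obtain ⟨c, hc, ρ, V, hVo, hθV, hV⟩ := brKernel_pair_lower hn hδ hsin
      refine ⟨V, mem_nhdsWithin_of_mem_nhds (hVo.mem_nhds hθV), ρ, ?_⟩
      refine integrableOn_of_two (hKm x) (hKm x') hWc.measurable hW0 hx hx' ?_ hc
        fun y hy => hV y hy.1 hy.2
      have hm : Measurable fun y : Euc n => ‖y‖⁻¹ • y := by fun_prop
      exact (measurableSet_lt measurable_const measurable_norm).inter (hm hVo.measurableSet)
  obtain ⟨ρ, hρ⟩ := hinf
  have hcomp := hloc.integrableOn_isCompact (isCompact_closedBall (0 : Euc n) (max ρ 0))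
  rw [← integrableOn_univ]
  refine (hcomp.union hρ).mono_set fun y _ => ?_
  by_cases hy : ‖y‖ ≤ max ρ 0
  · left; simpa using hy
  · right
    push Not at hy
    refine ⟨(le_max_left _ _).trans_lt hy, ?_⟩
    have h0 : 0 < ‖y‖ := (le_max_right _ _).trans_lt hy
    simp [norm_smul, h0.ne']

/-! ### Coordinate derivatives and iterated Fréchet derivatives -/

/-- The iterated partial derivative along a word of coordinate indices. -/
def wordDeriv {n : ℕ} (L : List (Fin n)) (f : Euc n → ℂ) : Euc n → ℂ :=
  L.foldr pderiv' f

lemma wordDeriv_append {n : ℕ} (L L' : List (Fin n)) (f : Euc n → ℂ) :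
    wordDeriv (L ++ L') f = wordDeriv L (wordDeriv L' f) := by
  simp [wordDeriv]

lemma wordDeriv_replicate {n : ℕ} (k : ℕ) (i : Fin n) (f : Euc n → ℂ) :
    wordDeriv (List.replicate k i) f = (pderiv' i)^[k] f := by
  induction k with
  | zero => rfl
  | succ k ih =>
    rw [List.replicate_succ, Function.iterate_succ_apply', ← ih]; rfl

lemma wordDeriv_flatMap {n : ℕ} (α : Fin n → ℕ) (M : List (Fin n)) (f : Euc n → ℂ) :
    wordDeriv (M.flatMap fun i => List.replicate (α i) i) f =
      ((M.map fun i => (pderiv' i)^[α i]).foldr (· ∘ ·) id) f := by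
  induction M with
  | nil => rfl
  | cons i M ih =>
    rw [List.flatMap_cons, wordDeriv_append, ih, wordDeriv_replicate]; rfl

/-- The sorted word spelling the multi-index `α`. -/
def multiWord {n : ℕ} (α : Fin n → ℕ) : List (Fin n) :=
  (List.finRange n).flatMap fun i => List.replicate (α i) i

lemma mderiv_eq_wordDeriv {n : ℕ} (α : Fin n → ℕ) (f : Euc n → ℂ) :
    mderiv α f = wordDeriv (multiWord α) f :=
  (wordDeriv_flatMap α _ f).symm

lemma length_multiWord {n : ℕ} (α : Fin n → ℕ) : (multiWord α).length = ∑ i, α i := by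
  simp [multiWord, List.length_flatMap, Fin.sum_univ_def]

lemma perm_multiWord {n : ℕ} (L : List (Fin n)) : L.Perm (multiWord fun i => L.count i) := by
  rw [List.perm_iff_count]
  intro a
  rw [multiWord, List.count_flatMap, ← Fin.sum_univ_def]
  simp [List.count_replicate]

lemma contDiff_pderiv {n : ℕ} {f : Euc n → ℂ} (hf : ContDiff ℝ ∞ f) (i : Fin n) :
    ContDiff ℝ ∞ (pderiv' i f) :=
  (hf.fderiv_right (m := ∞) (by simp)).clm_apply contDiff_const

lemma contDiff_wordDeriv {n : ℕ} {f : Euc n → ℂ} (hf : ContDiff ℝ ∞ f) (L : List (Fin n)) :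
    ContDiff ℝ ∞ (wordDeriv L f) := by
  induction L with
  | nil => exact hf
  | cons i L ih => exact contDiff_pderiv ih i

lemma pderiv_comm {n : ℕ} {f : Euc n → ℂ} (hf : ContDiff ℝ ∞ f) (i j : Fin n) :
    pderiv' i (pderiv' j f) = pderiv' j (pderiv' i f) := by
  have hd : Differentiable ℝ (fderiv ℝ f) :=
    (hf.fderiv_right (m := ∞) (by simp)).differentiable (by simp)
  have h : ∀ i j : Fin n, ∀ x, pderiv' i (pderiv' j f) x =
      fderiv ℝ (fderiv ℝ f) x (EuclideanSpace.single i 1) (EuclideanSpace.single j 1) := by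
    intro i j x
    unfold pderiv'
    rw [fderiv_clm_apply (hd x) (by fun_prop)]
    simp
  funext x
  rw [h, h]
  exact ((contDiff_infty.1 hf 2).contDiffAt.isSymmSndFDerivAt (by simp)) _ _

lemma wordDeriv_perm {n : ℕ} {f : Euc n → ℂ} (hf : ContDiff ℝ ∞ f) {L L' : List (Fin n)}
    (h : L.Perm L') : wordDeriv L f = wordDeriv L' f := by
  induction h with
  | nil => rfl
  | cons i _ ih => exact congrArg (pderiv' i) ih
  | swap i j L => exact pderiv_comm (contDiff_wordDeriv hf L) j i
  | trans _ _ h₁ h₂ => exact h₁.trans h₂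

lemma wordDeriv_ofFn {n : ℕ} {f : Euc n → ℂ} (hf : ContDiff ℝ ∞ f) (k : ℕ) :
    ∀ (j : Fin k → Fin n) (x : Euc n), wordDeriv (List.ofFn j) f x =
      iteratedFDeriv ℝ k f x fun i => EuclideanSpace.single (j i) 1 := by
  induction k with
  | zero => intro j x; simp [wordDeriv]
  | succ k ih =>
    intro j x
    rw [List.ofFn_succ, iteratedFDeriv_succ_apply_left]
    have h1 : wordDeriv (List.ofFn fun i : Fin k => j i.succ) f =
        fun y => iteratedFDeriv ℝ k f y fun i => EuclideanSpace.single (j i.succ) 1 := by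
      funext y; exact ih _ y
    have h2 : DifferentiableAt ℝ (iteratedFDeriv ℝ k f) x :=
      (hf.differentiable_iteratedFDeriv (by exact_mod_cast ENat.natCast_lt_top k)) x
    change fderiv ℝ (wordDeriv (List.ofFn fun i : Fin k => j i.succ) f) x _ = _
    rw [h1]
    have h3 := ((ContinuousMultilinearMap.apply ℝ (fun _ : Fin k => Euc n) ℂ
      (fun i => EuclideanSpace.single (j i.succ) 1)).hasFDerivAt.comp x h2.hasFDerivAt).fderiv
    change fderiv ℝ (fun y => iteratedFDeriv ℝ k f y fun i =>
      EuclideanSpace.single (j i.succ) 1) x = _ at h3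
    rw [h3]; rfl

lemma norm_mderiv_le {n : ℕ} {f : Euc n → ℂ} (hf : ContDiff ℝ ∞ f) (α : Fin n → ℕ) (x : Euc n) :
    ‖mderiv α f x‖ ≤ ‖iteratedFDeriv ℝ (∑ i, α i) f x‖ := by
  rw [mderiv_eq_wordDeriv, ← length_multiWord α]
  have h := wordDeriv_ofFn hf _ (multiWord α).get x
  rw [List.ofFn_get] at h
  rw [h]
  refine (ContinuousMultilinearMap.le_opNorm _ _).trans ?_
  simp

/-- The iterated Fréchet derivative is controlled by the coordinate derivatives. -/
lemma norm_iteratedFDeriv_le_of_mderiv {n : ℕ} {f : Euc n → ℂ} (hf : ContDiff ℝ ∞ f) (k : ℕ)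
    (x : Euc n) {A : ℝ} (hA : 0 ≤ A)
    (h : ∀ α : Fin n → ℕ, ∑ i, α i = k → ‖mderiv α f x‖ ≤ A) :
    ‖iteratedFDeriv ℝ k f x‖ ≤ (n : ℝ) ^ k * A := by
  refine ContinuousMultilinearMap.opNorm_le_bound (by positivity) fun m => ?_
  have hm : m = fun i => ∑ j : Fin n, m i j • (EuclideanSpace.single j (1 : ℝ) : Euc n) := by
    funext i
    ext l
    simp [Finset.sum_apply, Pi.single_apply]
  have hval : ∀ j : Fin k → Fin n,
      ‖iteratedFDeriv ℝ k f x fun i => EuclideanSpace.single (j i) 1‖ ≤ A := by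
    intro j
    rw [← wordDeriv_ofFn hf, wordDeriv_perm hf (perm_multiWord (List.ofFn j)),
      ← mderiv_eq_wordDeriv]
    refine h _ ?_
    rw [← length_multiWord, ← (perm_multiWord (List.ofFn j)).length_eq, List.length_ofFn]
  have hexp : iteratedFDeriv ℝ k f x m = ∑ r : Fin k → Fin n, (∏ i, m i (r i)) •
      iteratedFDeriv ℝ k f x fun i => EuclideanSpace.single (r i) 1 := by
    conv_lhs => rw [hm]
    rw [ContinuousMultilinearMap.map_sum]
    refine Finset.sum_congr rfl fun r _ => ?_
    rw [ContinuousMultilinearMap.map_smul_univ]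
  rw [hexp]
  calc ‖∑ r : Fin k → Fin n, (∏ i, m i (r i)) •
      iteratedFDeriv ℝ k f x fun i => EuclideanSpace.single (r i) 1‖
      ≤ ∑ r : Fin k → Fin n, (∏ i, ‖m i‖) * A := by
        refine norm_sum_le_of_le _ fun r _ => ?_
        rw [norm_smul, norm_prod]
        gcongr with i hi
        · exact PiLp.norm_apply_le (m i) (r i)
        · exact hval r
    _ = _ := by
        rw [Finset.sum_const, Finset.card_univ, Fintype.card_fun, Fintype.card_fin,
          Fintype.card_fin, nsmul_eq_mul]
        push_cast; ring

/-! ### Convolutions -/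

/-- The convolution of a smooth function with bounded derivatives and an integrable function has
the expected Taylor series. -/
lemma hasFTaylorSeries_conv {n : ℕ} {A B : Euc n → ℂ} (hA : ContDiff ℝ ∞ A)
    (hAb : ∀ k : ℕ, ∃ C : ℝ, ∀ x, ‖iteratedFDeriv ℝ k A x‖ ≤ C) (hB : Integrable B) :
    HasFTaylorSeriesUpTo ∞ (fun x => ∫ w, B w * A (x - w))
      fun x k => ∫ w, B w • iteratedFDeriv ℝ k A (x - w) := by
  have hcont : ∀ k : ℕ, Continuous (iteratedFDeriv ℝ k A) := fun k =>
    hA.continuous_iteratedFDeriv (by exact_mod_cast le_top)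
  have hmeas : ∀ (k : ℕ) (x : Euc n),
      AEStronglyMeasurable (fun w => B w • iteratedFDeriv ℝ k A (x - w)) volume := fun k x =>
    hB.aestronglyMeasurable.smul
      (((hcont k).comp (continuous_const.sub continuous_id)).aestronglyMeasurable)
  have hInt : ∀ (k : ℕ) (x : Euc n),
      Integrable (fun w => B w • iteratedFDeriv ℝ k A (x - w)) volume := by
    intro k x
    obtain ⟨C, hC⟩ := hAb k
    refine (hB.norm.const_mul C).mono' (hmeas k x) (.of_forall fun w => ?_)
    rw [norm_smul, mul_comm]
    gcongr
    exact hC _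
  have hder : ∀ (k : ℕ) (x : Euc n), HasFDerivAt
      (fun x => ∫ w, B w • iteratedFDeriv ℝ k A (x - w))
      (∫ w, B w • iteratedFDeriv ℝ (k + 1) A (x - w)).curryLeft x := by
    intro k x
    obtain ⟨C, hC⟩ := hAb (k + 1)
    have h1 : ∀ x w : Euc n, B w • fderiv ℝ (iteratedFDeriv ℝ k A) (x - w) =
        (continuousMultilinearCurryLeftEquiv ℝ (fun _ : Fin (k + 1) => Euc n) ℂ)
          (B w • iteratedFDeriv ℝ (k + 1) A (x - w)) := by
      intro x w
      ext v m
      simp only [continuousMultilinearCurryLeftEquiv_apply]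
      simp [iteratedFDeriv_succ_apply_left, Fin.tail_def]
    have key := hasFDerivAt_integral_of_dominated_of_fderiv_le (𝕜 := ℝ) (μ := volume)
      (F := fun (x : Euc n) w => B w • iteratedFDeriv ℝ k A (x - w))
      (F' := fun x w => B w • fderiv ℝ (iteratedFDeriv ℝ k A) (x - w))
      (bound := fun w => C * ‖B w‖) (x₀ := x) (s := univ) Filter.univ_mem
      (.of_forall fun x => hmeas k x) (hInt k x) ?_ ?_ (hB.norm.const_mul C) ?_
    · have h4 : (fun w => B w • fderiv ℝ (iteratedFDeriv ℝ k A) (x - w)) = fun w =>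
          (continuousMultilinearCurryLeftEquiv ℝ (fun _ : Fin (k + 1) => Euc n) ℂ).toContinuousLinearEquiv.toContinuousLinearMap
          (B w • iteratedFDeriv ℝ (k + 1) A (x - w)) := funext fun w => h1 x w
      rw [h4, ContinuousLinearMap.integral_comp_comm _ (hInt (k + 1) x)] at key
      exact key
    · refine hB.aestronglyMeasurable.smul ?_
      have : Continuous (fderiv ℝ (iteratedFDeriv ℝ k A)) :=
        (hA.iteratedFDeriv_right (m := ∞) (i := k) (by norm_cast)).continuous_fderiv (by simp)
      have : SecondCountableTopologyEither (Euc n) (Euc n →L[ℝ] Euc n [×k]→L[ℝ] ℂ) :=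
        secondCountableTopologyEither_of_left _ _
      exact (Continuous.comp ‹_› (continuous_const.sub continuous_id)).aestronglyMeasurable
    · refine .of_forall fun w x _ => ?_
      rw [norm_smul, mul_comm]
      gcongr
      rw [norm_fderiv_iteratedFDeriv]
      exact hC _
    · refine .of_forall fun w x _ => ?_
      have h2 : DifferentiableAt ℝ (iteratedFDeriv ℝ k A) (x - w) :=
        (hA.differentiable_iteratedFDeriv (by exact_mod_cast ENat.natCast_lt_top k)) _
      have h3 := h2.hasFDerivAt.comp x ((hasFDerivAt_id x).sub_const w)
      exact h3.const_smul (B w)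
  refine ⟨fun x => ?_, fun m _ x => hder m x, fun m _ => ?_⟩
  · have : (∫ w, B w • iteratedFDeriv ℝ 0 A (x - w)).curry0 =
      (continuousMultilinearCurryFin0 ℝ (Euc n) ℂ).toContinuousLinearEquiv.toContinuousLinearMap
        (∫ w, B w • iteratedFDeriv ℝ 0 A (x - w)) := rfl
    rw [this, ← ContinuousLinearMap.integral_comp_comm _ (hInt 0 x)]
    simp
  · exact continuous_iff_continuousAt.2 fun x => (hder m x).continuousAt

lemma conv_contDiff {n : ℕ} {A B : Euc n → ℂ} (hA : ContDiff ℝ ∞ A)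
    (hAb : ∀ k : ℕ, ∃ C : ℝ, ∀ x, ‖iteratedFDeriv ℝ k A x‖ ≤ C) (hB : Integrable B) :
    ContDiff ℝ ∞ fun x => ∫ w, B w * A (x - w) :=
  (hasFTaylorSeries_conv hA hAb hB).contDiff

lemma norm_iteratedFDeriv_conv_le {n : ℕ} {A B : Euc n → ℂ} (hA : ContDiff ℝ ∞ A)
    (hAb : ∀ k : ℕ, ∃ C : ℝ, ∀ x, ‖iteratedFDeriv ℝ k A x‖ ≤ C) (hB : Integrable B)
    (k : ℕ) (x : Euc n) :
    ‖iteratedFDeriv ℝ k (fun x => ∫ w, B w * A (x - w)) x‖ ≤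
      ∫ w, ‖B w‖ * ‖iteratedFDeriv ℝ k A (x - w)‖ := by
  rw [← (hasFTaylorSeries_conv hA hAb hB).eq_iteratedFDeriv (by exact_mod_cast le_top) x]
  refine (norm_integral_le_integral_norm _).trans_eq ?_
  simp_rw [norm_smul]

lemma integrable_weight {n : ℕ} {b : ℝ} (hb : (n : ℝ) < b) :
    Integrable fun x : Euc n => (1 + ‖x‖) ^ (-b) :=
  integrable_one_add_norm (by simpa using hb)

lemma integral_weight_scaled {n : ℕ} (b : ℝ) {τ : ℝ} (hτ : 0 < τ) :
    ∫ w : Euc n, (τ ^ n)⁻¹ * (1 + ‖τ⁻¹ • w‖) ^ (-b) = ∫ w : Euc n, (1 + ‖w‖) ^ (-b) := by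
  rw [integral_const_mul, Measure.integral_comp_inv_smul volume (fun w : Euc n => (1 + ‖w‖) ^ (-b))]
  simp [abs_of_pos hτ]
  field_simp

/-- Convolving the weight `(1 + |x|)^{-b}` with its `L¹`-dilation by `τ ≤ 1` reproduces the
weight. -/
lemma weight_conv {n : ℕ} {b : ℝ} (hb : (n : ℝ) < b) {τ : ℝ} (hτ : 0 < τ) (hτ1 : τ ≤ 1)
    (x : Euc n) :
    ∫ w : Euc n, (τ ^ n)⁻¹ * (1 + ‖τ⁻¹ • w‖) ^ (-b) * (1 + ‖x - w‖) ^ (-b) ≤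
      2 ^ (b + 1) * (∫ w : Euc n, (1 + ‖w‖) ^ (-b)) * (1 + ‖x‖) ^ (-b) := by
  have hb0 : 0 < b := lt_of_le_of_lt (Nat.cast_nonneg n) hb
  set I := ∫ w : Euc n, (1 + ‖w‖) ^ (-b) with hI
  have i1 : Integrable fun w : Euc n => (τ ^ n)⁻¹ * (1 + ‖τ⁻¹ • w‖) ^ (-b) :=
    ((integrable_weight hb).comp_smul (inv_ne_zero hτ.ne')).const_mul _
  have i2 : Integrable fun w : Euc n => (1 + ‖x - w‖) ^ (-b) := (integrable_weight hb).comp_sub_left x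
  have hpt : ∀ w : Euc n, (τ ^ n)⁻¹ * (1 + ‖τ⁻¹ • w‖) ^ (-b) * (1 + ‖x - w‖) ^ (-b) ≤
      2 ^ b * (1 + ‖x‖) ^ (-b) *
        ((τ ^ n)⁻¹ * (1 + ‖τ⁻¹ • w‖) ^ (-b) + (1 + ‖x - w‖) ^ (-b)) := by
    intro w
    set P := (1 + ‖τ⁻¹ • w‖) with hP
    set Q := 1 + ‖x - w‖ with hQ
    set X := 1 + ‖x‖ with hX
    have hPp : 0 < P := by positivity
    have hQp : 0 < Q := by positivity
    have hXp : 0 < X := by positivity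
    have hτP : ‖w‖ ≤ τ * P := by
      rw [hP, norm_smul, norm_inv, Real.norm_eq_abs, abs_of_pos hτ, mul_add, ← mul_assoc,
        mul_inv_cancel₀ hτ.ne']
      linarith
    have hXQ : X ≤ Q + τ * P := by
      have : ‖x‖ ≤ ‖x - w‖ + ‖w‖ := by simpa using norm_add_le (x - w) w
      rw [hX, hQ]; linarith
    have htwo : X ^ b ≤ 2 ^ b * (Q ^ b + (τ * P) ^ b) := by
      have hτPp : 0 < τ * P := by positivity
      calc X ^ b ≤ (2 * max Q (τ * P)) ^ b := by
            refine Real.rpow_le_rpow hXp.le (hXQ.trans ?_) hb0.le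
            linarith [le_max_left Q (τ * P), le_max_right Q (τ * P)]
        _ = 2 ^ b * (max Q (τ * P)) ^ b := Real.mul_rpow (by norm_num) (by positivity)
        _ ≤ _ := by
            gcongr
            have := Real.rpow_nonneg hQp.le b
            have := Real.rpow_nonneg hτPp.le b
            rcases max_choice Q (τ * P) with h | h <;> rw [h] <;> linarith
    have hτb : (τ ^ n)⁻¹ * τ ^ b ≤ 1 := by
      rw [inv_mul_le_iff₀ (by positivity), mul_one, ← Real.rpow_natCast]
      exact Real.rpow_le_rpow_of_exponent_ge hτ hτ1 hb.le
    have hXc : X ^ (-b) * X ^ b = 1 := by rw [← Real.rpow_add hXp]; simp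
    have hQc : Q ^ (-b) * Q ^ b = 1 := by rw [← Real.rpow_add hQp]; simp
    have hPc : P ^ (-b) * P ^ b = 1 := by rw [← Real.rpow_add hPp]; simp
    have hPτ : (τ * P) ^ b = τ ^ b * P ^ b := Real.mul_rpow hτ.le hPp.le
    have hXn := Real.rpow_nonneg hXp.le (-b)
    have hQn := Real.rpow_nonneg hQp.le (-b)
    have hPn := Real.rpow_nonneg hPp.le (-b)
    calc (τ ^ n)⁻¹ * P ^ (-b) * Q ^ (-b)
        = X ^ (-b) * ((τ ^ n)⁻¹ * P ^ (-b) * Q ^ (-b)) * X ^ b := by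
          linear_combination (-(τ ^ n)⁻¹ * P ^ (-b) * Q ^ (-b)) * hXc
      _ ≤ X ^ (-b) * ((τ ^ n)⁻¹ * P ^ (-b) * Q ^ (-b)) * (2 ^ b * (Q ^ b + (τ * P) ^ b)) := by
          gcongr
      _ = 2 ^ b * X ^ (-b) * ((τ ^ n)⁻¹ * P ^ (-b) * (Q ^ (-b) * Q ^ b) +
            ((τ ^ n)⁻¹ * τ ^ b) * (P ^ (-b) * P ^ b) * Q ^ (-b)) := by rw [hPτ]; ring
      _ ≤ 2 ^ b * X ^ (-b) * ((τ ^ n)⁻¹ * P ^ (-b) + Q ^ (-b)) := by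
          rw [hQc, hPc, mul_one, mul_one]
          gcongr
          exact mul_le_of_le_one_left hQn hτb
  calc _ ≤ ∫ w : Euc n, 2 ^ b * (1 + ‖x‖) ^ (-b) *
        ((τ ^ n)⁻¹ * (1 + ‖τ⁻¹ • w‖) ^ (-b) + (1 + ‖x - w‖) ^ (-b)) := by
        refine integral_mono_of_nonneg (.of_forall fun w => by positivity)
          ((i1.add i2).const_mul _) (.of_forall hpt)
    _ = 2 ^ b * (1 + ‖x‖) ^ (-b) * (I + I) := by
        rw [integral_const_mul, integral_add i1 i2, integral_weight_scaled b hτ,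
          integral_sub_left_eq_self (fun w : Euc n => (1 + ‖w‖) ^ (-b))]
    _ = _ := by rw [Real.rpow_add (by norm_num), Real.rpow_one]; ring

/-! ### Smoothing the kernel by a test function -/

lemma norm_dil {n : ℕ} (g : Euc n → ℂ) {t : ℝ} (ht : 0 < t) (x : Euc n) :
    ‖dil g t x‖ = (t ^ n)⁻¹ * ‖g (t⁻¹ • x)‖ := by
  rw [dil, norm_smul, Real.norm_eq_abs, abs_of_pos (by positivity)]

lemma dil_continuous {n : ℕ} {g : Euc n → ℂ} (hg : Continuous g) (t : ℝ) :
    Continuous (dil g t) := by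
  unfold dil
  exact (hg.comp (continuous_const_smul (t⁻¹ : ℝ))).const_smul ((t ^ n)⁻¹ : ℝ)

lemma one_add_norm_le_mul {n : ℕ} (x y : Euc n) : 1 + ‖y‖ ≤ (1 + ‖x‖) * (1 + ‖x - y‖) := by
  have h : ‖y‖ ≤ ‖x‖ + ‖x - y‖ := by
    have := norm_sub_le x (x - y); rwa [sub_sub_cancel] at this
  nlinarith [norm_nonneg x, norm_nonneg (x - y), mul_nonneg (norm_nonneg x) (norm_nonneg (x - y))]

lemma dil_decay {n : ℕ} {G : Euc n → ℂ} {r C : ℝ} (hr : 0 ≤ r) (hC : 0 ≤ C)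
    (hG : ∀ u, ‖G u‖ ≤ C * (1 + ‖u‖) ^ (-r)) {t : ℝ} (ht : 0 < t) (x y : Euc n) :
    ‖dil G t (x - y)‖ ≤ (t ^ n)⁻¹ * C * ((1 + ‖x‖) * (1 + t)) ^ r * (1 + ‖y‖) ^ (-r) := by
  rw [norm_dil G ht, mul_assoc, mul_assoc]
  refine mul_le_mul_of_nonneg_left ?_ (by positivity)
  refine (hG _).trans (mul_le_mul_of_nonneg_left ?_ hC)
  set u := t⁻¹ • (x - y) with hu
  have hxy : x - y = t • u := by rw [hu, smul_smul, mul_inv_cancel₀ ht.ne', one_smul]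
  have h1 : 1 + ‖y‖ ≤ ((1 + ‖x‖) * (1 + t)) * (1 + ‖u‖) := by
    refine (one_add_norm_le_mul x y).trans ?_
    rw [mul_assoc]
    refine mul_le_mul_of_nonneg_left ?_ (by positivity)
    rw [hxy, norm_smul, Real.norm_eq_abs, abs_of_pos ht]
    nlinarith [norm_nonneg u]
  have h2 : (1 + ‖y‖) ^ r ≤ ((1 + ‖x‖) * (1 + t)) ^ r * (1 + ‖u‖) ^ r := by
    rw [← Real.mul_rpow (by positivity) (by positivity)]
    exact Real.rpow_le_rpow (by positivity) h1 hr
  rw [Real.rpow_neg (by positivity), Real.rpow_neg (by positivity), ← div_eq_mul_inv,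
    le_div_iff₀ (by positivity), inv_mul_le_iff₀ (by positivity), mul_comm _ (_ ^ r)]
  linarith

lemma aestronglyMeasurable_of_weight {n : ℕ} {a : ℝ} {f : Euc n → ℂ}
    (hf : Integrable fun y : Euc n => (1 + ‖y‖) ^ (-a) • f y) :
    AEStronglyMeasurable f volume := by
  have h : AEStronglyMeasurable
      (fun y : Euc n => (1 + ‖y‖) ^ a • ((1 + ‖y‖) ^ (-a) • f y)) volume := by
    have hc : Continuous fun y : Euc n => (1 + ‖y‖) ^ a :=
      Continuous.rpow_const (by fun_prop) fun y => Or.inl (by positivity)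
    exact hc.aestronglyMeasurable.smul hf.aestronglyMeasurable
  refine h.congr (.of_forall fun y => ?_)
  simp only [smul_smul]
  rw [← Real.rpow_add (by positivity)]; simp

lemma integrable_mul_of_weight {n : ℕ} {a : ℝ} {f : Euc n → ℂ}
    (hf : Integrable fun y : Euc n => (1 + ‖y‖) ^ (-a) • f y) {G : Euc n → ℂ}
    (hGc : Continuous G) {C : ℝ} (hG : ∀ y, ‖G y‖ ≤ C * (1 + ‖y‖) ^ (-a)) :
    Integrable fun y => G y * f y := by
  refine (hf.norm.const_mul C).mono'
    (hGc.aestronglyMeasurable.mul (aestronglyMeasurable_of_weight hf)) (.of_forall fun y => ?_)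
  rw [norm_mul, norm_smul, Real.norm_eq_abs, abs_of_pos (by positivity), ← mul_assoc]
  exact mul_le_mul_of_nonneg_right (hG y) (norm_nonneg _)

lemma schwartz_decay {n : ℕ} (ψ : SchwartzMap (Euc n) ℂ) (r : ℝ) :
    ∃ C : ℝ, 0 ≤ C ∧ ∀ u, ‖ψ u‖ ≤ C * (1 + ‖u‖) ^ (-r) := by
  obtain ⟨k, hk⟩ := exists_nat_ge r
  refine ⟨2 ^ k * ((Finset.Iic (k, 0)).sup fun m => SchwartzMap.seminorm ℝ m.1 m.2) ψ,
    by positivity, fun u => ?_⟩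
  have h := SchwartzMap.one_add_le_sup_seminorm_apply (𝕜 := ℝ) (m := (k, 0)) (k := k) (n := 0)
    le_rfl le_rfl ψ u
  rw [norm_iteratedFDeriv_zero] at h
  rw [Real.rpow_neg (by positivity), ← div_eq_mul_inv, le_div_iff₀ (by positivity)]
  refine le_trans ?_ h
  rw [mul_comm]
  gcongr
  rw [← Real.rpow_natCast]
  exact Real.rpow_le_rpow_of_exponent_le (by linarith [norm_nonneg u]) hk

/-- Smooth functions whose derivatives of order at most `M` are bounded by `A (1 + |x|)^{-b}`. -/
structure DecayBound {n : ℕ} (M : ℕ) (b A : ℝ) (η : Euc n → ℂ) : Prop where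
  smooth : ContDiff ℝ ∞ η
  bound : ∀ k ≤ M, ∀ x, ‖iteratedFDeriv ℝ k η x‖ ≤ A * (1 + ‖x‖) ^ (-b)

lemma DecayBound.norm_le {n M : ℕ} {b A : ℝ} {η : Euc n → ℂ} (h : DecayBound M b A η)
    (x : Euc n) : ‖η x‖ ≤ A * (1 + ‖x‖) ^ (-b) := by
  simpa using h.bound 0 (Nat.zero_le _) x

lemma testClass_decayBound {n N : ℕ} (hn : 0 < n) {b : ℝ} (hb : b ≤ (N + n + 1 : ℕ))
    {ψ : SchwartzMap (Euc n) ℂ} (hψ : inTestClass N ψ) :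
    DecayBound (N + 1) b ((n : ℝ) ^ (N + 1)) ψ := by
  refine ⟨ψ.smooth ⊤, fun k hk x => ?_⟩
  have h := norm_iteratedFDeriv_le_of_mderiv (ψ.smooth ⊤) k x
    (A := (1 + ‖x‖) ^ (-b)) (by positivity) ?_
  · refine h.trans ?_
    gcongr
    exact_mod_cast hn
  · intro α hα
    have h1 := hψ x α (by omega)
    rw [← le_div_iff₀' (by positivity), one_div, ← Real.rpow_natCast,
      ← Real.rpow_neg (by positivity)] at h1
    refine h1.trans (Real.rpow_le_rpow_of_exponent_le (by linarith [norm_nonneg x]) ?_)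
    linarith

lemma decayBound_conv {n M : ℕ} {b C D : ℝ} (hb : (n : ℝ) < b) (hC : 0 ≤ C)
    (hD : 0 ≤ D) {A G : Euc n → ℂ} (hA : DecayBound M b C A)
    (hAb : ∀ k : ℕ, ∃ C : ℝ, ∀ x, ‖iteratedFDeriv ℝ k A x‖ ≤ C)
    (hGc : Continuous G) (hG : ∀ x, ‖G x‖ ≤ D * (1 + ‖x‖) ^ (-b)) {τ : ℝ} (hτ : 0 < τ)
    (hτ1 : τ ≤ 1) :
    DecayBound M b (C * D * (2 ^ (b + 1) * ∫ w : Euc n, (1 + ‖w‖) ^ (-b)))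
      fun v => ∫ w, dil G τ w * A (v - w) := by
  have hB : ∀ w, ‖dil G τ w‖ ≤ D * ((τ ^ n)⁻¹ * (1 + ‖τ⁻¹ • w‖) ^ (-b)) := by
    intro w
    rw [norm_dil G hτ]
    have := mul_le_mul_of_nonneg_left (hG (τ⁻¹ • w)) (a := (τ ^ n)⁻¹) (by positivity)
    linarith
  have i1 : Integrable fun w : Euc n => (τ ^ n)⁻¹ * (1 + ‖τ⁻¹ • w‖) ^ (-b) :=
    ((integrable_weight hb).comp_smul (inv_ne_zero hτ.ne')).const_mul _
  have hBi : Integrable (dil G τ) :=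
    (i1.const_mul D).mono' (dil_continuous hGc τ).aestronglyMeasurable (.of_forall hB)
  refine ⟨conv_contDiff hA.smooth hAb hBi, fun k hk x => ?_⟩
  refine (norm_iteratedFDeriv_conv_le hA.smooth hAb hBi k x).trans ?_
  have hw1 : ∀ w : Euc n, (1 + ‖x - w‖) ^ (-b) ≤ 1 := fun w =>
    Real.rpow_le_one_of_one_le_of_nonpos (by linarith [norm_nonneg (x - w)])
      (by have : (0 : ℝ) ≤ n := Nat.cast_nonneg n
          linarith)
  have i2 : Integrable fun w : Euc n =>
      (τ ^ n)⁻¹ * (1 + ‖τ⁻¹ • w‖) ^ (-b) * (1 + ‖x - w‖) ^ (-b) := by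
    refine i1.mono' ?_ (.of_forall fun w => ?_)
    · refine i1.aestronglyMeasurable.mul ?_
      exact (Continuous.rpow_const (by fun_prop)
        fun y => Or.inl (by positivity)).aestronglyMeasurable
    · rw [Real.norm_eq_abs, abs_of_nonneg (by positivity)]
      exact mul_le_of_le_one_right (by positivity) (hw1 w)
  calc ∫ w, ‖dil G τ w‖ * ‖iteratedFDeriv ℝ k A (x - w)‖
      ≤ ∫ w : Euc n, C * D * ((τ ^ n)⁻¹ * (1 + ‖τ⁻¹ • w‖) ^ (-b) * (1 + ‖x - w‖) ^ (-b)) := by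
        refine integral_mono_of_nonneg (.of_forall fun w => by positivity) (i2.const_mul _)
          (.of_forall fun w => ?_)
        calc ‖dil G τ w‖ * ‖iteratedFDeriv ℝ k A (x - w)‖
            ≤ (D * ((τ ^ n)⁻¹ * (1 + ‖τ⁻¹ • w‖) ^ (-b))) * (C * (1 + ‖x - w‖) ^ (-b)) :=
              mul_le_mul (hB w) (hA.bound k hk _) (norm_nonneg _) (by positivity)
          _ = _ := by ring
    _ = C * D * ∫ w : Euc n, (τ ^ n)⁻¹ * (1 + ‖τ⁻¹ • w‖) ^ (-b) * (1 + ‖x - w‖) ^ (-b) :=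
        integral_const_mul _ _
    _ ≤ C * D * (2 ^ (b + 1) * (∫ w : Euc n, (1 + ‖w‖) ^ (-b)) * (1 + ‖x‖) ^ (-b)) := by
        gcongr
        exact weight_conv hb hτ hτ1 x
    _ = _ := by ring

/-- Convolving the kernel with a dilated test function gives a dilate of a function with uniform
bounds; the scale is the larger of the two scales involved. -/
lemma exists_smoothed_kernel {n : ℕ} (hn : 0 < n) (N : ℕ) {δ b : ℝ} (hδ : 0 < δ)
    (hb : (n : ℝ) < b) (hbN : b ≤ (N + n + 1 : ℕ)) (hba : b ≤ brExp n δ) :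
    ∃ A : ℝ, 0 ≤ A ∧ ∀ ψ : SchwartzMap (Euc n) ℂ, inTestClass N ψ → ∀ t : ℝ, 0 < t →
      ∃ m : ℝ, 0 < m ∧ ∃ η : Euc n → ℂ, DecayBound (N + 1) b A η ∧
        ∀ v, ∫ w, dil ψ t (v - w) * brKernel n δ w = dil η m v := by
  set K := brKernel n δ with hK
  have hKdec : ∀ k : ℕ, ∃ C : ℝ, 0 ≤ C ∧ ∀ x : Euc n,
      ‖iteratedFDeriv ℝ k K x‖ ≤ C * (1 + ‖x‖) ^ (-b) := by
    intro k
    obtain ⟨C, hC, h⟩ := brKernel_deriv_decay n k hδ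
    refine ⟨C, hC, fun x => (h x).trans ?_⟩
    gcongr
    linarith [norm_nonneg x]
  choose F hF0 hF using hKdec
  set CK := ∑ k ∈ Finset.range (N + 2), F k with hCK
  have hCK0 : 0 ≤ CK := Finset.sum_nonneg fun k _ => hF0 k
  have hFle : ∀ k ≤ N + 1, F k ≤ CK := fun k hk =>
    Finset.single_le_sum (f := F) (fun i _ => hF0 i) (Finset.mem_range.2 (by omega))
  have hKD : DecayBound (N + 1) b CK K := ⟨brKernel_contDiff n hδ, fun k hk x =>
    (hF k x).trans (mul_le_mul_of_nonneg_right (hFle k hk) (by positivity))⟩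
  have hwle : ∀ x : Euc n, (1 + ‖x‖) ^ (-b) ≤ 1 := fun x =>
    Real.rpow_le_one_of_one_le_of_nonpos (by linarith [norm_nonneg x])
      (by have : (0 : ℝ) ≤ n := Nat.cast_nonneg n
          linarith)
  have hKb : ∀ k : ℕ, ∃ C : ℝ, ∀ x, ‖iteratedFDeriv ℝ k K x‖ ≤ C := fun k =>
    ⟨F k, fun x => (hF k x).trans (mul_le_of_le_one_right (hF0 k) (hwle x))⟩
  have hKc : Continuous K := brKernel_continuous n hδ
  set Cψ : ℝ := (n : ℝ) ^ (N + 1) with hCψ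
  have hCψ0 : 0 ≤ Cψ := by positivity
  refine ⟨CK * Cψ * (2 ^ (b + 1) * ∫ w : Euc n, (1 + ‖w‖) ^ (-b)), ?_, ?_⟩
  · have : 0 ≤ ∫ w : Euc n, (1 + ‖w‖) ^ (-b) := integral_nonneg fun w => by positivity
    positivity
  intro ψ hψ t ht
  have hψD := testClass_decayBound hn hbN hψ
  have hψb : ∀ k : ℕ, ∃ C : ℝ, ∀ x, ‖iteratedFDeriv ℝ k ψ x‖ ≤ C := fun k => by
    obtain ⟨C, hC⟩ := ψ.decay 0 k
    exact ⟨C, fun x => by simpa using hC.2 x⟩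
  rcases le_total t 1 with h1 | h1
  · refine ⟨1, one_pos, _, decayBound_conv hb hCK0 hCψ0 hKD hKb ψ.continuous hψD.norm_le ht h1,
      fun v => ?_⟩
    rw [← integral_sub_left_eq_self _ volume v]
    simp [dil]
  · have ht1 : t⁻¹ ≤ 1 := inv_le_one_of_one_le₀ h1
    have h := decayBound_conv hb hCψ0 hCK0 hψD hψb hKc hKD.norm_le (inv_pos.2 ht) ht1
    rw [mul_comm Cψ CK] at h
    refine ⟨t, ht, _, h, fun v => ?_⟩
    have hsc := Measure.integral_comp_smul volume
      (fun w : Euc n => dil ψ t (v - w) * K w) t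
    rw [abs_of_pos (by positivity), eq_inv_smul_iff₀ (pow_pos ht _).ne'] at hsc
    rw [← hsc]
    simp only [dil, finrank_euclideanSpace, Fintype.card_fin]
    rw [← integral_smul, ← integral_smul]
    refine integral_congr_ae (.of_forall fun w => ?_)
    have : t⁻¹ • (v - t • w) = t⁻¹ • v - w := by
      rw [smul_sub, smul_smul, inv_mul_cancel₀ ht.ne', one_smul]
    simp only [this, inv_inv, inv_pow, Complex.real_smul]
    push_cast
    ring

/-- Associativity of the convolution of a test function, the kernel and `f`. -/
lemma conv_brOp {n : ℕ} {δ : ℝ} (hδ : 0 < δ) {f : Euc n → ℂ}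
    (hf : Integrable fun y : Euc n => (1 + ‖y‖) ^ (-brExp n δ) • f y)
    (ψ : SchwartzMap (Euc n) ℂ) {t : ℝ} (ht : 0 < t) (x : Euc n) :
    Integrable (fun z => (∫ w, dil ψ t (x - z - w) * brKernel n δ w) * f z) ∧
    ∫ y, dil ψ t (x - y) * brOp n δ 1 f y =
      ∫ z, (∫ w, dil ψ t (x - z - w) * brKernel n δ w) * f z := by
  set a := brExp n δ with ha
  have ha0 : 0 < a := brExp_pos n hδ
  obtain ⟨C, hC, hKC⟩ := brKernel_decay n hδ
  have hKc := brKernel_continuous n hδ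
  have hop : ∀ y, brOp n δ 1 f y = ∫ z, brKernel n δ (y - z) * f z := by
    intro y; simp [brOp, dil]
  obtain ⟨C', hC', hψ⟩ := schwartz_decay ψ (a + n + 1)
  set D := (t ^ n)⁻¹ * C' * ((1 + ‖x‖) * (1 + t)) ^ (a + n + 1) with hD
  have hdψ : ∀ y, ‖dil ψ t (x - y)‖ ≤ D * (1 + ‖y‖) ^ (-(a + n + 1)) := fun y =>
    dil_decay (by positivity) hC' hψ ht x y
  have hdc : Continuous fun y => dil ψ t (x - y) :=
    (dil_continuous ψ.continuous t).comp (continuous_const.sub continuous_id)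
  have hwc : Continuous fun y : Euc n => (1 + ‖y‖) ^ a :=
    Continuous.rpow_const (by fun_prop) fun y => Or.inl (by positivity)
  have i1 : Integrable fun y : Euc n => ‖dil ψ t (x - y)‖ * (1 + ‖y‖) ^ a := by
    refine ((integrable_weight (n := n) (b := n + 1) (by linarith)).const_mul D).mono'
      (hdc.norm.mul hwc).aestronglyMeasurable (.of_forall fun y => ?_)
    rw [Real.norm_eq_abs, abs_of_nonneg (by positivity)]
    have : (1 + ‖y‖) ^ (-((n : ℝ) + 1)) = (1 + ‖y‖) ^ (-(a + n + 1)) * (1 + ‖y‖) ^ a := by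
      rw [← Real.rpow_add (by positivity)]; congr 1; ring
    rw [this, ← mul_assoc]
    exact mul_le_mul_of_nonneg_right (hdψ y) (by positivity)
  have hprod : Integrable (Function.uncurry fun y z : Euc n =>
      dil ψ t (x - y) * (brKernel n δ (y - z) * f z)) (volume.prod volume) := by
    have hm := (i1.mul_prod hf.norm).const_mul C
    refine hm.mono' ?_ (.of_forall fun q => ?_)
    · have m1 : AEStronglyMeasurable (fun q : Euc n × Euc n => dil ψ t (x - q.1))
          (volume.prod volume) := (hdc.comp continuous_fst).aestronglyMeasurable
      have m2 : AEStronglyMeasurable (fun q : Euc n × Euc n => brKernel n δ (q.1 - q.2))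
          (volume.prod volume) :=
        (hKc.comp (continuous_fst.sub continuous_snd)).aestronglyMeasurable
      exact m1.mul (m2.mul (aestronglyMeasurable_of_weight hf).comp_snd)
    · obtain ⟨y, z⟩ := q
      simp only [Function.uncurry_apply_pair]
      rw [norm_mul, norm_mul, norm_smul, Real.norm_eq_abs, abs_of_pos (by positivity)]
      have h1 : (1 + ‖y - z‖) ^ (-a) ≤ (1 + ‖y‖) ^ a * (1 + ‖z‖) ^ (-a) := by
        have h2 : (1 + ‖z‖) ^ a ≤ (1 + ‖y‖) ^ a * (1 + ‖y - z‖) ^ a := by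
          rw [← Real.mul_rpow (by positivity) (by positivity)]
          exact Real.rpow_le_rpow (by positivity) (one_add_norm_le_mul y z) ha0.le
        rw [Real.rpow_neg (by positivity), Real.rpow_neg (by positivity), ← div_eq_mul_inv,
          le_div_iff₀ (by positivity), inv_mul_le_iff₀ (by positivity)]
        linarith
      calc ‖dil ψ t (x - y)‖ * (‖brKernel n δ (y - z)‖ * ‖f z‖)
          ≤ ‖dil ψ t (x - y)‖ * ((C * ((1 + ‖y‖) ^ a * (1 + ‖z‖) ^ (-a))) * ‖f z‖) := by
            gcongr
            exact (hKC _).trans (mul_le_mul_of_nonneg_left h1 hC)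
        _ = _ := by ring
  have hinner : ∀ z, ∫ y, dil ψ t (x - y) * (brKernel n δ (y - z) * f z) =
      (∫ w, dil ψ t (x - z - w) * brKernel n δ w) * f z := by
    intro z
    simp only [← mul_assoc]
    rw [integral_mul_const]
    congr 1
    rw [← integral_add_right_eq_self _ z]
    refine integral_congr_ae (.of_forall fun w => ?_)
    have h1 : x - (w + z) = x - z - w := by abel
    simp only [h1, add_sub_cancel_right]
  refine ⟨?_, ?_⟩
  · have h := hprod.integral_prod_right
    simp only [Function.uncurry_apply_pair, hinner] at h
    exact h
  calc ∫ y, dil ψ t (x - y) * brOp n δ 1 f y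
      = ∫ y, ∫ z, dil ψ t (x - y) * (brKernel n δ (y - z) * f z) := by
        simp_rw [hop, integral_const_mul]
    _ = ∫ z, ∫ y, dil ψ t (x - y) * (brKernel n δ (y - z) * f z) := integral_integral_swap hprod
    _ = _ := integral_congr_ae (.of_forall hinner)

/-! ### Localizing a convolution and comparing it with the grand maximal function -/

/-- A Schwartz function bounded by `L` in the norms defining the test class is `L` times a test
function. -/
lemma enorm_conv_le_grandMax {n N : ℕ} (θ : SchwartzMap (Euc n) ℂ) {L : ℝ} (hL : 0 < L)
    (hθ : ∀ k ≤ N + 1, ∀ w, (1 + ‖w‖) ^ (N + n + 1) * ‖iteratedFDeriv ℝ k θ w‖ ≤ L)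
    (f : Euc n → ℂ) {t : ℝ} (ht : 0 < t) (x : Euc n) :
    ‖∫ y, dil θ t (x - y) * f y‖ₑ ≤ ENNReal.ofReal L * grandMax N f x := by
  set φ : SchwartzMap (Euc n) ℂ := (L⁻¹ : ℝ) • θ with hφ
  have hφθ : ⇑φ = (L⁻¹ : ℝ) • ⇑θ := rfl
  have hcl : inTestClass N φ := by
    intro w α hα
    have h1 := norm_mderiv_le (φ.smooth ⊤) α w
    have h2 : ‖iteratedFDeriv ℝ (∑ i, α i) φ w‖ =
        L⁻¹ * ‖iteratedFDeriv ℝ (∑ i, α i) θ w‖ := by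
      rw [hφθ, iteratedFDeriv_const_smul_apply ((θ.smooth _).contDiffAt), norm_smul,
        Real.norm_eq_abs, abs_of_pos (inv_pos.2 hL)]
    have h3 := hθ _ hα w
    calc (1 + ‖w‖) ^ (N + n + 1) * ‖mderiv α φ w‖
        ≤ (1 + ‖w‖) ^ (N + n + 1) * (L⁻¹ * ‖iteratedFDeriv ℝ (∑ i, α i) θ w‖) := by
          rw [← h2]; gcongr
      _ = L⁻¹ * ((1 + ‖w‖) ^ (N + n + 1) * ‖iteratedFDeriv ℝ (∑ i, α i) θ w‖) := by ring
      _ ≤ L⁻¹ * L := by gcongr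
      _ = 1 := inv_mul_cancel₀ hL.ne'
  have hle : ‖∫ y, dil φ t (x - y) * f y‖ₑ ≤ grandMax N f x :=
    le_iSup₂_of_le φ hcl (le_iSup₂_of_le t ht le_rfl)
  have heq : ∫ y, dil θ t (x - y) * f y = (L : ℂ) * ∫ y, dil φ t (x - y) * f y := by
    rw [← integral_const_mul]
    refine integral_congr_ae (.of_forall fun y => ?_)
    have hLc : (L : ℂ) ≠ 0 := by exact_mod_cast hL.ne'
    simp only [dil, hφθ, Pi.smul_apply, Complex.real_smul]
    push_cast
    field_simp
  rw [heq, enorm_mul]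
  gcongr
  rw [← ofReal_norm, Complex.norm_real, Real.norm_eq_abs, abs_of_pos hL]

lemma exists_bump (n : ℕ) : ∃ χ : Euc n → ℂ, ContDiff ℝ ∞ χ ∧
    tsupport χ ⊆ Metric.closedBall 0 1 ∧ ∫ u, χ u = 1 := by
  let β : ContDiffBump (0 : Euc n) := ⟨1 / 2, 1, by norm_num, by norm_num⟩
  refine ⟨fun u => ((β.normed volume u : ℝ) : ℂ), ?_, ?_, ?_⟩
  · exact Complex.ofRealCLM.contDiff.comp (β.contDiff_normed (n := ⊤))
  · have h : tsupport (fun u => ((β.normed volume u : ℝ) : ℂ)) ⊆ tsupport (β.normed volume) :=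
      closure_mono fun u hu => by
        simp only [Function.mem_support] at hu ⊢
        exact fun h => hu (by rw [h]; simp)
    refine h.trans ?_
    rw [β.tsupport_normed_eq]
  · change ∫ u, ((β.normed volume u : ℝ) : ℂ) = 1
    rw [integral_complex_ofReal, β.integral_normed]; simp

lemma bump_deriv_bound {n : ℕ} (M : ℕ) {χ : Euc n → ℂ} (hχ : ContDiff ℝ ∞ χ)
    (hs : tsupport χ ⊆ Metric.closedBall 0 1) :
    ∃ B : ℝ, 0 < B ∧ ∀ k ≤ M, ∀ v, ‖iteratedFDeriv ℝ k χ v‖ ≤ B := by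
  have hc : HasCompactSupport χ :=
    HasCompactSupport.of_support_subset_isCompact (isCompact_closedBall 0 1)
      ((subset_tsupport _).trans hs)
  have : ∀ k : ℕ, ∃ B : ℝ, ∀ v, ‖iteratedFDeriv ℝ k χ v‖ ≤ B := fun k =>
    (hχ.continuous_iteratedFDeriv (m := k) (by exact_mod_cast le_top)).bounded_above_of_compact_support
      (hc.iteratedFDeriv k)
  choose F hF using this
  refine ⟨∑ k ∈ Finset.range (M + 1), F k + 1, ?_, fun k hk v => ?_⟩
  · have : 0 ≤ ∑ k ∈ Finset.range (M + 1), F k :=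
      Finset.sum_nonneg fun k _ => (norm_nonneg _).trans (hF k 0)
    linarith
  · have := Finset.single_le_sum (f := F) (fun i _ => (norm_nonneg _).trans (hF i 0))
      (Finset.mem_range.2 (show k < M + 1 by omega))
    linarith [hF k v]

/-- A smooth piece of `η` near `u`, seen from any nearby point `u'`, is a test function of size
`(1 + |u|)^{-b}`; hence its convolution with `f` is controlled by the grand maximal function at
all of the points `x - m u'`. -/
lemma exists_piece_bound {n : ℕ} (N : ℕ) {b : ℝ} (hb : 0 ≤ b) {χ : Euc n → ℂ}
    (hχ : ContDiff ℝ ∞ χ) (hs : tsupport χ ⊆ Metric.closedBall 0 1) :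
    ∃ C₀ : ℝ, 0 < C₀ ∧ ∀ (A : ℝ), 0 < A → ∀ η : Euc n → ℂ, DecayBound (N + 1) b A η →
      ∀ m : ℝ, 0 < m → ∀ (f : Euc n → ℂ) (x u u' : Euc n), ‖u' - u‖ ≤ 1 →
        ‖∫ y, χ (m⁻¹ • (x - y) - u) * (dil η m (x - y) * f y)‖ₑ ≤
          ENNReal.ofReal (C₀ * A * (1 + ‖u‖) ^ (-b)) * grandMax N f (x - m • u') := by
  obtain ⟨B, hB, hχB⟩ := bump_deriv_bound (N + 1) hχ hs
  refine ⟨3 ^ (N + n + 1) * (2 ^ (N + 1) * 2 ^ b * B), by positivity, ?_⟩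
  intro A hA η hη m hm f x u u' huu
  have hc : HasCompactSupport χ :=
    HasCompactSupport.of_support_subset_isCompact (isCompact_closedBall 0 1)
      ((subset_tsupport _).trans hs)
  set θ₀ : Euc n → ℂ := fun w => η (w + u') * χ (w + (u' - u)) with hθ₀
  have d1 : ContDiff ℝ ∞ fun w : Euc n => η (w + u') :=
    hη.smooth.comp (contDiff_id.add contDiff_const)
  have d2 : ContDiff ℝ ∞ fun w : Euc n => χ (w + (u' - u)) :=
    hχ.comp (contDiff_id.add contDiff_const)
  have hθc : HasCompactSupport θ₀ := by
    have : HasCompactSupport fun w : Euc n => χ (w + (u' - u)) :=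
      hc.comp_homeomorph (Homeomorph.addRight (u' - u))
    exact this.mul_left
  have hθd : ContDiff ℝ ∞ θ₀ := d1.mul d2
  set X : ℝ := (1 + ‖u‖) ^ (-b) with hX
  have hX0 : 0 < X := by positivity
  have hterm : ∀ i ≤ N + 1, ∀ j ≤ N + 1, ∀ w : Euc n,
      (1 + ‖w‖) ^ (N + n + 1) * (‖iteratedFDeriv ℝ i η (w + u')‖ *
        ‖iteratedFDeriv ℝ j χ (w + (u' - u))‖) ≤ 3 ^ (N + n + 1) * (A * (2 ^ b * X) * B) := by
    intro i hi j hj w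
    by_cases hw : w + (u' - u) ∈ tsupport χ
    · have hw1 : ‖w + (u' - u)‖ ≤ 1 := by simpa using hs hw
      have hw2 : 1 + ‖w‖ ≤ 3 := by
        have : ‖w‖ ≤ ‖w + (u' - u)‖ + ‖u' - u‖ := by
          have := norm_sub_le (w + (u' - u)) (u' - u); rwa [add_sub_cancel_right] at this
        linarith
      have hw3 : 1 + ‖u‖ ≤ 2 * (1 + ‖w + u'‖) := by
        have : ‖u‖ ≤ ‖w + u'‖ + ‖w + (u' - u)‖ := by
          have := norm_sub_le (w + u') (w + (u' - u))
          rwa [show w + u' - (w + (u' - u)) = u by abel] at this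
        linarith [norm_nonneg (w + u')]
      have h1 : (1 + ‖w + u'‖) ^ (-b) ≤ 2 ^ b * X := by
        have h2 : (1 + ‖u‖) ^ b ≤ 2 ^ b * (1 + ‖w + u'‖) ^ b := by
          rw [← Real.mul_rpow (by norm_num) (by positivity)]
          exact Real.rpow_le_rpow (by positivity) hw3 hb
        rw [hX, Real.rpow_neg (by positivity), Real.rpow_neg (by positivity), ← div_eq_mul_inv,
          le_div_iff₀ (by positivity), inv_mul_le_iff₀ (by positivity)]
        linarith
      gcongr
      · exact (hη.bound i hi _).trans (by gcongr)
      · exact hχB j hj _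
    · have h0 : iteratedFDeriv ℝ j χ (w + (u' - u)) = 0 := by
        by_contra h
        exact hw (support_iteratedFDeriv_subset j h)
      rw [h0]; simp; positivity
  have hmain : ∀ k ≤ N + 1, ∀ w, (1 + ‖w‖) ^ (N + n + 1) *
      ‖iteratedFDeriv ℝ k (hθc.toSchwartzMap hθd) w‖ ≤
        3 ^ (N + n + 1) * (2 ^ (N + 1) * 2 ^ b * B) * A * X := by
    intro k hk w
    have hcoe : ⇑(hθc.toSchwartzMap hθd) = θ₀ := rfl
    rw [hcoe]
    have hL := norm_iteratedFDeriv_mul_le d1 d2 w (n := k) (by exact_mod_cast le_top)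
    calc (1 + ‖w‖) ^ (N + n + 1) * ‖iteratedFDeriv ℝ k θ₀ w‖
        ≤ (1 + ‖w‖) ^ (N + n + 1) * ∑ i ∈ Finset.range (k + 1), (k.choose i : ℝ) *
            ‖iteratedFDeriv ℝ i (fun w : Euc n => η (w + u')) w‖ *
            ‖iteratedFDeriv ℝ (k - i) (fun w : Euc n => χ (w + (u' - u))) w‖ := by gcongr
      _ = ∑ i ∈ Finset.range (k + 1), (k.choose i : ℝ) * ((1 + ‖w‖) ^ (N + n + 1) *
            (‖iteratedFDeriv ℝ i η (w + u')‖ *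
              ‖iteratedFDeriv ℝ (k - i) χ (w + (u' - u))‖)) := by
          rw [Finset.mul_sum]
          refine Finset.sum_congr rfl fun i _ => ?_
          rw [iteratedFDeriv_comp_add_right, iteratedFDeriv_comp_add_right]
          ring
      _ ≤ ∑ i ∈ Finset.range (k + 1), (k.choose i : ℝ) *
            (3 ^ (N + n + 1) * (A * (2 ^ b * X) * B)) := by
          refine Finset.sum_le_sum fun i hi => ?_
          have := Finset.mem_range.1 hi
          exact mul_le_mul_of_nonneg_left (hterm i (by omega) (k - i) (by omega) w)
            (Nat.cast_nonneg _)
      _ = 2 ^ k * (3 ^ (N + n + 1) * (A * (2 ^ b * X) * B)) := by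
          rw [← Finset.sum_mul, ← Nat.cast_sum, Nat.sum_range_choose]; push_cast; ring
      _ ≤ 2 ^ (N + 1) * (3 ^ (N + n + 1) * (A * (2 ^ b * X) * B)) := by
          gcongr
          norm_num
      _ = _ := by ring
  have hfin := enorm_conv_le_grandMax (hθc.toSchwartzMap hθd) (by positivity) hmain f hm
    (x - m • u')
  refine le_trans (le_of_eq ?_) hfin
  congr 1
  refine integral_congr_ae (.of_forall fun y => ?_)
  have hcoe : ⇑(hθc.toSchwartzMap hθd) = θ₀ := rfl
  have e1 : m⁻¹ • (x - m • u' - y) + u' = m⁻¹ • (x - y) := by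
    rw [show x - m • u' - y = (x - y) - m • u' by abel, smul_sub, smul_smul,
      inv_mul_cancel₀ hm.ne', one_smul, sub_add_cancel]
  have e2 : m⁻¹ • (x - m • u' - y) + (u' - u) = m⁻¹ • (x - y) - u := by
    rw [← add_sub_assoc, e1]
  simp only [dil, hcoe, hθ₀, e1, e2, Complex.real_smul]
  ring

/-- Averaging a localization over all centres recovers the integral. -/
lemma enorm_integral_le_pieces {n : ℕ} {χ : Euc n → ℂ} (hχ : Continuous χ)
    (hs : tsupport χ ⊆ Metric.closedBall 0 1) (h1 : ∫ u, χ u = 1)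
    {F : Euc n → ℂ} (hF : Integrable F) (m : ℝ) (x : Euc n) :
    ‖∫ y, F y‖ₑ ≤ ∫⁻ u, ‖∫ y, χ (m⁻¹ • (x - y) - u) * F y‖ₑ := by
  have hc : HasCompactSupport χ :=
    HasCompactSupport.of_support_subset_isCompact (isCompact_closedBall 0 1)
      ((subset_tsupport _).trans hs)
  have hχi : Integrable χ := hχ.integrable_of_hasCompactSupport hc
  have hprod : Integrable (Function.uncurry fun y u : Euc n => χ (m⁻¹ • (x - y) - u) * F y)
      (volume.prod volume) := by
    have hm : AEStronglyMeasurable (Function.uncurry fun y u : Euc n =>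
        χ (m⁻¹ • (x - y) - u) * F y) (volume.prod volume) := by
      have m1 : AEStronglyMeasurable (fun q : Euc n × Euc n => χ (m⁻¹ • (x - q.1) - q.2))
          (volume.prod volume) :=
        (hχ.comp (by fun_prop)).aestronglyMeasurable
      exact m1.mul hF.aestronglyMeasurable.comp_fst
    rw [integrable_prod_iff hm]
    refine ⟨.of_forall fun y => ?_, ?_⟩
    · exact (hχi.comp_sub_left (m⁻¹ • (x - y))).mul_const (F y)
    · simp only [Function.uncurry_apply_pair, norm_mul, integral_mul_const]
      have : ∀ y, ∫ u, ‖χ (m⁻¹ • (x - y) - u)‖ = ∫ u, ‖χ u‖ := fun y =>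
        integral_sub_left_eq_self (fun u => ‖χ u‖) volume (m⁻¹ • (x - y))
      simp only [this]
      exact hF.norm.const_mul _
  have heq : ∫ y, F y = ∫ u, ∫ y, χ (m⁻¹ • (x - y) - u) * F y := by
    rw [← integral_integral_swap hprod]
    refine integral_congr_ae (.of_forall fun y => ?_)
    simp only
    rw [integral_mul_const, integral_sub_left_eq_self (fun u => χ u) volume, h1, one_mul]
  rw [heq]
  exact enorm_integral_le_lintegral_enorm _

lemma grandMax_lowerSemicontinuous {n : ℕ} (N : ℕ) {a : ℝ} (ha : 0 ≤ a) {f : Euc n → ℂ}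
    (hf : Integrable fun y : Euc n => (1 + ‖y‖) ^ (-a) • f y) :
    LowerSemicontinuous (grandMax N f) := by
  refine lowerSemicontinuous_iSup fun φ => lowerSemicontinuous_iSup fun _ =>
    lowerSemicontinuous_iSup fun t => lowerSemicontinuous_iSup fun ht => ?_
  refine Continuous.lowerSemicontinuous ?_
  have hcont : Continuous fun x => ∫ y, dil φ t (x - y) * f y := by
    obtain ⟨C, hC, hφ⟩ := schwartz_decay φ a
    refine continuous_iff_continuousAt.2 fun x₀ => ?_
    refine continuousAt_of_dominated
      (bound := fun y => (t ^ n)⁻¹ * C * ((1 + (‖x₀‖ + 1)) * (1 + t)) ^ a *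
        ‖(1 + ‖y‖) ^ (-a) • f y‖) ?_ ?_ ?_ ?_
    · refine .of_forall fun x => ?_
      exact ((dil_continuous φ.continuous t).comp
        (continuous_const.sub continuous_id)).aestronglyMeasurable.mul
        (aestronglyMeasurable_of_weight hf)
    · filter_upwards [Metric.ball_mem_nhds x₀ one_pos] with x hx
      refine .of_forall fun y => ?_
      have hxn : ‖x‖ ≤ ‖x₀‖ + 1 := by
        have h1 : ‖x - x₀‖ < 1 := by simpa [dist_eq_norm] using hx
        have h2 := norm_add_le (x - x₀) x₀
        rw [sub_add_cancel] at h2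
        linarith
      rw [norm_mul, norm_smul, Real.norm_eq_abs, abs_of_pos (by positivity), ← mul_assoc]
      gcongr
      refine (dil_decay ha hC hφ ht x y).trans ?_
      gcongr
    · exact hf.norm.const_mul _
    · refine .of_forall fun y => ?_
      exact ((dil_continuous φ.continuous t).comp
        (continuous_id.sub continuous_const)).continuousAt.mul continuousAt_const
  exact ENNReal.continuous_coe.comp hcont.nnnorm

/-! ### The Hardy–Littlewood maximal function -/

/-- The centred Hardy–Littlewood maximal function, over closed balls. -/
def ballMax {n : ℕ} (h : Euc n → ℝ≥0∞) (x : Euc n) : ℝ≥0∞ :=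
  ⨆ (r : ℝ) (_ : 0 < r), (volume (Metric.closedBall x r))⁻¹ * ∫⁻ y in Metric.closedBall x r, h y

lemma volume_closedBall_euc {n : ℕ} (x : Euc n) {r : ℝ} (hr : 0 ≤ r) :
    volume (Metric.closedBall x r) =
      ENNReal.ofReal (r ^ n) * volume (Metric.closedBall (0 : Euc n) 1) := by
  rw [Measure.addHaar_closedBall' volume x hr]
  simp

lemma volume_closedBall_ne_zero {n : ℕ} (x : Euc n) {r : ℝ} (hr : 0 < r) :
    volume (Metric.closedBall x r) ≠ 0 :=
  (Metric.measure_closedBall_pos volume x hr).ne'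

lemma volume_closedBall_ne_top {n : ℕ} (x : Euc n) (r : ℝ) :
    volume (Metric.closedBall x r) ≠ ⊤ := measure_closedBall_lt_top.ne

lemma lintegral_closedBall_le_ballMax {n : ℕ} (h : Euc n → ℝ≥0∞) (x : Euc n) {r : ℝ}
    (hr : 0 < r) :
    ∫⁻ y in Metric.closedBall x r, h y ≤ volume (Metric.closedBall x r) * ballMax h x := by
  rw [← ENNReal.inv_mul_le_iff (volume_closedBall_ne_zero x hr) (volume_closedBall_ne_top x r)]
  exact le_iSup₂_of_le r hr le_rfl

lemma lintegral_comp_sub_smul {n : ℕ} {F : Euc n → ℝ≥0∞} (hF : Measurable F) (x : Euc n)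
    {m : ℝ} (hm : 0 < m) :
    ∫⁻ u, F (x - m • u) = ENNReal.ofReal ((m ^ n)⁻¹) * ∫⁻ y, F y := by
  have hG : Measurable fun v => F (x - v) := hF.comp (measurable_const.sub measurable_id)
  have h1 : ∫⁻ u, F (x - m • u) = ∫⁻ v, F (x - v) ∂(Measure.map (m • ·) volume) :=
    (lintegral_map hG (measurable_const_smul m)).symm
  rw [h1, Measure.map_addHaar_smul volume hm.ne', lintegral_smul_measure,
    lintegral_sub_left_eq_self F x]
  simp [abs_of_pos hm]

lemma lintegral_closedBall_comp_le {n : ℕ} {h : Euc n → ℝ≥0∞} (hh : Measurable h) (x : Euc n)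
    {m s : ℝ} (hm : 0 < m) (hs : 0 < s) :
    ∫⁻ u in Metric.closedBall 0 s, h (x - m • u) ≤
      ENNReal.ofReal (s ^ n) * volume (Metric.closedBall (0 : Euc n) 1) * ballMax h x := by
  have h1 : ∫⁻ u in Metric.closedBall 0 s, h (x - m • u) =
      ∫⁻ u, (Metric.closedBall x (m * s)).indicator h (x - m • u) := by
    rw [← lintegral_indicator Metric.isClosed_closedBall.measurableSet]
    refine lintegral_congr fun u => ?_
    have : u ∈ Metric.closedBall (0 : Euc n) s ↔ x - m • u ∈ Metric.closedBall x (m * s) := by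
      rw [mem_closedBall_zero_iff, mem_closedBall_iff_norm, sub_sub_cancel_left, norm_neg,
        norm_smul, Real.norm_eq_abs, abs_of_pos hm, mul_le_mul_iff_right₀ hm]
    by_cases hu : u ∈ Metric.closedBall (0 : Euc n) s
    · rw [indicator_of_mem hu, indicator_of_mem (this.1 hu)]
    · rw [indicator_of_notMem hu, indicator_of_notMem (mt this.2 hu)]
  rw [h1, lintegral_comp_sub_smul (hh.indicator Metric.isClosed_closedBall.measurableSet) x hm,
    lintegral_indicator Metric.isClosed_closedBall.measurableSet]
  calc ENNReal.ofReal ((m ^ n)⁻¹) * ∫⁻ y in Metric.closedBall x (m * s), h y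
      ≤ ENNReal.ofReal ((m ^ n)⁻¹) * (volume (Metric.closedBall x (m * s)) * ballMax h x) := by
        gcongr
        exact lintegral_closedBall_le_ballMax h x (by positivity)
    _ = _ := by
        rw [volume_closedBall_euc x (by positivity), ← mul_assoc, ← mul_assoc,
          ← ENNReal.ofReal_mul (by positivity), mul_pow, inv_mul_cancel_left₀ (by positivity)]

lemma weight_le_tsum {n : ℕ} {κ : ℝ} (hκ : 0 < κ) (u : Euc n) :
    ENNReal.ofReal ((1 + ‖u‖) ^ (-κ)) ≤ ∑' k : ℕ, ENNReal.ofReal (2 ^ κ * ((2 : ℝ) ^ k) ^ (-κ)) *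
      (Metric.closedBall (0 : Euc n) (2 ^ k)).indicator 1 u := by
  classical
  have hex : ∃ k : ℕ, ‖u‖ ≤ (2 : ℝ) ^ k := by
    obtain ⟨k, hk⟩ := pow_unbounded_of_one_lt ‖u‖ (one_lt_two (α := ℝ))
    exact ⟨k, hk.le⟩
  refine le_trans ?_ (ENNReal.le_tsum (Nat.find hex))
  have hmem : u ∈ Metric.closedBall (0 : Euc n) (2 ^ Nat.find hex) := by
    simpa using Nat.find_spec hex
  rw [indicator_of_mem hmem, Pi.one_apply, mul_one]
  refine ENNReal.ofReal_le_ofReal ?_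
  have hlow : (2 : ℝ) ^ Nat.find hex ≤ 2 * (1 + ‖u‖) := by
    rcases Nat.eq_zero_or_pos (Nat.find hex) with h0 | h0
    · rw [h0]; norm_num; linarith [norm_nonneg u]
    · have := Nat.find_min hex (Nat.sub_lt h0 one_pos)
      rw [not_le] at this
      have h2 : (2 : ℝ) ^ Nat.find hex = 2 * 2 ^ (Nat.find hex - 1) := by
        rw [← pow_succ']; congr 1; omega
      rw [h2]; linarith
  have h3 : ((2 : ℝ) ^ Nat.find hex) ^ κ ≤ 2 ^ κ * (1 + ‖u‖) ^ κ := by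
    rw [← Real.mul_rpow (by norm_num) (by positivity)]
    exact Real.rpow_le_rpow (by positivity) hlow hκ.le
  rw [Real.rpow_neg (by positivity), Real.rpow_neg (by positivity), ← div_eq_mul_inv,
    le_div_iff₀ (by positivity), inv_mul_le_iff₀ (by positivity)]
  linarith

lemma exists_weighted_le_ballMax (n : ℕ) {κ : ℝ} (hκ : (n : ℝ) < κ) :
    ∃ C : ℝ≥0∞, C ≠ ⊤ ∧ ∀ h : Euc n → ℝ≥0∞, Measurable h → ∀ (x : Euc n) (m : ℝ), 0 < m →
      ∫⁻ u, ENNReal.ofReal ((1 + ‖u‖) ^ (-κ)) * h (x - m • u) ≤ C * ballMax h x := by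
  have hκ0 : 0 < κ := lt_of_le_of_lt (Nat.cast_nonneg n) hκ
  set v₁ := volume (Metric.closedBall (0 : Euc n) 1) with hv
  set r : ℝ := 2 ^ ((n : ℝ) - κ) with hr
  have hr1 : r < 1 := Real.rpow_lt_one_of_one_lt_of_neg (by norm_num) (by linarith)
  have hr0 : 0 < r := by positivity
  refine ⟨(∑' k : ℕ, ENNReal.ofReal (2 ^ κ * r ^ k)) * v₁, ?_, ?_⟩
  · refine ENNReal.mul_ne_top ?_ (volume_closedBall_ne_top _ _)
    exact ((summable_geometric_of_lt_one hr0.le hr1).mul_left _).tsum_ofReal_ne_top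
  intro h hh x m hm
  have hcomp : Measurable fun u : Euc n => h (x - m • u) :=
    hh.comp (measurable_const.sub (measurable_const_smul m))
  calc ∫⁻ u, ENNReal.ofReal ((1 + ‖u‖) ^ (-κ)) * h (x - m • u)
      ≤ ∫⁻ u, ∑' k : ℕ, ENNReal.ofReal (2 ^ κ * ((2 : ℝ) ^ k) ^ (-κ)) *
          (Metric.closedBall (0 : Euc n) (2 ^ k)).indicator (fun u => h (x - m • u)) u := by
        refine lintegral_mono fun u => ?_
        refine (mul_le_mul_left (weight_le_tsum hκ0 u) _).trans (le_of_eq ?_)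
        rw [← ENNReal.tsum_mul_right]
        refine tsum_congr fun k => ?_
        rw [mul_assoc]
        congr 1
        simp only [indicator]
        split_ifs <;> simp
    _ = ∑' k : ℕ, ENNReal.ofReal (2 ^ κ * ((2 : ℝ) ^ k) ^ (-κ)) *
          ∫⁻ u in Metric.closedBall (0 : Euc n) (2 ^ k), h (x - m • u) := by
        rw [lintegral_tsum]
        · refine tsum_congr fun k => ?_
          rw [lintegral_const_mul' _ _ ENNReal.ofReal_ne_top,
            lintegral_indicator Metric.isClosed_closedBall.measurableSet]
        · exact fun k => ((hcomp.indicator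
            Metric.isClosed_closedBall.measurableSet).const_mul _).aemeasurable
    _ ≤ ∑' k : ℕ, ENNReal.ofReal (2 ^ κ * r ^ k) * (v₁ * ballMax h x) := by
        refine ENNReal.tsum_le_tsum fun k => ?_
        refine (mul_le_mul_right
          (lintegral_closedBall_comp_le hh x hm (s := 2 ^ k) (by positivity)) _).trans
          (le_of_eq ?_)
        rw [mul_assoc, ← mul_assoc, ← ENNReal.ofReal_mul (by positivity)]
        congr 2
        rw [mul_assoc]
        congr 1
        rw [hr, ← Real.rpow_natCast, ← Real.rpow_natCast, ← Real.rpow_natCast,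
          ← Real.rpow_mul (by norm_num), ← Real.rpow_mul (by norm_num),
          ← Real.rpow_mul (by norm_num), ← Real.rpow_add (by norm_num)]
        congr 1
        ring
    _ = _ := by rw [ENNReal.tsum_mul_right, mul_assoc]

/-- If `j u` is at most `c (1 + |u|)^{-b} g (x - m u')` whenever `|u' - u| ≤ 1`, then averaging in
`u'` bounds `j^{1 - q}`, while `u' = u` bounds `j^q`; the product integrates to a maximal
function of `g ^ q`. -/
lemma exists_lintegral_pieces_le (n : ℕ) {b q : ℝ} (hq0 : 0 < q) (hq1 : q ≤ 1)
    (hbq : (n : ℝ) / q < b) :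
    ∃ C : ℝ≥0∞, C ≠ ⊤ ∧ ∀ g : Euc n → ℝ≥0∞, Measurable g → ∀ (c : ℝ≥0∞) (x : Euc n) (m : ℝ),
      0 < m → ∀ j : Euc n → ℝ≥0∞,
      (∀ u u', ‖u' - u‖ ≤ 1 → j u ≤ c * ENNReal.ofReal ((1 + ‖u‖) ^ (-b)) * g (x - m • u')) →
      ∫⁻ u, j u ≤ c * C * ballMax (fun y => g y ^ q) x ^ (1 / q) := by
  have hκ : (n : ℝ) < b - n / q + n := by linarith
  obtain ⟨C, hC, hCh⟩ := exists_weighted_le_ballMax n hκ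
  refine ⟨C, hC, ?_⟩
  intro g hg c x m hm j hj
  set h : Euc n → ℝ≥0∞ := fun y => g y ^ q with hh
  have hhm : Measurable h := hg.pow_const q
  set M := ballMax h x with hM
  set v₁ := volume (Metric.closedBall (0 : Euc n) 1) with hv
  have hv0 : v₁ ≠ 0 := volume_closedBall_ne_zero _ one_pos
  have hvt : v₁ ≠ ⊤ := volume_closedBall_ne_top _ _
  have hcomp : Measurable fun u : Euc n => h (x - m • u) :=
    hhm.comp (measurable_const.sub (measurable_const_smul m))
  have hpt : ∀ u, j u ≤ c * M ^ ((1 - q) / q) *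
      (ENNReal.ofReal ((1 + ‖u‖) ^ (-(b - n / q + n))) * h (x - m • u)) := by
    intro u
    have hX : (0 : ℝ) < 1 + ‖u‖ := by positivity
    set Y := ENNReal.ofReal (1 + ‖u‖) with hY
    have hY0 : Y ≠ 0 := by simpa [hY] using hX
    have hYt : Y ≠ ⊤ := ENNReal.ofReal_ne_top
    have hjq : ∀ u', ‖u' - u‖ ≤ 1 → j u ^ q ≤ c ^ q * Y ^ (-b * q) * h (x - m • u') := by
      intro u' hu'
      have := ENNReal.rpow_le_rpow (hj u u' hu') hq0.le
      rwa [ENNReal.mul_rpow_of_nonneg _ _ hq0.le, ENNReal.mul_rpow_of_nonneg _ _ hq0.le,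
        ← ENNReal.ofReal_rpow_of_pos hX, ← ENNReal.rpow_mul] at this
    have havg : j u ^ q ≤ c ^ q * Y ^ (n - b * q) * M := by
      have h1 : j u ^ q * v₁ ≤ c ^ q * Y ^ (n - b * q) * M * v₁ := by
        calc j u ^ q * v₁ = ∫⁻ _ in Metric.closedBall u 1, j u ^ q := by
              rw [setLIntegral_const, volume_closedBall_euc u zero_le_one]; simp [hv]
          _ ≤ ∫⁻ u' in Metric.closedBall u 1, c ^ q * Y ^ (-b * q) * h (x - m • u') := by
              refine setLIntegral_mono (hcomp.const_mul _) fun u' hu' => hjq u' ?_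
              exact mem_closedBall_iff_norm.1 hu'
          _ ≤ ∫⁻ u' in Metric.closedBall 0 (1 + ‖u‖),
                c ^ q * Y ^ (-b * q) * h (x - m • u') := by
              refine lintegral_mono_set fun u' hu' => ?_
              rw [mem_closedBall_iff_norm] at hu'
              rw [mem_closedBall_zero_iff]
              have := norm_add_le (u' - u) u
              rw [sub_add_cancel] at this
              linarith
          _ = c ^ q * Y ^ (-b * q) * ∫⁻ u' in Metric.closedBall 0 (1 + ‖u‖), h (x - m • u') :=
              lintegral_const_mul _ hcomp
          _ ≤ c ^ q * Y ^ (-b * q) * (ENNReal.ofReal ((1 + ‖u‖) ^ n) * v₁ * M) := by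
              gcongr
              exact lintegral_closedBall_comp_le hhm x hm hX
          _ = _ := by
              have : ENNReal.ofReal ((1 + ‖u‖) ^ n) = Y ^ (n : ℝ) := by
                rw [← Real.rpow_natCast, ENNReal.ofReal_rpow_of_pos hX]
              rw [this, show (n : ℝ) - b * q = -b * q + n by ring,
                ENNReal.rpow_add _ _ hY0 hYt]
              ring
      exact (ENNReal.mul_le_mul_iff_left hv0 hvt).1 h1
    have h1q : 0 ≤ 1 - q := by linarith
    have hd : 0 ≤ (1 - q) / q := by positivity
    have hj1 : j u ^ (1 - q) ≤ c ^ (1 - q) * Y ^ ((n - b * q) * ((1 - q) / q)) *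
        M ^ ((1 - q) / q) := by
      have := ENNReal.rpow_le_rpow havg hd
      rw [← ENNReal.rpow_mul, ENNReal.mul_rpow_of_nonneg _ _ hd,
        ENNReal.mul_rpow_of_nonneg _ _ hd, ← ENNReal.rpow_mul, ← ENNReal.rpow_mul,
        mul_div_cancel₀ _ hq0.ne'] at this
      exact this
    calc j u = j u ^ (1 - q) * j u ^ q := by
          rw [← ENNReal.rpow_add_of_nonneg _ _ h1q hq0.le]; simp
      _ ≤ (c ^ (1 - q) * Y ^ ((n - b * q) * ((1 - q) / q)) * M ^ ((1 - q) / q)) *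
            (c ^ q * Y ^ (-b * q) * h (x - m • u)) := by
          gcongr
          exact hjq u (by simp)
      _ = (c ^ (1 - q) * c ^ q) * M ^ ((1 - q) / q) *
            ((Y ^ ((n - b * q) * ((1 - q) / q)) * Y ^ (-b * q)) * h (x - m • u)) := by ring
      _ = _ := by
          rw [← ENNReal.rpow_add_of_nonneg _ _ h1q hq0.le, ← ENNReal.rpow_add _ _ hY0 hYt,
            ← ENNReal.ofReal_rpow_of_pos hX]
          have e : (n - b * q) * ((1 - q) / q) + -b * q = -(b - n / q + n) := by
            field_simp; ring
          rw [e, sub_add_cancel, ENNReal.rpow_one]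
  calc ∫⁻ u, j u ≤ ∫⁻ u, c * M ^ ((1 - q) / q) *
      (ENNReal.ofReal ((1 + ‖u‖) ^ (-(b - n / q + n))) * h (x - m • u)) := lintegral_mono hpt
    _ = c * M ^ ((1 - q) / q) *
      ∫⁻ u, (ENNReal.ofReal ((1 + ‖u‖) ^ (-(b - n / q + n))) * h (x - m • u)) := by
        refine lintegral_const_mul _ (Measurable.mul ?_ hcomp)
        exact (Measurable.pow_const (by fun_prop) _).ennreal_ofReal
    _ ≤ c * M ^ ((1 - q) / q) * (C * M) := by
        gcongr
        exact hCh h hhm x m hm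
    _ = c * C * (M ^ ((1 - q) / q) * M ^ (1 : ℝ)) := by rw [ENNReal.rpow_one]; ring
    _ = _ := by
        rw [← ENNReal.rpow_add_of_nonneg _ _ (div_nonneg (by linarith) hq0.le) zero_le_one]
        congr 2
        field_simp; ring

/-! ### Weak-type bounds -/

/-- The weak-type `(1,1)` inequality, by Vitali's covering lemma. -/
lemma mul_volume_ballMax_le {n : ℕ} (hn : 0 < n) (h : Euc n → ℝ≥0∞) {τ : ℝ≥0∞}
    (hτ0 : τ ≠ 0) (hτ : τ ≠ ⊤) :
    τ * volume {x | τ < ballMax h x} ≤ ENNReal.ofReal (5 ^ n) * ∫⁻ y, h y := by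
  by_cases hI : ∫⁻ y, h y = ⊤
  · rw [hI, ENNReal.mul_top (by simp)]; exact le_top
  set S : Set (Euc n) := {x | τ < ballMax h x} with hS
  have hex : ∀ x : Euc n, ∃ r : ℝ, x ∈ S → 0 < r ∧
      τ * volume (Metric.closedBall x r) ≤ ∫⁻ y in Metric.closedBall x r, h y := by
    intro x
    by_cases hx : x ∈ S
    · have hx' : τ < ballMax h x := hx
      rw [ballMax] at hx'
      obtain ⟨r, hr⟩ := lt_iSup_iff.1 hx'
      obtain ⟨hr0, hr⟩ := lt_iSup_iff.1 hr
      refine ⟨r, fun _ => ⟨hr0, ?_⟩⟩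
      have h1 := hr.le
      rwa [mul_comm _ (lintegral _ _), ← div_eq_mul_inv,
        ENNReal.le_div_iff_mul_le (.inl (volume_closedBall_ne_zero x hr0))
          (.inl (volume_closedBall_ne_top x r))] at h1
    · exact ⟨0, fun h => absurd h hx⟩
  choose r hr using hex
  set v₁ := volume (Metric.closedBall (0 : Euc n) 1) with hv
  have hv0 : v₁ ≠ 0 := volume_closedBall_ne_zero _ one_pos
  have hvt : v₁ ≠ ⊤ := volume_closedBall_ne_top _ _
  -- the radii are bounded because the balls have bounded volume
  set V : ℝ≥0∞ := (∫⁻ y, h y) / (τ * v₁) with hV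
  have hVt : V ≠ ⊤ := ENNReal.div_ne_top hI (mul_ne_zero hτ0 hv0)
  have hbd : ∀ x ∈ S, r x ≤ max 1 V.toReal := by
    intro x hx
    obtain ⟨h0, h1⟩ := hr x hx
    rcases le_total (r x) 1 with h2 | h2
    · exact h2.trans (le_max_left _ _)
    refine le_trans ?_ (le_max_right _ _)
    have h3 : ENNReal.ofReal (r x ^ n) ≤ V := by
      rw [hV, ENNReal.le_div_iff_mul_le (.inl (mul_ne_zero hτ0 hv0))
        (.inl (ENNReal.mul_ne_top hτ hvt))]
      calc ENNReal.ofReal (r x ^ n) * (τ * v₁)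
          = τ * volume (Metric.closedBall x (r x)) := by
            rw [volume_closedBall_euc x h0.le]; ring
        _ ≤ ∫⁻ y in Metric.closedBall x (r x), h y := h1
        _ ≤ ∫⁻ y, h y := setLIntegral_le_lintegral _ _
    have h4 := (ENNReal.ofReal_le_iff_le_toReal hVt).1 h3
    exact (le_self_pow₀ h2 hn.ne').trans h4
  obtain ⟨u, huS, hdisj, hcov⟩ := Vitali.exists_disjoint_subfamily_covering_enlargement_closedBall
    S id r _ hbd 5 (by norm_num)
  simp only [id] at hdisj hcov
  have hcount : u.Countable := hdisj.countable_of_nonempty_interior fun x hx => by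
    refine ⟨x, ?_⟩
    exact Metric.ball_subset_interior_closedBall (Metric.mem_ball_self (hr x (huS hx)).1)
  have hsub : S ⊆ ⋃ x ∈ u, Metric.closedBall x (5 * r x) := by
    intro x hx
    obtain ⟨y, hy, hxy⟩ := hcov x hx
    exact mem_biUnion hy (hxy (Metric.mem_closedBall_self (hr x hx).1.le))
  have := hcount.to_subtype
  calc τ * volume S ≤ τ * ∑' x : u, volume (Metric.closedBall (x : Euc n) (5 * r x)) := by
        gcongr
        exact (measure_mono hsub).trans (measure_biUnion_le _ hcount _)
    _ = ∑' x : u, ENNReal.ofReal (5 ^ n) *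
          (τ * volume (Metric.closedBall (x : Euc n) (r x))) := by
        rw [← ENNReal.tsum_mul_left]
        refine tsum_congr fun x => ?_
        have h0 := (hr x (huS x.2)).1
        rw [volume_closedBall_euc _ (by positivity), volume_closedBall_euc _ h0.le, mul_pow,
          ENNReal.ofReal_mul (by positivity)]
        ring
    _ ≤ ∑' x : u, ENNReal.ofReal (5 ^ n) * ∫⁻ y in Metric.closedBall (x : Euc n) (r x), h y :=
        ENNReal.tsum_le_tsum fun x => mul_le_mul_right (hr x (huS x.2)).2 _
    _ = ENNReal.ofReal (5 ^ n) *
          ∫⁻ y in ⋃ x ∈ u, Metric.closedBall (x : Euc n) (r x), h y := by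
        rw [ENNReal.tsum_mul_left, lintegral_biUnion hcount
          (fun x _ => Metric.isClosed_closedBall.measurableSet) hdisj]
    _ ≤ _ := by
        gcongr
        exact Measure.restrict_le_self

lemma large_part_le_tsum {τ a : ℝ≥0∞} (hτ0 : τ ≠ 0) (ha : τ < a) :
    a ≤ ∑' k : ℕ, if 2 ^ k * τ < a then 2 * (2 ^ k * τ) else 0 := by
  classical
  by_cases hex : ∃ k : ℕ, a ≤ 2 ^ k * τ
  · have h0 : Nat.find hex ≠ 0 := by
      intro h
      have := Nat.find_spec hex
      rw [h] at this
      simp at this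
      exact absurd this ha.not_ge
    have hmin := Nat.find_min hex (Nat.sub_lt (Nat.pos_of_ne_zero h0) one_pos)
    refine le_trans ?_ (ENNReal.le_tsum (Nat.find hex - 1))
    rw [if_pos (not_le.1 hmin), ← mul_assoc, ← pow_succ']
    rw [show Nat.find hex - 1 + 1 = Nat.find hex by omega]
    exact Nat.find_spec hex
  · push Not at hex
    have : ∀ k : ℕ, (if 2 ^ k * τ < a then 2 * (2 ^ k * τ) else 0) = 2 * (2 ^ k * τ) :=
      fun k => if_pos (hex k)
    simp only [this]
    calc a ≤ ⊤ := le_top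
      _ = ∑' _ : ℕ, τ := (ENNReal.tsum_const_eq_top_of_ne_zero hτ0).symm
      _ ≤ ∑' k : ℕ, 2 * (2 ^ k * τ) := by
        refine ENNReal.tsum_le_tsum fun k => ?_
        rw [← mul_assoc, ← pow_succ']
        exact le_mul_of_one_le_left zero_le (one_le_pow₀ (by norm_num))

/-- The maximal operator is bounded on weak `L^s`, `s > 1`. -/
lemma exists_weak_ballMax {n : ℕ} (hn : 0 < n) {s : ℝ} (hs : 1 < s) :
    ∃ K : ℝ≥0∞, K ≠ ⊤ ∧ ∀ h : Euc n → ℝ≥0∞, Measurable h → ∀ V : ℝ≥0∞,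
      (∀ τ : ℝ≥0∞, τ ≠ 0 → τ ≠ ⊤ → volume {x | τ < h x} ≤ V * τ ^ (-s)) →
      ∀ τ : ℝ≥0∞, τ ≠ 0 → τ ≠ ⊤ → volume {x | τ < ballMax h x} ≤ K * V * τ ^ (-s) := by
  set ρ : ℝ≥0∞ := (2 : ℝ≥0∞) ^ (1 - s) with hρ
  have hρ1 : ρ < 1 := ENNReal.rpow_lt_one_of_one_lt_of_neg (by norm_num) (by linarith)
  refine ⟨ENNReal.ofReal (5 ^ n) * 2 * (1 - ρ)⁻¹ * 2 ^ s, ?_, ?_⟩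
  · refine ENNReal.mul_ne_top (ENNReal.mul_ne_top (by finiteness) ?_) (by finiteness)
    exact ENNReal.inv_ne_top.2 (tsub_pos_of_lt hρ1).ne'
  intro h hh V hV τ hτ0 hτ
  set c : ℝ≥0∞ := τ / 2 with hc
  have hc0 : c ≠ 0 := by simp [hc, hτ0]
  have hct : c ≠ ⊤ := ENNReal.div_ne_top hτ (by norm_num)
  have hcc : c + c = τ := ENNReal.add_halves τ
  set h₁ : Euc n → ℝ≥0∞ := {x | c < h x}.indicator h with hh₁
  have hle : ∀ x, h x ≤ h₁ x + c := by
    intro x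
    by_cases hx : c < h x
    · have : x ∈ {x | c < h x} := hx
      rw [hh₁, indicator_of_mem this]; exact le_self_add
    · exact (not_lt.1 hx).trans le_add_self
  have hsub : {x | τ < ballMax h x} ⊆ {x | c < ballMax h₁ x} := by
    intro x hx
    have hb : ballMax h x ≤ ballMax h₁ x + c := by
      refine iSup₂_le fun r hr => ?_
      calc (volume (Metric.closedBall x r))⁻¹ * ∫⁻ y in Metric.closedBall x r, h y
          ≤ (volume (Metric.closedBall x r))⁻¹ * ∫⁻ y in Metric.closedBall x r, (h₁ y + c) := by
            gcongr
            exact hle _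
        _ = (volume (Metric.closedBall x r))⁻¹ * (∫⁻ y in Metric.closedBall x r, h₁ y) +
            (volume (Metric.closedBall x r))⁻¹ * (c * volume (Metric.closedBall x r)) := by
            rw [lintegral_add_right _ measurable_const, setLIntegral_const, mul_add]
        _ ≤ ballMax h₁ x + c := by
            gcongr
            · exact le_iSup₂_of_le r hr le_rfl
            · rw [mul_comm c, ← mul_assoc, ENNReal.inv_mul_cancel
                (volume_closedBall_ne_zero x hr) (volume_closedBall_ne_top x r), one_mul]
    have h1 : c + c < ballMax h₁ x + c := by
      rw [hcc]; exact lt_of_lt_of_le hx hb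
    exact lt_of_add_lt_add_right h1
  have hInt : ∫⁻ y, h₁ y ≤ 2 * (1 - ρ)⁻¹ * V * c ^ (1 - s) := by
    calc ∫⁻ y, h₁ y
        ≤ ∫⁻ y, ∑' k : ℕ, {y | 2 ^ k * c < h y}.indicator (fun _ => 2 * (2 ^ k * c)) y := by
          refine lintegral_mono fun y => ?_
          by_cases hy : c < h y
          · have : y ∈ {x | c < h x} := hy
            rw [hh₁, indicator_of_mem this]
            refine (large_part_le_tsum hc0 hy).trans (le_of_eq (tsum_congr fun k => ?_))
            simp only [indicator, mem_ofPred_eq]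
          · have : y ∉ {x | c < h x} := hy
            rw [hh₁, indicator_of_notMem this]; exact zero_le
      _ = ∑' k : ℕ, 2 * (2 ^ k * c) * volume {y | 2 ^ k * c < h y} := by
          rw [lintegral_tsum fun k => (measurable_const.indicator
            (measurableSet_lt measurable_const hh)).aemeasurable]
          refine tsum_congr fun k => ?_
          rw [lintegral_indicator_const (measurableSet_lt measurable_const hh)]
      _ ≤ ∑' k : ℕ, 2 * V * c ^ (1 - s) * ρ ^ k := by
          refine ENNReal.tsum_le_tsum fun k => ?_
          have hk0 : (2 : ℝ≥0∞) ^ k ≠ 0 := by simp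
          have hkt : (2 : ℝ≥0∞) ^ k ≠ ⊤ := by finiteness
          refine (mul_le_mul_right (hV (2 ^ k * c) (mul_ne_zero hk0 hc0)
            (ENNReal.mul_ne_top hkt hct)) _).trans (le_of_eq ?_)
          have e1 : ρ ^ k = 2 ^ k * ((2 : ℝ≥0∞) ^ k) ^ (-s) := by
            rw [hρ, ← ENNReal.rpow_natCast, ← ENNReal.rpow_natCast, ← ENNReal.rpow_mul,
              ← ENNReal.rpow_mul, ← ENNReal.rpow_add _ _ (by norm_num) (by norm_num)]
            congr 1; ring
          have e2 : c ^ (1 - s) = c * c ^ (-s) := by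
            rw [sub_eq_add_neg, ENNReal.rpow_add _ _ hc0 hct, ENNReal.rpow_one]
          rw [ENNReal.mul_rpow_of_ne_top hkt hct, e1, e2]
          ring
      _ = _ := by
          rw [ENNReal.tsum_mul_left, ENNReal.tsum_geometric]; ring
  have hw := mul_volume_ballMax_le hn h₁ hc0 hct
  have hkey : c * volume {x | τ < ballMax h x} ≤
      c * (ENNReal.ofReal (5 ^ n) * 2 * (1 - ρ)⁻¹ * 2 ^ s * V * τ ^ (-s)) := by
    calc c * volume {x | τ < ballMax h x} ≤ c * volume {x | c < ballMax h₁ x} := by gcongr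
      _ ≤ ENNReal.ofReal (5 ^ n) * ∫⁻ y, h₁ y := hw
      _ ≤ ENNReal.ofReal (5 ^ n) * (2 * (1 - ρ)⁻¹ * V * c ^ (1 - s)) := by gcongr
      _ = _ := by
        have e2 : c ^ (1 - s) = c * c ^ (-s) := by
          rw [sub_eq_add_neg, ENNReal.rpow_add _ _ hc0 hct, ENNReal.rpow_one]
        have e3 : c ^ (-s) = 2 ^ s * τ ^ (-s) := by
          rw [hc, div_eq_mul_inv, ENNReal.mul_rpow_of_ne_top hτ (by norm_num),
            ← ENNReal.rpow_neg_one, ← ENNReal.rpow_mul, mul_comm]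
          congr 2; ring
        rw [e2, e3]; ring
  exact (ENNReal.mul_le_mul_iff_right hc0 hct).1 hkey

/-! ### The pointwise and weak-type estimates for the unit scale -/

/-- The pointwise estimate: the grand maximal function of `T^δ_1 f` is controlled by an `L^q`
maximal function of the grand maximal function of `f`. -/
lemma exists_grandMax_brOp_le {n : ℕ} (hn : 0 < n) (N : ℕ) {δ b q : ℝ} (hδ : 0 < δ)
    (hb : (n : ℝ) < b) (hbN : b ≤ (N + n + 1 : ℕ)) (hba : b ≤ brExp n δ)
    (hq0 : 0 < q) (hq1 : q ≤ 1) (hbq : (n : ℝ) / q < b) :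
    ∃ C : ℝ≥0∞, C ≠ ⊤ ∧ ∀ f : Euc n → ℂ,
      (Integrable fun y : Euc n => (1 + ‖y‖) ^ (-brExp n δ) • f y) → ∀ x,
      grandMax N (brOp n δ 1 f) x ≤ C * ballMax (fun y => grandMax N f y ^ q) x ^ (1 / q) := by
  have hb0 : 0 ≤ b := (Nat.cast_nonneg n).trans hb.le
  obtain ⟨A, hA, hsm⟩ := exists_smoothed_kernel hn N hδ hb hbN hba
  obtain ⟨χ, hχ, hχs, hχ1⟩ := exists_bump n
  obtain ⟨C₀, hC₀, hpiece⟩ := exists_piece_bound N hb0 hχ hχs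
  obtain ⟨C, hC, hlint⟩ := exists_lintegral_pieces_le n hq0 hq1 hbq
  refine ⟨ENNReal.ofReal (C₀ * (A + 1)) * C, ENNReal.mul_ne_top ENNReal.ofReal_ne_top hC, ?_⟩
  intro f hf x
  have hgm : Measurable (grandMax N f) :=
    (grandMax_lowerSemicontinuous N (brExp_pos n hδ).le hf).measurable
  refine iSup₂_le fun ψ hψ => iSup₂_le fun t ht => ?_
  obtain ⟨m, hm, η, hη, heq⟩ := hsm ψ hψ t ht
  obtain ⟨hInt, hconv⟩ := conv_brOp hδ hf ψ ht x
  have hη' : DecayBound (N + 1) b (A + 1) η :=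
    ⟨hη.smooth, fun k hk y => (hη.bound k hk y).trans (by gcongr; linarith)⟩
  simp only [heq] at hInt hconv
  rw [hconv]
  refine (enorm_integral_le_pieces hχ.continuous hχs hχ1 hInt m x).trans ?_
  refine hlint (grandMax N f) hgm _ x m hm _ fun u u' huu => ?_
  refine (hpiece (A + 1) (by linarith) η hη' m hm f x u u' huu).trans (le_of_eq ?_)
  rw [ENNReal.ofReal_mul (by positivity)]

lemma exists_weakNorm_le_of_ballMax {n : ℕ} (hn : 0 < n) {p q : ℝ} (hq0 : 0 < q) (hqp : q < p) :
    ∃ K : ℝ≥0∞, K ≠ ⊤ ∧ ∀ g : Euc n → ℝ≥0∞, Measurable g → ∀ (C : ℝ≥0∞), C ≠ 0 → C ≠ ⊤ →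
      ∀ G : Euc n → ℝ≥0∞, (∀ x, G x ≤ C * ballMax (fun y => g y ^ q) x ^ (1 / q)) →
      weakNorm volume p G ≤ C * K * weakNorm volume p g := by
  have hp0 : 0 < p := hq0.trans hqp
  obtain ⟨K, hK, hKw⟩ := exists_weak_ballMax hn (s := p / q) ((one_lt_div hq0).2 hqp)
  refine ⟨K ^ (1 / p), ENNReal.rpow_ne_top_of_nonneg (by positivity) hK, ?_⟩
  intro g hg C hC0 hC G hG
  set W := weakNorm volume p g with hW
  have hV : ∀ τ : ℝ≥0∞, τ ≠ 0 → τ ≠ ⊤ →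
      volume {x | τ < g x ^ q} ≤ W ^ p * τ ^ (-(p / q)) := by
    intro τ hτ0 hτ
    have hσ : τ ^ q⁻¹ ≠ ⊤ := ENNReal.rpow_ne_top_of_nonneg (by positivity) hτ
    have hσ0 : τ ^ q⁻¹ ≠ 0 := by
      rw [Ne, ENNReal.rpow_eq_zero_iff]; simp [hτ0, hτ]
    lift τ ^ q⁻¹ to ℝ≥0 using hσ with σ hσe
    have hσpos : 0 < σ := pos_iff_ne_zero.2 (by exact_mod_cast hσ0)
    have hset : {x | τ < g x ^ q} = {x | (σ : ℝ≥0∞) < g x} := by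
      ext x
      change τ < g x ^ q ↔ (σ : ℝ≥0∞) < g x
      rw [hσe, ENNReal.rpow_inv_lt_iff hq0]
    have h1 : (σ : ℝ≥0∞) * volume {x | (σ : ℝ≥0∞) < g x} ^ (1 / p) ≤ W :=
      le_iSup₂_of_le (f := fun (lam : ℝ≥0) (_ : 0 < lam) =>
        (lam : ℝ≥0∞) * volume {x | (lam : ℝ≥0∞) < g x} ^ (1 / p)) σ hσpos le_rfl
    have h2 : volume {x | (σ : ℝ≥0∞) < g x} ^ (1 / p) ≤ W * (σ : ℝ≥0∞)⁻¹ := by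
      rw [← div_eq_mul_inv, ENNReal.le_div_iff_mul_le (.inl hσ0) (.inl ENNReal.coe_ne_top),
        mul_comm]
      exact h1
    rw [one_div, ENNReal.rpow_inv_le_iff hp0, ENNReal.mul_rpow_of_nonneg _ _ hp0.le] at h2
    rw [hset]
    refine h2.trans (le_of_eq ?_)
    rw [hσe, ← ENNReal.rpow_neg_one, ← ENNReal.rpow_mul, ← ENNReal.rpow_mul]
    congr 2
    field_simp
  have hM := hKw (fun y => g y ^ q) (hg.pow_const q) (W ^ p) hV
  refine iSup₂_le fun lam hlam => ?_
  have hl0 : (lam : ℝ≥0∞) ≠ 0 := by exact_mod_cast hlam.ne'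
  set σ : ℝ≥0∞ := lam / C with hσ
  have hσ0 : σ ≠ 0 := by simp [hσ, hl0, hC]
  have hσt : σ ≠ ⊤ := ENNReal.div_ne_top ENNReal.coe_ne_top hC0
  have hsub : {x | (lam : ℝ≥0∞) < G x} ⊆ {x | σ ^ q < ballMax (fun y => g y ^ q) x} := by
    intro x hx
    have h1 : (lam : ℝ≥0∞) < C * ballMax (fun y => g y ^ q) x ^ (1 / q) :=
      lt_of_lt_of_le hx (hG x)
    have h2 : σ < ballMax (fun y => g y ^ q) x ^ q⁻¹ := by
      rw [← one_div, hσ]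
      exact ENNReal.div_lt_of_lt_mul' h1
    exact (ENNReal.lt_rpow_inv_iff hq0).1 h2
  have h3 := (measure_mono hsub).trans (hM (σ ^ q)
    (by rw [Ne, ENNReal.rpow_eq_zero_iff]; simp [hσ0, hσt])
    (ENNReal.rpow_ne_top_of_nonneg hq0.le hσt))
  calc (lam : ℝ≥0∞) * volume {x | (lam : ℝ≥0∞) < G x} ^ (1 / p)
      ≤ lam * (K * W ^ p * (σ ^ q) ^ (-(p / q))) ^ (1 / p) := by gcongr
    _ = lam * (K ^ (1 / p) * W * σ⁻¹) := by
        rw [ENNReal.mul_rpow_of_nonneg _ _ (by positivity),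
          ENNReal.mul_rpow_of_nonneg _ _ (by positivity), ← ENNReal.rpow_mul,
          ← ENNReal.rpow_mul, ← ENNReal.rpow_mul, mul_one_div_cancel hp0.ne', ENNReal.rpow_one]
        rw [show q * (-(p / q) * (1 / p)) = -1 by field_simp, ENNReal.rpow_neg_one]
    _ = (lam * σ⁻¹) * K ^ (1 / p) * W := by ring
    _ = C * K ^ (1 / p) * W := by
        rw [hσ, ENNReal.inv_div (.inl hC) (.inl hC0), ENNReal.mul_div_cancel hl0 ENNReal.coe_ne_top]

lemma weakNorm_grandMax_of_ae_zero {n N : ℕ} {p : ℝ} (hp : 0 < p) {H : Euc n → ℂ}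
    (hH : ∀ᵐ x, H x = 0) : whNorm N volume p H = 0 := by
  have hg : ∀ x, grandMax N H x = 0 := by
    intro x
    refine le_antisymm (iSup₂_le fun φ _ => iSup₂_le fun t _ => ?_) zero_le
    rw [integral_eq_zero_of_ae]
    · simp
    · filter_upwards [hH] with y hy
      simp [hy]
  refine le_antisymm (iSup₂_le fun lam _ => ?_) zero_le
  simp [hg, hp]

/-- The bound at the unit scale `R = 1`. The exponents `n/b < q < p`, with `b` the smaller of the
decay rates of the kernel and of the test functions, exist because both rates exceed `n/p`. -/
lemma exists_whNorm_brOp_one_le {n : ℕ} (hn : 0 < n) {N : ℕ} {p δ : ℝ} (hp0 : 0 < p)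
    (hp1 : p ≤ 1) (hδ : 0 < δ) (ha : (n : ℝ) / p < brExp n δ)
    (hN : (n : ℝ) / p < (N + n + 1 : ℕ)) :
    ∃ C : ℝ≥0, 0 < C ∧ ∀ f : Euc n → ℂ,
      whNorm N volume p (brOp n δ 1 f) ≤ C * whNorm N volume p f := by
  have hn' : (0 : ℝ) < n := by exact_mod_cast hn
  set b := min (brExp n δ) ((N + n + 1 : ℕ) : ℝ) with hb
  have hpb : (n : ℝ) / p < b := lt_min ha hN
  have hnb : (n : ℝ) < b := lt_of_le_of_lt (by rw [le_div_iff₀ hp0]; nlinarith) hpb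
  have hb0 : 0 < b := hn'.trans hnb
  have hnbp : n / b < p := by rw [div_lt_iff₀ hb0]; rw [div_lt_iff₀ hp0] at hpb; linarith
  obtain ⟨q, hq1, hq2⟩ := exists_between hnbp
  have hq0 : 0 < q := lt_trans (by positivity) hq1
  have hbq : (n : ℝ) / q < b := by rw [div_lt_iff₀ hq0]; rw [div_lt_iff₀ hb0] at hq1; linarith
  obtain ⟨C, hC, hpt⟩ := exists_grandMax_brOp_le hn N hδ hnb (min_le_right _ _) (min_le_left _ _)
    hq0 (hq2.le.trans hp1) hbq
  obtain ⟨K, hK, hw⟩ := exists_weakNorm_le_of_ballMax hn hq0 hq2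
  have hCK : (C + 1) * K ≠ ⊤ := ENNReal.mul_ne_top (by finiteness) hK
  refine ⟨((C + 1) * K).toNNReal + 1, by positivity, fun f => ?_⟩
  rcases integrable_dichotomy hn hδ f with hbad | hgood
  · have : ∀ᵐ x, brOp n δ 1 f x = 0 := by
      filter_upwards [hbad] with x hx
      have : brOp n δ 1 f x = ∫ y, brKernel n δ (x - y) * f y := by simp [brOp, dil]
      rw [this, integral_undef hx]
    rw [weakNorm_grandMax_of_ae_zero hp0 this]
    exact zero_le
  · have hgm : Measurable (grandMax N f) :=
      (grandMax_lowerSemicontinuous N (brExp_pos n hδ).le hgood).measurable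
    refine (hw (grandMax N f) hgm (C + 1) (by simp) (by finiteness) _ fun x =>
      (hpt f hgood x).trans (by gcongr; exact le_self_add)).trans ?_
    rw [whNorm]
    gcongr
    push_cast
    rw [ENNReal.coe_toNNReal hCK]
    exact le_self_add

/-! ### Reduction to the unit scale -/

lemma integral_dil_comp_smul {n : ℕ} (φ f : Euc n → ℂ) {c : ℝ} (hc : 0 < c) (t : ℝ) (x : Euc n) :
    ∫ y, dil φ t (x - y) * f (c • y) = ∫ y, dil φ (c * t) (c • x - y) * f y := by
  have hsc := Measure.integral_comp_smul volume
    (fun z : Euc n => dil φ t (x - c⁻¹ • z) * f z) c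
  rw [abs_of_pos (by positivity)] at hsc
  simp only [smul_smul, inv_mul_cancel₀ hc.ne', one_smul] at hsc
  rw [hsc, ← integral_smul]
  refine integral_congr_ae (.of_forall fun z => ?_)
  have e : (c * t)⁻¹ • (c • x - z) = t⁻¹ • (x - c⁻¹ • z) := by
    rw [mul_inv_rev, mul_smul, smul_sub c⁻¹, smul_smul c⁻¹ c, inv_mul_cancel₀ hc.ne', one_smul]
  simp only [dil, e]
  simp only [finrank_euclideanSpace, Fintype.card_fin, mul_pow, mul_inv, Complex.real_smul]
  push_cast
  ring

lemma grandMax_comp_smul_le {n N : ℕ} (f : Euc n → ℂ) {c : ℝ} (hc : 0 < c) (x : Euc n) :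
    grandMax N (fun y => f (c • y)) x ≤ grandMax N f (c • x) := by
  refine iSup₂_le fun φ hφ => iSup₂_le fun t ht => ?_
  rw [integral_dil_comp_smul φ f hc]
  exact le_iSup₂_of_le φ hφ (le_iSup₂_of_le (c * t) (by positivity) le_rfl)

lemma grandMax_comp_smul {n N : ℕ} (f : Euc n → ℂ) {c : ℝ} (hc : 0 < c) (x : Euc n) :
    grandMax N (fun y => f (c • y)) x = grandMax N f (c • x) := by
  refine le_antisymm (grandMax_comp_smul_le f hc x) ?_
  have := grandMax_comp_smul_le (N := N) (fun y => f (c • y)) (inv_pos.2 hc) (c • x)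
  simpa [smul_smul, hc.ne'] using this

lemma whNorm_comp_smul {n N : ℕ} {p : ℝ} (hp : 0 < p) (f : Euc n → ℂ) {c : ℝ} (hc : 0 < c) :
    whNorm N volume p (fun y => f (c • y)) =
      ENNReal.ofReal ((c ^ n)⁻¹) ^ (1 / p) * whNorm N volume p f := by
  rw [whNorm, whNorm, weakNorm, weakNorm]
  simp only [ENNReal.mul_iSup]
  refine iSup_congr fun lam => iSup_congr fun _ => ?_
  have hset : {x | (lam : ℝ≥0∞) < grandMax N (fun y => f (c • y)) x} =
      (c • ·) ⁻¹' {x | (lam : ℝ≥0∞) < grandMax N f x} := by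
    ext x
    change (lam : ℝ≥0∞) < _ ↔ (lam : ℝ≥0∞) < grandMax N f (c • x)
    rw [grandMax_comp_smul f hc]
  rw [hset, Measure.addHaar_preimage_smul volume hc.ne', finrank_euclideanSpace, Fintype.card_fin,
    abs_of_pos (by positivity), ENNReal.mul_rpow_of_nonneg _ _ (by positivity)]
  ring

lemma brOp_eq_comp_smul {n : ℕ} {δ R : ℝ} (hR : 0 < R) (F : Euc n → ℂ) :
    brOp n δ R (fun y => F (R • y)) = fun x => brOp n δ 1 F (R • x) := by
  funext x
  rw [brOp, brOp, integral_dil_comp_smul _ F hR, mul_inv_cancel₀ hR.ne', inv_one]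

lemma brOp_dim_zero {δ R : ℝ} (f : Euc 0 → ℂ) : brOp 0 δ R f = f := by
  have hK : ∀ x, brKernel 0 δ x = 1 := by
    intro x
    rw [brKernel, Real.fourierInv_eq, volume_euclideanSpace_eq_dirac, integral_dirac]
    simp
  funext x
  rw [brOp, volume_euclideanSpace_eq_dirac, integral_dirac, Subsingleton.elim x 0]
  simp [dil, hK]

end

/-- Let `0 < p ≤ 1` and `δ > n/p - (n+1)/2`, and suppose that
`δ - (n-1)/2` is not a positive integer. Then there is a constant `C > 0`, independent of
`f` and `R`, such that for every `0 < R < ∞` and every `f ∈ WH^p(ℝⁿ)` one has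
`‖T^δ_R f‖_{WH^p} ≤ C ‖f‖_{WH^p}`. -/
theorem bochnerRiesz_weakHardy_bounded (n : ℕ) (p δ : ℝ)
    (hp0 : 0 < p) (hp1 : p ≤ 1)
    (hδ : (n : ℝ) / p - ((n : ℝ) + 1) / 2 < δ)
    (hδ' : ¬∃ m : ℕ, 0 < m ∧ δ - ((n : ℝ) - 1) / 2 = (m : ℝ)) :
    ∃ C : ℝ≥0, 0 < C ∧ ∀ (R : ℝ), 0 < R → ∀ f : Euc n → ℂ,
      whNorm (⌊(n : ℝ) * (1 / p - 1)⌋.toNat) volume p f ≠ ⊤ →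
      whNorm (⌊(n : ℝ) * (1 / p - 1)⌋.toNat) volume p (brOp n δ R f) ≤
        (C : ℝ≥0∞) * whNorm (⌊(n : ℝ) * (1 / p - 1)⌋.toNat) volume p f := by
  set N := ⌊(n : ℝ) * (1 / p - 1)⌋.toNat with hNdef
  rcases Nat.eq_zero_or_pos n with rfl | hn
  · refine ⟨1, one_pos, fun R _ f _ => ?_⟩
    rw [brOp_dim_zero]; simp
  have hn' : (1 : ℝ) ≤ n := by exact_mod_cast hn
  have hnp : (n : ℝ) ≤ n / p := by rw [le_div_iff₀ hp0]; nlinarith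
  have hδ0 : 0 < δ := by linarith
  have ha : (n : ℝ) / p < brExp n δ := by rw [brExp]; linarith
  have hN : (n : ℝ) / p < (N + n + 1 : ℕ) := by
    have h1 := Int.lt_floor_add_one ((n : ℝ) * (1 / p - 1))
    have h2 : ((⌊(n : ℝ) * (1 / p - 1)⌋ : ℤ) : ℝ) ≤ (N : ℝ) := by
      exact_mod_cast Int.self_le_toNat _
    have h3 : (n : ℝ) * (1 / p - 1) = n / p - n := by ring
    push_cast
    linarith
  obtain ⟨C, hC, hbound⟩ := exists_whNorm_brOp_one_le hn hp0 hp1 hδ0 ha hN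
  refine ⟨C, hC, fun R hR f _ => ?_⟩
  -- write `f` as a dilate of `F`; both sides scale by the same power of `R`
  set F : Euc n → ℂ := fun y => f (R⁻¹ • y) with hF
  have hfF : f = fun y => F (R • y) := by
    funext y; simp [hF, smul_smul, hR.ne']
  rw [hfF, brOp_eq_comp_smul hR, whNorm_comp_smul hp0 _ hR, whNorm_comp_smul hp0 _ hR,
    mul_left_comm]
  gcongr
  exact hbound F
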